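/- For every ε > 0 and every δ > 0 there exist C > 0 and x₀ such that for all x > x₀ and all N satisfying exp( (log₃ x · log₄ x)/(δ·log₅ x) ) ≤ N ≤ exp( (log₂ x · log₃ x)/(3·log₄ x) ), the probability, over a prime p chosen uniformly from (x, 2x], that there exists a real y ≥ N with ∑_{n ≤ y} χ_p(n)/n ≤ 0, is at most C·exp( −exp( (log N · log₃ N)/((1 + ε)·log₂ N) ) ). -/

import Mathlib

open Finset
open scoped Classical

/-- The finite set of primes `p` with `x < p ≤ 2x`. -/
noncomputable def primesIn (x : ℝ) : Finset ℕ :=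
  (Finset.range (⌊2 * x⌋₊ + 1)).filter fun p => p.Prime ∧ x < (p : ℝ) ∧ (p : ℝ) ≤ 2 * x


/-- random completely multiplicative sign function -/
noncomputable def rs (A : Finset ℕ) (n : ℕ) : ℝ := ∏ q ∈ A, (-1 : ℝ) ^ (n.factorization q)

/-- average over all subsets of `P` -/
noncomputable def Ex (P : Finset ℕ) (g : Finset ℕ → ℝ) : ℝ :=
  (∑ A ∈ P.powerset, g A) / 2 ^ P.card

lemma Ex_mono {P : Finset ℕ} {g h : Finset ℕ → ℝ} (H : ∀ A ∈ P.powerset, g A ≤ h A) :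
    Ex P g ≤ Ex P h := by
  unfold Ex
  gcongr with A hA
  exact H A hA

lemma Ex_add (P : Finset ℕ) (g h : Finset ℕ → ℝ) :
    Ex P (fun A => g A + h A) = Ex P g + Ex P h := by
  unfold Ex; rw [Finset.sum_add_distrib, add_div]

lemma Ex_const_mul (P : Finset ℕ) (c : ℝ) (g : Finset ℕ → ℝ) :
    Ex P (fun A => c * g A) = c * Ex P g := by
  unfold Ex; rw [← Finset.mul_sum, mul_div_assoc]

lemma Ex_const (P : Finset ℕ) (c : ℝ) : Ex P (fun _ => c) = c := by
  unfold Ex; simp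

lemma Ex_sum {ι : Type*} (P : Finset ℕ) (s : Finset ι) (g : ι → Finset ℕ → ℝ) :
    Ex P (fun A => ∑ i ∈ s, g i A) = ∑ i ∈ s, Ex P (g i) := by
  unfold Ex; rw [Finset.sum_comm, Finset.sum_div]

lemma Ex_nonneg {P : Finset ℕ} {g : Finset ℕ → ℝ} (H : ∀ A ∈ P.powerset, 0 ≤ g A) :
    0 ≤ Ex P g := by
  have := Ex_mono H
  rwa [Ex_const] at this

lemma rs_mul (A : Finset ℕ) {m n : ℕ} (hm : m ≠ 0) (hn : n ≠ 0) :
    rs A (m * n) = rs A m * rs A n := by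
  unfold rs
  rw [← Finset.prod_mul_distrib]
  refine Finset.prod_congr rfl fun q _ => ?_
  rw [Nat.factorization_mul hm hn, Finsupp.add_apply, pow_add]

lemma rs_one (A : Finset ℕ) : rs A 1 = 1 := by simp [rs]

lemma rs_mul_self (A : Finset ℕ) (n : ℕ) : rs A n * rs A n = 1 := by
  unfold rs
  rw [← Finset.prod_mul_distrib]
  refine Finset.prod_eq_one fun q _ => ?_
  rw [← pow_add, ← two_mul, pow_mul]; simp

lemma rs_square (A : Finset ℕ) {n : ℕ} (h : IsSquare n) : rs A n = 1 := by
  obtain ⟨m, rfl⟩ := h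
  rcases eq_or_ne m 0 with rfl | hm
  · simp [rs]
  · rw [rs_mul A hm hm, rs_mul_self]

lemma rs_abs (A : Finset ℕ) (n : ℕ) : |rs A n| = 1 := by
  have h := rs_mul_self A n
  have : |rs A n| * |rs A n| = 1 := by rw [← abs_mul, h, abs_one]
  nlinarith [abs_nonneg (rs A n)]

lemma rs_prod (A : Finset ℕ) {ι : Type*} (s : Finset ι) (v : ι → ℕ) (hv : ∀ i ∈ s, v i ≠ 0) :
    ∏ i ∈ s, rs A (v i) = rs A (∏ i ∈ s, v i) := by
  induction s using Finset.induction with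
  | empty => simp [rs]
  | insert a s ha ih =>
    rw [Finset.prod_insert ha, Finset.prod_insert ha, ih (fun i hi => hv i (by simp [hi])),
      rs_mul A (hv a (by simp))]
    exact Finset.prod_ne_zero_iff.2 fun i hi => hv i (by simp [hi])

lemma Ex_prod (P : Finset ℕ) (f g : ℕ → ℝ) :
    Ex P (fun A => ∏ q ∈ P, if q ∈ A then f q else g q) = ∏ q ∈ P, ((f q + g q) / 2) := by
  unfold Ex
  rw [Finset.prod_div_distrib, Finset.prod_const, Finset.prod_add]
  congr 1
  refine Finset.sum_congr rfl fun A hA => ?_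
  dsimp only
  rw [Finset.prod_ite, Finset.filter_mem_eq_inter, Finset.inter_eq_right.2 (Finset.mem_powerset.1 hA),
    ← Finset.sdiff_eq_filter]

lemma rs_eq_prod {P A : Finset ℕ} (hA : A ⊆ P) (n : ℕ) :
    rs A n = ∏ q ∈ P, if q ∈ A then (-1 : ℝ) ^ (n.factorization q) else 1 := by
  rw [Finset.prod_ite, Finset.filter_mem_eq_inter, Finset.inter_eq_right.2 hA]
  simp [rs]

lemma Ex_rs_nonneg (P : Finset ℕ) (n : ℕ) : 0 ≤ Ex P (fun A => rs A n) := by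
  have : Ex P (fun A => rs A n) =
      Ex P (fun A => ∏ q ∈ P, if q ∈ A then (-1 : ℝ) ^ (n.factorization q) else 1) := by
    unfold Ex
    congr 1
    exact Finset.sum_congr rfl fun A hA => rs_eq_prod (Finset.mem_powerset.1 hA) n
  rw [this, Ex_prod]
  refine Finset.prod_nonneg fun q _ => ?_
  rcases neg_one_pow_eq_or ℝ (n.factorization q) with h | h <;> rw [h] <;> norm_num

lemma Ex_expand (P J : Finset ℕ) (c : ℕ → ℝ) (h0 : 0 ∉ J) (m : ℕ) :
    Ex P (fun A => (∑ n ∈ J, c n * rs A n) ^ m) =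
      ∑ v ∈ Fintype.piFinset (fun _ : Fin m => J), (∏ i, c (v i)) *
        Ex P (fun A => rs A (∏ i, v i)) := by
  simp_rw [Finset.sum_pow', Ex_sum]
  refine Finset.sum_congr rfl fun v hv => ?_
  rw [← Ex_const_mul]
  congr 1
  funext A
  rw [Finset.prod_mul_distrib, rs_prod]
  intro i _ hi
  have := Fintype.mem_piFinset.1 hv i
  rw [hi] at this
  exact h0 this

lemma Ex_pow_mono (P J : Finset ℕ) (c d : ℕ → ℝ) (h0 : 0 ∉ J) (m : ℕ)
    (hc : ∀ n ∈ J, 0 ≤ c n) (hcd : ∀ n ∈ J, c n ≤ d n) :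
    Ex P (fun A => (∑ n ∈ J, c n * rs A n) ^ m) ≤
      Ex P (fun A => (∑ n ∈ J, d n * rs A n) ^ m) := by
  rw [Ex_expand _ _ _ h0, Ex_expand _ _ _ h0]
  refine Finset.sum_le_sum fun v hv => ?_
  refine mul_le_mul_of_nonneg_right ?_ (Ex_rs_nonneg _ _)
  exact Finset.prod_le_prod (fun i _ => hc _ (Fintype.mem_piFinset.1 hv i))
    (fun i _ => hcd _ (Fintype.mem_piFinset.1 hv i))

lemma Ex_pow_mono_subset (P J J' : Finset ℕ) (c d : ℕ → ℝ) (h0 : 0 ∉ J') (m : ℕ) (hJ : J ⊆ J')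
    (hc : ∀ n ∈ J, 0 ≤ c n) (hcd : ∀ n ∈ J, c n ≤ d n) (hd : ∀ n ∈ J', 0 ≤ d n) :
    Ex P (fun A => (∑ n ∈ J, c n * rs A n) ^ m) ≤
      Ex P (fun A => (∑ n ∈ J', d n * rs A n) ^ m) := by
  have : ∀ A, ∑ n ∈ J, c n * rs A n = ∑ n ∈ J', (if n ∈ J then c n else 0) * rs A n := by
    intro A
    simp_rw [ite_mul, zero_mul]
    rw [← Finset.sum_filter, Finset.filter_mem_eq_inter, Finset.inter_eq_right.2 hJ]
  simp_rw [this]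
  refine Ex_pow_mono _ _ _ _ h0 _ ?_ ?_
  · intro n hn; split_ifs with h
    · exact hc n h
    · exact le_rfl
  · intro n hn; split_ifs with h
    · exact hcd n h
    · exact hd n hn

/-- random Euler product -/
noncomputable def EF (P : Finset ℕ) (σ : ℝ) (A : Finset ℕ) : ℝ :=
  ∏ q ∈ P, if q ∈ A then (1 + (q : ℝ) ^ (-σ))⁻¹ else (1 - (q : ℝ) ^ (-σ))⁻¹

/-- twisted monoid hom -/
noncomputable def rsHom (A : Finset ℕ) (σ : ℝ) (hσ : 0 < σ) : ℕ →* ℝ where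
  toFun n := (n : ℝ) ^ (-σ) * rs A n
  map_one' := by simp [rs_one]
  map_mul' m n := by
    have h0 : (0 : ℝ) ^ (-σ) = 0 := Real.zero_rpow (by linarith)
    rcases eq_or_ne m 0 with rfl | hm
    · simp [h0]
    rcases eq_or_ne n 0 with rfl | hn
    · simp [h0]
    rw [rs_mul A hm hn]
    push_cast
    rw [Real.mul_rpow (by positivity) (by positivity)]
    ring

lemma rs_prime {A : Finset ℕ} {q : ℕ} (hq : q.Prime) :
    rs A q = if q ∈ A then -1 else 1 := by
  unfold rs
  have : ∀ p ∈ A, (-1 : ℝ) ^ (q.factorization p) = if p = q then -1 else 1 := by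
    intro p _
    rw [hq.factorization, Finsupp.single_apply]
    by_cases h : q = p
    · subst h; simp
    · simp [h, Ne.symm h]
  rw [Finset.prod_congr rfl this, Finset.prod_ite_eq']

lemma hasSum_EF (P A : Finset ℕ) (hP : ∀ p ∈ P, p.Prime) (σ : ℝ) (hσ : 0 < σ) :
    HasSum (fun n : Nat.factoredNumbers P => ((n : ℕ) : ℝ) ^ (-σ) * rs A n) (EF P σ A) := by
  have h := (EulerProduct.summable_and_hasSum_factoredNumbers_prod_filter_prime_geometric
    (f := rsHom A σ hσ) (fun {p} hp => by
      show |(p : ℝ) ^ (-σ) * rs A p| < 1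
      rw [abs_mul, rs_abs, mul_one, abs_of_nonneg (by positivity)]
      exact Real.rpow_lt_one_of_one_lt_of_neg (by exact_mod_cast hp.one_lt) (by linarith)) P).2
  convert! h using 1
  unfold EF
  rw [Finset.filter_true_of_mem hP]
  refine Finset.prod_congr rfl fun q hq => ?_
  show _ = (1 - (q : ℝ) ^ (-σ) * rs A q)⁻¹
  rw [rs_prime (hP q hq)]
  split_ifs <;> ring_nf

lemma Ex_le_EF (P J : Finset ℕ) (hP : ∀ p ∈ P, p.Prime) (σ : ℝ) (hσ : 0 < σ)
    (hJ : ∀ n ∈ J, n ∈ Nat.factoredNumbers P) (c : ℕ → ℝ) (e : ℝ) (he : e ≤ 1) (m : ℕ)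
    (hc : ∀ n ∈ J, 0 ≤ c n)
    (hcd : ∀ n ∈ J, c n ≤ (n : ℝ) ^ (-σ) - if n = 1 then e else 0) :
    Ex P (fun A => (∑ n ∈ J, c n * rs A n) ^ m) ≤ Ex P (fun A => (EF P σ A - e) ^ m) := by
  set d : ℕ → ℝ := fun n => (n : ℝ) ^ (-σ) - if n = 1 then e else 0 with hd
  have hd0 : ∀ n, 0 ≤ d n := by
    intro n; simp only [hd]; split_ifs with h
    · subst h; simp; linarith
    · simp; positivity
  have hs : ∀ A ∈ P.powerset, HasSum (fun n : Nat.factoredNumbers P => d n * rs A n)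
      (EF P σ A - e) := by
    intro A hA
    have h1 := hasSum_EF P A hP σ hσ
    have h2 : HasSum (fun n : Nat.factoredNumbers P =>
        if n = ⟨1, Nat.mem_factoredNumbers'.2 (fun p hp h => absurd h hp.not_dvd_one)⟩ then e else 0) e := hasSum_ite_eq _ _
    convert! h1.sub h2 using 1
    funext n
    simp only [hd, Subtype.ext_iff]
    split_ifs with h
    · rw [h]; simp [rs_one]
    · ring
  have ht : Filter.Tendsto (fun U : Finset (Nat.factoredNumbers P) =>
      Ex P (fun A => (∑ n ∈ U, d n * rs A n) ^ m)) Filter.atTop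
      (nhds (Ex P (fun A => (EF P σ A - e) ^ m))) := by
    unfold Ex
    refine Filter.Tendsto.div_const ?_ _
    refine tendsto_finsetSum _ fun A hA => ?_
    exact (hs A hA).pow m
  refine ge_of_tendsto ht ?_
  filter_upwards [Filter.eventually_ge_atTop (J.subtype (fun n => n ∈ Nat.factoredNumbers P))] with U hU
  have : ∀ A, ∑ n ∈ U, d n * rs A n = ∑ n ∈ U.map (Function.Embedding.subtype _), d n * rs A n := by
    intro A; rw [Finset.sum_map]; rfl
  simp_rw [this]
  refine Ex_pow_mono_subset _ _ _ _ _ ?_ _ ?_ hc hcd (fun n _ => hd0 n)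
  · intro h
    rw [Finset.mem_map] at h
    obtain ⟨a, _, ha⟩ := h
    have := a.2
    rw [show (a : ℕ) = 0 from ha] at this
    exact this.1 rfl
  · intro n hn
    rw [Finset.mem_map]
    exact ⟨⟨n, hJ n hn⟩, hU (by simpa using hn), rfl⟩

lemma cosh_bound (m : ℕ) (h : ℝ) (h0 : 0 ≤ h) (h1 : h ≤ 1) :
    ((1 + h) ^ m + (1 - h) ^ m) / 2 ≤ Real.cosh (m * h) := by
  rw [Real.cosh_eq]
  have a : (1 + h) ^ m ≤ Real.exp (m * h) := by
    rw [Real.exp_nat_mul]; gcongr; linarith [Real.add_one_le_exp h]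
  have b : (1 - h) ^ m ≤ Real.exp (-(m * h)) := by
    rw [← mul_neg, Real.exp_nat_mul]; refine pow_le_pow_left₀ (by linarith) ?_ m
    linarith [Real.add_one_le_exp (-h)]
  linarith

lemma EF_pos (P : Finset ℕ) (hP : ∀ p ∈ P, p.Prime) (σ : ℝ) (hσ : 0 < σ) (A : Finset ℕ) :
    0 < EF P σ A := by
  refine Finset.prod_pos fun q hq => ?_
  have : (q : ℝ) ^ (-σ) < 1 :=
    Real.rpow_lt_one_of_one_lt_of_neg (by exact_mod_cast (hP q hq).one_lt) (by linarith)
  have h2 : 0 ≤ (q : ℝ) ^ (-σ) := by positivity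
  split_ifs
  · positivity
  · exact inv_pos.2 (by linarith)

lemma Ex_EF_pow (P : Finset ℕ) (hP : ∀ p ∈ P, p.Prime) (σ : ℝ) (hσ : 3 / 5 ≤ σ) (m : ℕ)
    (u : ℕ → ℝ) (hu : ∀ q ∈ P, Real.cosh (m * (q : ℝ) ^ (-σ)) ≤ Real.exp (u q)) :
    Ex P (fun A => EF P σ A ^ m) ≤
      Real.exp (∑ q ∈ P, (2 * m * ((q : ℝ) ^ (-σ)) ^ 2 + u q)) := by
  have e : ∀ A, EF P σ A ^ m = ∏ q ∈ P, if q ∈ A then ((1 + (q : ℝ) ^ (-σ))⁻¹) ^ m else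
      ((1 - (q : ℝ) ^ (-σ))⁻¹) ^ m := by
    intro A; unfold EF; rw [← Finset.prod_pow]
    refine Finset.prod_congr rfl fun q _ => ?_
    split_ifs <;> rfl
  simp_rw [e]
  rw [Ex_prod, Real.exp_sum]
  have hh : ∀ q ∈ P, 0 ≤ (q : ℝ) ^ (-σ) ∧ (q : ℝ) ^ (-σ) ≤ 7/10 := by
    intro q hq
    refine ⟨by positivity, ?_⟩
    have h2 : (2 : ℝ) ≤ q := by exact_mod_cast (hP q hq).two_le
    calc (q : ℝ) ^ (-σ) ≤ (2 : ℝ) ^ (-σ) := Real.rpow_le_rpow_of_nonpos (by norm_num) h2 (by linarith)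
      _ ≤ (2 : ℝ) ^ (-(3/5) : ℝ) := Real.rpow_le_rpow_of_exponent_le (by norm_num) (by linarith)
      _ ≤ 7/10 := by
        have : (2 : ℝ) ^ (-(3/5) : ℝ) = ((1/2 : ℝ) ^ (3:ℕ)) ^ ((1:ℝ)/5) := by
          rw [← Real.rpow_natCast, ← Real.rpow_mul (by norm_num), one_div, Real.inv_rpow (by norm_num),
            ← Real.rpow_neg (by norm_num)]
          norm_num
        rw [this]
        have : (7/10 : ℝ) = ((7/10 : ℝ)^(5:ℕ)) ^ ((1:ℝ)/5) := by
          rw [← Real.rpow_natCast, ← Real.rpow_mul (by norm_num)]; norm_num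
        rw [this]
        apply Real.rpow_le_rpow <;> norm_num
  refine Finset.prod_le_prod ?_ ?_
  · intro q hq
    obtain ⟨a, b⟩ := hh q hq
    have : 0 ≤ (1 - (q : ℝ) ^ (-σ))⁻¹ := inv_nonneg.2 (by linarith)
    positivity
  · intro q hq
    obtain ⟨a, b⟩ := hh q hq
    have hu := hu q hq
    set h := (q : ℝ) ^ (-σ)
    have h1 : 0 < 1 - h := by linarith
    have h2 : 0 < 1 + h := by linarith
    have key : (((1 + h)⁻¹) ^ m + ((1 - h)⁻¹) ^ m) / 2 =
        ((1 - h ^ 2)⁻¹) ^ m * (((1 + h) ^ m + (1 - h) ^ m) / 2) := by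
      rw [show 1 - h ^ 2 = (1 + h) * (1 - h) by ring, mul_inv, mul_pow, inv_pow, inv_pow]
      field_simp
      ring
    rw [key, Real.exp_add]
    have h3 : 0 < 1 - h ^ 2 := by nlinarith
    gcongr
    · calc ((1 - h ^ 2)⁻¹) ^ m ≤ (Real.exp (2 * h ^ 2)) ^ m := by
            gcongr
            rw [inv_le_comm₀ h3 (Real.exp_pos _), ← Real.exp_neg]
            have h5 : h ^ 2 ≤ 49/100 := by nlinarith
            have h4 := Real.add_one_le_exp (2 * h ^ 2)
            rw [Real.exp_neg]
            rw [inv_le_comm₀ (Real.exp_pos _) h3]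
            refine le_trans ?_ h4
            rw [inv_le_iff_one_le_mul₀ h3]
            nlinarith [sq_nonneg h]
        _ = Real.exp (2 * m * h ^ 2) := by rw [← Real.exp_nat_mul]; ring_nf
    · exact (cosh_bound m h a (by linarith)).trans hu

lemma Ex_EF_inv_pow (P : Finset ℕ) (hP : ∀ p ∈ P, p.Prime) (σ : ℝ) (hσ : 0 < σ) (m : ℕ) :
    Ex P (fun A => ((EF P σ A)⁻¹) ^ m) ≤
      Real.exp (∑ q ∈ P, ((m * (q : ℝ) ^ (-σ)) ^ 2 / 2)) := by
  have e : ∀ A, ((EF P σ A)⁻¹) ^ m = ∏ q ∈ P, if q ∈ A then ((1 + (q : ℝ) ^ (-σ))) ^ m else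
      ((1 - (q : ℝ) ^ (-σ))) ^ m := by
    intro A; unfold EF; rw [← Finset.prod_inv_distrib, ← Finset.prod_pow]
    refine Finset.prod_congr rfl fun q _ => ?_
    split_ifs <;> simp
  simp_rw [e]
  rw [Ex_prod, Real.exp_sum]
  have hh : ∀ q ∈ P, 0 ≤ (q : ℝ) ^ (-σ) ∧ (q : ℝ) ^ (-σ) < 1 := fun q hq =>
    ⟨by positivity, Real.rpow_lt_one_of_one_lt_of_neg (by exact_mod_cast (hP q hq).one_lt) (by linarith)⟩
  refine Finset.prod_le_prod ?_ ?_
  · intro q hq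
    obtain ⟨a, b⟩ := hh q hq
    have : 0 ≤ (1 - (q : ℝ) ^ (-σ)) := (by linarith)
    positivity
  · intro q hq
    obtain ⟨a, b⟩ := hh q hq
    exact (cosh_bound m _ a b.le).trans (Real.cosh_le_exp_half_sq _)


/-- the `P`-part of `n` -/
noncomputable def rho (P : Finset ℕ) (n : ℕ) : ℕ :=
  (n.factorization.filter (fun q => q ∈ P)).prod (fun q e => q ^ e)

lemma rho_factorization (P : Finset ℕ) (n : ℕ) :
    (rho P n).factorization = n.factorization.filter (fun q => q ∈ P) := by
  unfold rho
  apply Nat.prod_pow_factorization_eq_self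
  intro q hq
  rw [Finsupp.support_filter, Finset.mem_filter, Nat.support_factorization] at hq
  exact Nat.prime_of_mem_primeFactors hq.1

lemma rho_ne_zero (P : Finset ℕ) (n : ℕ) : rho P n ≠ 0 := by
  unfold rho
  refine Finset.prod_ne_zero_iff.2 fun q hq => ?_
  rw [Finsupp.support_filter, Finset.mem_filter, Nat.support_factorization] at hq
  exact pow_ne_zero _ (Nat.prime_of_mem_primeFactors hq.1).ne_zero

lemma rho_dvd (P : Finset ℕ) {n : ℕ} (hn : n ≠ 0) : rho P n ∣ n := by
  rw [← Nat.factorization_le_iff_dvd (rho_ne_zero P n) hn, rho_factorization]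
  intro q
  rw [Finsupp.filter_apply]
  split_ifs <;> simp

lemma rs_rho {P A : Finset ℕ} (hA : A ⊆ P) (n : ℕ) : rs A (rho P n) = rs A n := by
  unfold rs
  refine Finset.prod_congr rfl fun q hq => ?_
  rw [rho_factorization, Finsupp.filter_apply, if_pos (hA hq)]

lemma rho_mem (P : Finset ℕ) (n : ℕ) : rho P n ∈ Nat.factoredNumbers P := by
  apply Nat.mem_factoredNumbers_of_primeFactors_subset (rho_ne_zero P n)
  rw [← Nat.support_factorization, rho_factorization]
  intro q hq
  rw [Finsupp.support_filter, Finset.mem_filter] at hq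
  exact hq.2

/-- count of `z`-smooth numbers up to `t` -/
noncomputable def Psi (t z : ℕ) : ℕ := ((Icc 1 t).filter (fun n => ∀ p, p.Prime → p ∣ n → p ≤ z)).card

/-- primes in `(z,t]` -/
noncomputable def PP (z t : ℕ) : Finset ℕ := (Icc 1 t).filter (fun q => q.Prime ∧ z < q)

lemma PP_prime {z t q : ℕ} (h : q ∈ PP z t) : q.Prime := (Finset.mem_filter.1 h).2.1

lemma pow_bound (F : ℝ) (hF : 0 < F) (s k : ℕ) (hs : 1 ≤ s) :
    (F - 1) ^ (2 * k) ≤ ((s : ℝ)⁻¹) ^ (2 * k) * (F ^ (2 * k * s) + (F⁻¹) ^ (2 * k * s)) := by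
  have hs' : (0 : ℝ) < s := by exact_mod_cast hs
  have key : ∀ G : ℝ, 1 ≤ G → (G - 1) ^ (2 * k) ≤ ((s : ℝ)⁻¹) ^ (2 * k) * G ^ (2 * k * s) := by
    intro G hG
    have h := one_add_mul_le_pow (show (-2 : ℝ) ≤ G - 1 by linarith) s
    have h2 : G - 1 ≤ (s : ℝ)⁻¹ * G ^ s := by
      rw [show 1 + (G - 1) = G by ring] at h
      rw [inv_mul_eq_div, le_div_iff₀ hs']
      linarith
    calc (G - 1) ^ (2 * k) ≤ ((s : ℝ)⁻¹ * G ^ s) ^ (2 * k) := by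
          apply pow_le_pow_left₀ (by linarith) h2
      _ = _ := by rw [mul_pow, ← pow_mul]; ring_nf
  have p1 : 0 ≤ F ^ (2 * k * s) := by positivity
  have p2 : 0 ≤ (F⁻¹) ^ (2 * k * s) := by positivity
  rcases le_total 1 F with h | h
  · refine (key F h).trans ?_
    gcongr; linarith
  · have h1 : 1 ≤ F⁻¹ := (one_le_inv₀ hF).2 h
    have h3 : (F - 1) ^ (2 * k) ≤ (F⁻¹ - 1) ^ (2 * k) := by
      rw [show (F - 1) ^ (2 * k) = (1 - F) ^ (2 * k) by rw [pow_mul, pow_mul]; congr 1; ring]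
      apply pow_le_pow_left₀ (by linarith)
      have : F * F⁻¹ = 1 := mul_inv_cancel₀ hF.ne'
      nlinarith
    refine h3.trans ((key _ h1).trans ?_)
    gcongr; linarith

lemma sum_PP_sq (z t : ℕ) (hz : 1 ≤ z) :
    ∑ q ∈ PP z t, ((q : ℝ) ^ (-(1 : ℝ))) ^ 2 ≤ (z : ℝ)⁻¹ := by
  rcases le_total z t with h | h
  · calc ∑ q ∈ PP z t, ((q : ℝ) ^ (-(1 : ℝ))) ^ 2 ≤ ∑ q ∈ Ioc z t, ((q : ℝ) ^ 2)⁻¹ := by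
          have : ∀ q : ℕ, ((q : ℝ) ^ (-(1 : ℝ))) ^ 2 = ((q : ℝ) ^ 2)⁻¹ := by
            intro q; rw [Real.rpow_neg_one, inv_pow]
          simp_rw [this]
          refine Finset.sum_le_sum_of_subset_of_nonneg ?_ (fun _ _ _ => by positivity)
          intro q hq
          simp only [PP, Finset.mem_filter, Finset.mem_Icc] at hq
          simp; omega
      _ ≤ (z : ℝ)⁻¹ - (t : ℝ)⁻¹ := sum_Ioc_inv_sq_le_sub (by omega) h
      _ ≤ _ := by have : (0 : ℝ) ≤ (t : ℝ)⁻¹ := by positivity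
                  linarith
  · rw [show PP z t = ∅ from ?_]
    · simp
    · ext q; simp [PP]; omega

lemma split_bound (a b T Y : ℝ) (k : ℕ) (a0 : 0 ≤ a) (hab : a ≤ b) (ht : 0 < T) :
    (a + T * Y) ^ (2 * k) ≤ 2 ^ (2 * k) * b ^ (2 * k) + (2 * T) ^ (2 * k) * Y ^ (2 * k) := by
  have ev : Even (2 * k) := even_two_mul k
  have h1 : (a + T * Y) ^ (2 * k) ≤ (a + T * |Y|) ^ (2 * k) := by
    rw [← ev.pow_abs]
    refine pow_le_pow_left₀ (abs_nonneg _) ?_ _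
    calc |a + T * Y| ≤ |a| + |T * Y| := abs_add_le _ _
      _ = _ := by rw [abs_mul, abs_of_nonneg a0, abs_of_pos ht]
  have h2 : (a + T * |Y|) ^ (2 * k) ≤ 2 ^ (2 * k - 1) * (a ^ (2 * k) + (T * |Y|) ^ (2 * k)) :=
    add_pow_le a0 (by positivity) _
  have h3 : (2:ℝ) ^ (2 * k - 1) ≤ 2 ^ (2 * k) := pow_le_pow_right₀ (by norm_num) (by omega)
  have h4 : a ^ (2 * k) ≤ b ^ (2 * k) := pow_le_pow_left₀ a0 hab _
  have h5 : (T * |Y|) ^ (2 * k) = T ^ (2 * k) * Y ^ (2 * k) := by rw [mul_pow, ev.pow_abs]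
  have h6 : 0 ≤ T ^ (2 * k) * Y ^ (2 * k) := by rw [← h5]; positivity
  rw [h5] at h2
  have h7 : 0 ≤ a ^ (2 * k) := by positivity
  calc _ ≤ 2 ^ (2 * k - 1) * (a ^ (2 * k) + T ^ (2 * k) * Y ^ (2 * k)) := h1.trans h2
    _ ≤ 2 ^ (2 * k) * (b ^ (2 * k) + T ^ (2 * k) * Y ^ (2 * k)) :=
      mul_le_mul h3 (by linarith) (by linarith) (by positivity)
    _ = _ := by rw [mul_pow]; ring

set_option maxHeartbeats 1000000 in
lemma normI (t z k s : ℕ) (hk : 1 ≤ k) (hs : 1 ≤ s) (hz : s ^ 2 * k ≤ z) :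
    Ex (PP z t) (fun A => (∑ n ∈ Icc 1 t, rs A n) ^ (2 * k)) ≤
      (2 * (Psi t z : ℝ)) ^ (2 * k) + (100 * t / s) ^ (2 * k) := by
  rcases Nat.eq_zero_or_pos t with rfl | ht
  · simp only [show (Icc 1 0 : Finset ℕ) = ∅ by rfl, Finset.sum_empty]
    rw [Ex_const, zero_pow (by omega)]
    positivity
  have hz1 : 1 ≤ z := le_trans (by nlinarith [Nat.one_le_pow 2 s hs]) hz
  set P := PP z t with hPdef
  have hP : ∀ p ∈ P, p.Prime := fun p hp => PP_prime hp
  set J := (Icc 1 t).image (rho P) with hJ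
  set c : ℕ → ℝ := fun b => (((Icc 1 t).filter (fun n => rho P n = b)).card : ℝ) with hc
  have ht' : (0 : ℝ) < t := by exact_mod_cast ht
  have hs' : (0 : ℝ) < s := by exact_mod_cast hs
  have hsum : ∀ A ∈ P.powerset, ∑ n ∈ Icc 1 t, rs A n = ∑ b ∈ J, c b * rs A b := by
    intro A hA
    rw [← Finset.sum_fiberwise_of_maps_to (g := rho P) (t := J)
      (fun n hn => Finset.mem_image_of_mem _ hn)]
    refine Finset.sum_congr rfl fun b _ => ?_
    rw [Finset.sum_congr rfl (g := fun _ => rs A b), Finset.sum_const, nsmul_eq_mul]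
    intro n hn
    rw [Finset.mem_filter] at hn
    rw [← hn.2, rs_rho (Finset.mem_powerset.1 hA)]
  have h1J : 1 ∈ J := by
    rw [hJ, Finset.mem_image]
    refine ⟨1, by simp; omega, ?_⟩
    unfold rho
    rw [Nat.factorization_one, Finsupp.filter_zero, Finsupp.prod_zero_index]
  have hc1 : c 1 ≤ Psi t z := by
    simp only [hc, Psi]
    norm_cast
    refine Finset.card_le_card fun n hn => ?_
    rw [Finset.mem_filter] at hn ⊢
    refine ⟨hn.1, fun p hp hpn => ?_⟩
    by_contra hlt
    push Not at hlt
    have hn1 := Finset.mem_Icc.1 hn.1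
    have hpP : p ∈ P := by
      rw [hPdef, PP, Finset.mem_filter, Finset.mem_Icc]
      exact ⟨⟨hp.one_lt.le, (Nat.le_of_dvd (by omega) hpn).trans hn1.2⟩, hp, hlt⟩
    have h1 : (rho P n).factorization p = n.factorization p := by
      rw [rho_factorization, Finsupp.filter_apply, if_pos hpP]
    rw [hn.2] at h1
    rw [Nat.factorization_one, Finsupp.zero_apply] at h1
    have := hp.factorization_pos_of_dvd (by omega) hpn
    omega
  have hcb : ∀ b ∈ J, c b ≤ t * (b : ℝ)⁻¹ := by
    intro b hb
    have hb0 : 0 < b := by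
      obtain ⟨n, _, rfl⟩ := Finset.mem_image.1 hb
      exact Nat.pos_of_ne_zero (rho_ne_zero P n)
    have h1 : ((Icc 1 t).filter (fun n => rho P n = b)).card ≤ t / b := by
      have : ((Icc 1 t).filter (fun n => b ∣ n)).card = t / b := by
        rw [← Nat.Ioc_filter_dvd_card_eq_div]
        congr 1
      rw [← this]
      refine Finset.card_le_card fun n hn => ?_
      rw [Finset.mem_filter] at hn ⊢
      refine ⟨hn.1, ?_⟩
      rw [← hn.2]
      exact rho_dvd P (by have := Finset.mem_Icc.1 hn.1; omega)
    calc c b ≤ ((t / b : ℕ) : ℝ) := by simp only [hc]; exact_mod_cast h1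
      _ ≤ (t : ℝ) / b := Nat.cast_div_le
      _ = _ := by rw [div_eq_mul_inv]
  have hY : Ex P (fun A => (∑ b ∈ J.erase 1, (c b / t) * rs A b) ^ (2 * k)) ≤
      Ex P (fun A => (EF P 1 A - 1) ^ (2 * k)) := by
    refine Ex_le_EF P _ hP 1 one_pos ?_ _ 1 le_rfl _ ?_ ?_
    · intro n hn
      obtain ⟨n, _, rfl⟩ := Finset.mem_image.1 (Finset.mem_of_mem_erase hn)
      exact rho_mem P n
    · intro n _; simp only [hc]; positivity
    · intro n hn
      rw [if_neg (Finset.ne_of_mem_erase hn), sub_zero, Real.rpow_neg_one, div_le_iff₀ ht']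
      have := hcb n (Finset.mem_of_mem_erase hn)
      linarith
  have hkr : (1 : ℝ) ≤ k := by exact_mod_cast hk
  have hsr : (1 : ℝ) ≤ s := by exact_mod_cast hs
  have hzr : (s : ℝ) ^ 2 * k ≤ z := by exact_mod_cast hz
  have hz0 : (0 : ℝ) < z := by exact_mod_cast hz1
  have hE1 : Ex P (fun A => EF P 1 A ^ (2 * k * s)) ≤ Real.exp (6 * k) := by
    refine (Ex_EF_pow P hP 1 (by norm_num) (2 * k * s)
      (fun q => (((2 * k * s : ℕ) : ℝ) * (q : ℝ) ^ (-(1:ℝ))) ^ 2 / 2)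
      (fun q _ => Real.cosh_le_exp_half_sq _)).trans ?_
    apply Real.exp_le_exp.2
    have e : ∀ q : ℕ, (2 * ((2 * k * s : ℕ) : ℝ) * ((q : ℝ) ^ (-(1:ℝ))) ^ 2 +
      (((2 * k * s : ℕ) : ℝ) * (q : ℝ) ^ (-(1:ℝ))) ^ 2 / 2) =
      (4 * k * s + 2 * (k * s) ^ 2) * ((q : ℝ) ^ (-(1:ℝ))) ^ 2 := by
      intro q; push_cast; ring
    simp_rw [e]
    rw [← Finset.mul_sum]
    calc _ ≤ (4 * k * s + 2 * (k * s) ^ 2) * (z : ℝ)⁻¹ :=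
          mul_le_mul_of_nonneg_left (sum_PP_sq z t hz1) (by positivity)
      _ ≤ 6 * k := by
        rw [mul_inv_le_iff₀ hz0]
        have h1 : (k : ℝ) * ((s : ℝ) ^ 2 * k) ≤ k * z := by gcongr
        have h2 : (k : ℝ) * s ≤ k * ((s : ℝ) ^ 2 * k) := by
          gcongr; nlinarith
        nlinarith
  have hE2 : Ex P (fun A => (EF P 1 A)⁻¹ ^ (2 * k * s)) ≤ Real.exp (6 * k) := by
    refine (Ex_EF_inv_pow P hP 1 (by norm_num) (2 * k * s)).trans ?_
    apply Real.exp_le_exp.2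
    have e : ∀ q : ℕ, (
      (((2 * k * s : ℕ) : ℝ) * (q : ℝ) ^ (-(1:ℝ))) ^ 2 / 2) =
      (2 * (k * s) ^ 2) * ((q : ℝ) ^ (-(1:ℝ))) ^ 2 := by
      intro q; push_cast; ring
    simp_rw [e]
    rw [← Finset.mul_sum]
    calc _ ≤ (2 * ((k : ℝ) * s) ^ 2) * (z : ℝ)⁻¹ :=
          mul_le_mul_of_nonneg_left (sum_PP_sq z t hz1) (by positivity)
      _ ≤ 6 * k := by
        rw [mul_inv_le_iff₀ hz0]
        have h1 : (k : ℝ) * ((s : ℝ) ^ 2 * k) ≤ k * z := by gcongr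
        nlinarith [mul_pos (show (0:ℝ) < k by linarith) hz0]
  have hEF : Ex P (fun A => (EF P 1 A - 1) ^ (2 * k)) ≤ (50 / s) ^ (2 * k) := by
    calc Ex P (fun A => (EF P 1 A - 1) ^ (2 * k)) ≤ Ex P (fun A => ((s : ℝ)⁻¹) ^ (2 * k) *
          (EF P 1 A ^ (2 * k * s) + (EF P 1 A)⁻¹ ^ (2 * k * s))) :=
          Ex_mono fun A _ => pow_bound _ (EF_pos P hP 1 one_pos A) s k hs
      _ = ((s : ℝ)⁻¹) ^ (2 * k) * (Ex P (fun A => EF P 1 A ^ (2 * k * s)) +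
          Ex P (fun A => (EF P 1 A)⁻¹ ^ (2 * k * s))) := by rw [Ex_const_mul, Ex_add]
      _ ≤ ((s : ℝ)⁻¹) ^ (2 * k) * (Real.exp (6 * k) + Real.exp (6 * k)) := by gcongr
      _ ≤ ((s : ℝ)⁻¹) ^ (2 * k) * 50 ^ (2 * k) := by
        gcongr
        have h1 : Real.exp (6 * k) = (Real.exp 1 ^ 3) ^ (2 * k) := by
          rw [← pow_mul, ← Real.exp_nat_mul]; push_cast; ring_nf
        have h2 : Real.exp 1 ^ 3 ≤ 25 := by
          have := Real.exp_one_lt_d9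
          calc Real.exp 1 ^ 3 ≤ 2.72 ^ 3 := by gcongr; linarith
            _ ≤ 25 := by norm_num
        calc Real.exp (6 * k) + Real.exp (6 * k) = 2 * (Real.exp 1 ^ 3) ^ (2 * k) := by
              rw [h1]; ring
          _ ≤ 2 ^ (2 * k) * 25 ^ (2 * k) := by
              gcongr
              exact le_self_pow₀ (by norm_num) (by omega)
          _ = 50 ^ (2 * k) := by rw [← mul_pow]; norm_num
      _ = (50 / s) ^ (2 * k) := by rw [← mul_pow]; congr 1; ring
  have hsplit : ∀ A ∈ P.powerset, (∑ n ∈ Icc 1 t, rs A n) ^ (2 * k) ≤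
      2 ^ (2 * k) * (Psi t z : ℝ) ^ (2 * k) +
      (2 * t) ^ (2 * k) * (∑ b ∈ J.erase 1, (c b / t) * rs A b) ^ (2 * k) := by
    intro A hA
    rw [hsum A hA, ← Finset.add_sum_erase _ _ h1J, rs_one, mul_one]
    have e : ∑ b ∈ J.erase 1, c b * rs A b = t * ∑ b ∈ J.erase 1, (c b / t) * rs A b := by
      rw [Finset.mul_sum]
      refine Finset.sum_congr rfl fun b _ => ?_
      field_simp
    rw [e]
    exact split_bound _ _ _ _ k (by simp only [hc]; positivity) hc1 ht'
  calc _ ≤ Ex P (fun A => 2 ^ (2 * k) * (Psi t z : ℝ) ^ (2 * k) +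
      (2 * t) ^ (2 * k) * (∑ b ∈ J.erase 1, (c b / t) * rs A b) ^ (2 * k)) := Ex_mono hsplit
    _ = 2 ^ (2 * k) * (Psi t z : ℝ) ^ (2 * k) +
      (2 * t) ^ (2 * k) * Ex P (fun A => (∑ b ∈ J.erase 1, (c b / t) * rs A b) ^ (2 * k)) := by
        rw [Ex_add, Ex_const, Ex_const_mul]
    _ ≤ 2 ^ (2 * k) * (Psi t z : ℝ) ^ (2 * k) + (2 * t) ^ (2 * k) * (50 / s) ^ (2 * k) := by
        gcongr; exact hY.trans hEF
    _ = _ := by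
        rw [← mul_pow, ← mul_pow]; congr 2; ring

lemma normII : ∃ C : ℝ, 0 < C ∧ ∀ t k : ℕ, 1 ≤ k →
    Ex (PP 0 t) (fun A => (∑ n ∈ Icc 1 t, rs A n) ^ (2 * k)) ≤
      (t : ℝ) ^ ((6 : ℝ) / 5 * k) * Real.exp (C * (k : ℝ) ^ ((7 : ℝ) / 4)) := by
  have hS : Summable (fun n : ℕ => (n : ℝ) ^ (-(21/20) : ℝ)) := by
    rw [Real.summable_nat_rpow]; norm_num
  set S := ∑' n : ℕ, (n : ℝ) ^ (-(21/20) : ℝ) with hSdef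
  have hS0 : 0 ≤ S := tsum_nonneg fun n => by positivity
  refine ⟨8 * S + 1, by positivity, fun t k hk => ?_⟩
  rcases Nat.eq_zero_or_pos t with rfl | ht
  · simp only [show (Icc 1 0 : Finset ℕ) = ∅ by rfl, Finset.sum_empty]
    rw [Ex_const, zero_pow (by omega)]
    positivity
  set P := PP 0 t with hPdef
  have hP : ∀ p ∈ P, p.Prime := fun p hp => PP_prime hp
  have ht' : (0 : ℝ) < t := by exact_mod_cast ht
  have hkr : (1 : ℝ) ≤ k := by exact_mod_cast hk
  have h1 : Ex P (fun A => (∑ n ∈ Icc 1 t, ((t : ℝ) ^ (-(3/5) : ℝ)) * rs A n) ^ (2 * k)) ≤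
      Ex P (fun A => (EF P (3/5) A - 0) ^ (2 * k)) := by
    refine Ex_le_EF P _ hP (3/5) (by norm_num) ?_ _ 0 (by norm_num) _ ?_ ?_
    · intro n hn
      rw [Finset.mem_Icc] at hn
      rw [Nat.mem_factoredNumbers']
      intro p hp hpn
      rw [hPdef, PP, Finset.mem_filter, Finset.mem_Icc]
      exact ⟨⟨hp.one_lt.le, (Nat.le_of_dvd (by omega) hpn).trans hn.2⟩, hp, hp.pos⟩
    · intro n _; positivity
    · intro n hn
      rw [Finset.mem_Icc] at hn
      simp only [ite_self, sub_zero]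
      apply Real.rpow_le_rpow_of_nonpos
      · exact_mod_cast hn.1
      · exact_mod_cast hn.2
      · norm_num
  have h2 : Ex P (fun A => EF P (3/5) A ^ (2 * k)) ≤ Real.exp ((8 * S + 1) * (k : ℝ) ^ ((7 : ℝ) / 4)) := by
    refine (Ex_EF_pow P hP (3/5) le_rfl (2 * k)
      (fun q => (((2 * k : ℕ) : ℝ) * (q : ℝ) ^ (-(3/5):ℝ)) ^ ((7:ℝ)/4)) ?_).trans ?_
    · intro q _
      set a := (((2 * k : ℕ) : ℝ) * (q : ℝ) ^ (-(3/5):ℝ)) with ha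
      have a0 : 0 ≤ a := by positivity
      rcases le_total a 1 with h | h
      · refine (Real.cosh_le_exp_half_sq _).trans (Real.exp_le_exp.2 ?_)
        calc a ^ 2 / 2 ≤ a ^ 2 := by nlinarith [sq_nonneg a]
          _ = a ^ (2 : ℝ) := by norm_cast
          _ ≤ _ := Real.rpow_le_rpow_of_exponent_ge_of_imp a0 h (by norm_num) (by norm_num)
      · calc Real.cosh a ≤ Real.exp a := by
              rw [Real.cosh_eq]
              have : Real.exp (-a) ≤ Real.exp a := Real.exp_le_exp.2 (by linarith)
              linarith
          _ ≤ _ := by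
            apply Real.exp_le_exp.2
            calc a = a ^ (1 : ℝ) := (Real.rpow_one a).symm
              _ ≤ _ := Real.rpow_le_rpow_of_exponent_le h (by norm_num)
    · apply Real.exp_le_exp.2
      have hk7 : (k : ℝ) ≤ (k : ℝ) ^ ((7:ℝ)/4) := by
        calc (k : ℝ) = (k : ℝ) ^ (1 : ℝ) := (Real.rpow_one _).symm
          _ ≤ _ := Real.rpow_le_rpow_of_exponent_le hkr (by norm_num)
      calc _ ≤ ∑ q ∈ P, (8 * (k : ℝ) ^ ((7 : ℝ) / 4)) * (q : ℝ) ^ (-(21/20) : ℝ) := by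
            refine Finset.sum_le_sum fun q hq => ?_
            have hq1 : (1 : ℝ) ≤ q := by exact_mod_cast (hP q hq).one_lt.le
            have e1 : ((q : ℝ) ^ (-(3/5):ℝ)) ^ 2 ≤ (q : ℝ) ^ (-(21/20) : ℝ) := by
              rw [← Real.rpow_natCast, ← Real.rpow_mul (by positivity)]
              exact Real.rpow_le_rpow_of_exponent_le hq1 (by norm_num)
            have e2 : (((2 * k : ℕ) : ℝ) * (q : ℝ) ^ (-(3/5):ℝ)) ^ ((7:ℝ)/4) ≤
                4 * (k : ℝ) ^ ((7 : ℝ) / 4) * (q : ℝ) ^ (-(21/20) : ℝ) := by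
              rw [Real.mul_rpow (by positivity) (by positivity), ← Real.rpow_mul (by positivity)]
              push_cast
              rw [Real.mul_rpow (by positivity) (by positivity)]
              norm_num only
              gcongr
              calc (2 : ℝ) ^ ((7:ℝ)/4) ≤ 2 ^ (2 : ℝ) :=
                    Real.rpow_le_rpow_of_exponent_le (by norm_num) (by norm_num)
                _ = 4 := by norm_num
            have e3 : 2 * ((2 * k : ℕ) : ℝ) * ((q : ℝ) ^ (-(3/5):ℝ)) ^ 2 ≤
                4 * (k : ℝ) ^ ((7 : ℝ) / 4) * (q : ℝ) ^ (-(21/20) : ℝ) := by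
              push_cast
              calc 2 * (2 * (k:ℝ)) * ((q : ℝ) ^ (-(3/5):ℝ)) ^ 2 = 4 * k * ((q : ℝ) ^ (-(3/5):ℝ)) ^ 2 := by ring
                _ ≤ _ := by gcongr
            norm_num only at e2 e3 ⊢
            linarith
        _ = (8 * (k : ℝ) ^ ((7 : ℝ) / 4)) * ∑ q ∈ P, (q : ℝ) ^ (-(21/20) : ℝ) := by
            rw [Finset.mul_sum]
        _ ≤ (8 * (k : ℝ) ^ ((7 : ℝ) / 4)) * S := by
            gcongr
            exact hS.sum_le_tsum _ (fun n _ => by positivity)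
        _ ≤ _ := by
            have : 0 ≤ (k : ℝ) ^ ((7 : ℝ) / 4) := by positivity
            nlinarith
  simp_rw [sub_zero] at h1
  have h3 := h1.trans h2
  have e : ∀ A, (∑ n ∈ Icc 1 t, rs A n) ^ (2 * k) = (t : ℝ) ^ ((6 : ℝ) / 5 * k) *
      (∑ n ∈ Icc 1 t, ((t : ℝ) ^ (-(3/5) : ℝ)) * rs A n) ^ (2 * k) := by
    intro A
    rw [← Finset.mul_sum, mul_pow, ← mul_assoc, ← Real.rpow_natCast (_ ^ (_ : ℝ)), ← Real.rpow_mul ht'.le,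
      ← Real.rpow_add ht']
    push_cast
    rw [show (6:ℝ)/5*k + -(3/5) * (2 * k) = 0 by ring, Real.rpow_zero, one_mul]
  simp_rw [e]
  rw [Ex_const_mul]
  gcongr


lemma centralBinom_le_gen (n : ℕ) (n_large : 2 < n) :
    Nat.centralBinom n ≤ (2 * n) ^ Nat.sqrt (2 * n) * 4 ^ (2 * n / 3) *
      (2 * n) ^ ((Ioc n (2 * n)).filter Nat.Prime).card := by
  have n_pos : 0 < n := by omega
  have n2_pos : 1 ≤ 2 * n := by omega
  set f : ℕ → ℕ := fun x => x ^ n.centralBinom.factorization x with hf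
  have hle : ∀ p, f p ≤ 2 * n := fun p => Nat.pow_factorization_choose_le (by omega)
  set S := (Finset.range (2 * n / 3 + 1)).filter Nat.Prime with hS
  set R := (Ioc n (2 * n)).filter Nat.Prime with hR
  have hdisj : Disjoint S R := by
    rw [Finset.disjoint_left]
    intro p h1 h2
    simp only [hS, hR, Finset.mem_filter, Finset.mem_range, Finset.mem_Ioc] at h1 h2
    omega
  have h1 : Nat.centralBinom n = ∏ p ∈ S ∪ R, f p := by
    conv_lhs => rw [← n.prod_pow_factorization_centralBinom]
    symm
    apply Finset.prod_subset
    · intro p hp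
      simp only [hS, hR, Finset.mem_union, Finset.mem_filter, Finset.mem_range, Finset.mem_Ioc] at hp ⊢
      omega
    · intro p hp h2
      show p ^ n.centralBinom.factorization p = 1
      by_cases hpp : p.Prime
      · simp only [hS, hR, Finset.mem_union, Finset.mem_filter, Finset.mem_range, Finset.mem_Ioc,
          hpp, and_true, not_or] at hp h2
        rw [Nat.factorization_centralBinom_of_two_mul_self_lt_three_mul n_large (by omega) (by omega),
          Nat.pow_zero]
      · rw [Nat.factorization_eq_zero_of_not_prime n.centralBinom hpp, Nat.pow_zero]
  rw [h1, Finset.prod_union hdisj]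
  refine Nat.mul_le_mul ?_ ?_
  · rw [← Finset.prod_filter_mul_prod_filter_not S (· ≤ Nat.sqrt (2 * n))]
    apply mul_le_mul'
    · refine (Finset.prod_le_prod' fun p _ => hle p).trans ?_
      have : (Finset.Icc 1 (Nat.sqrt (2 * n))).card = Nat.sqrt (2 * n) := by
        rw [Nat.card_Icc, Nat.add_sub_cancel]
      rw [Finset.prod_const]
      refine pow_right_mono₀ n2_pos ((Finset.card_le_card fun x hx => ?_).trans this.le)
      obtain ⟨h1, h2⟩ := Finset.mem_filter.1 hx
      exact Finset.mem_Icc.mpr ⟨(Finset.mem_filter.1 h1).2.one_lt.le, h2⟩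
    · refine le_trans ?_ (primorial_le_four_pow (2 * n / 3))
      refine (Finset.prod_le_prod' fun p hp => (?_ : f p ≤ p)).trans ?_
      · obtain ⟨h1, h2⟩ := Finset.mem_filter.1 hp
        refine (pow_right_mono₀ (Finset.mem_filter.1 h1).2.one_lt.le ?_).trans (pow_one p).le
        exact Nat.factorization_choose_le_one (Nat.sqrt_lt'.mp <| not_le.1 h2)
      refine Finset.prod_le_prod_of_subset_of_one_le' ?_ ?_
      · intro p hp
        have := (Finset.mem_filter.1 hp).1
        simpa [hS] using this
      · intro p hp _
        simp at hp
        exact hp.2.one_lt.le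
  · refine (Finset.prod_le_prod' fun p _ => hle p).trans ?_
    rw [Finset.prod_const]

lemma primesIn_card_lower : ∃ x₀ : ℝ, ∀ x : ℝ, x₀ ≤ x → x / (20 * Real.log x) ≤ ((primesIn x).card : ℝ) := by
  have h1 := (isLittleO_log_rpow_atTop (show (0:ℝ) < 1/4 by norm_num)).bound (show (0:ℝ) < 1/100 by norm_num)
  rw [Filter.eventually_atTop] at h1
  obtain ⟨y0, hy0⟩ := h1
  refine ⟨max y0 (10^20), fun x hx => ?_⟩
  have hxb : (10:ℝ)^20 ≤ x := le_trans (le_max_right _ _) hx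
  have hx0 : y0 ≤ x := le_trans (le_max_left _ _) hx
  set n := ⌊x⌋₊ with hn
  have hnx : (n : ℝ) ≤ x := Nat.floor_le (by linarith)
  have hxn : x < n + 1 := Nat.lt_floor_add_one x
  have hn2 : 4 < n := by
    have : (4:ℝ) < n := by linarith
    exact_mod_cast this
  set R := (Ioc n (2 * n)).filter Nat.Prime with hR
  have hsub : R ⊆ primesIn x := by
    intro p hp
    simp only [hR, Finset.mem_filter, Finset.mem_Ioc] at hp
    have h2 : (p : ℝ) ≤ 2 * x := by
      have : (p : ℝ) ≤ 2 * n := by exact_mod_cast hp.1.2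
      linarith
    have h3 : x < p := by
      have : (n : ℝ) + 1 ≤ p := by exact_mod_cast hp.1.1
      linarith
    simp only [primesIn, Finset.mem_filter, Finset.mem_range]
    refine ⟨?_, hp.2, h3, h2⟩
    exact Nat.lt_succ_of_le (Nat.le_floor h2)
  have hcard : (R.card : ℝ) ≤ (primesIn x).card := by exact_mod_cast Finset.card_le_card hsub
  refine le_trans ?_ hcard
  have hlogx : 0 < Real.log x := Real.log_pos (by linarith)
  have hlog4 : Real.log x ≤ 1/100 * x ^ ((1:ℝ)/4) := by
    have := hy0 x hx0
    rw [Real.norm_of_nonneg hlogx.le, Real.norm_of_nonneg (by positivity)] at this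
    exact this
  have key : n * Real.log 4 ≤ Real.log n + (Nat.sqrt (2 * n)) * Real.log (2 * n) +
      ((2 * n / 3 : ℕ) : ℝ) * Real.log 4 + R.card * Real.log (2 * n) := by
    have a1 := (Nat.four_pow_lt_mul_centralBinom n (by omega)).le.trans
      (Nat.mul_le_mul_left n (centralBinom_le_gen n (by omega)))
    have a2 : (4 : ℝ) ^ n ≤ n * ((2 * n) ^ Nat.sqrt (2 * n) * 4 ^ (2 * n / 3) *
      (2 * n) ^ R.card) := by exact_mod_cast a1
    have hn0 : (0:ℝ) < n := by positivity
    have := Real.log_le_log (by positivity) a2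
    rw [Real.log_mul (by positivity) (by positivity), Real.log_mul (by positivity) (by positivity),
      Real.log_mul (by positivity) (by positivity), Real.log_pow, Real.log_pow, Real.log_pow,
      Real.log_pow] at this
    linarith
  have l4 : (1 : ℝ) ≤ Real.log 4 := by
    rw [show (4:ℝ) = 2 ^ 2 by norm_num, Real.log_pow]
    have := Real.log_two_gt_d9
    push_cast; linarith
  have hdiv : ((2 * n / 3 : ℕ) : ℝ) ≤ 2 * n / 3 := by
    have := @Nat.cast_div_le ℝ _ _ _ (2 * n) 3
    push_cast at this; exact this
  have hl2n : Real.log (2 * n) ≤ 2 * Real.log x := by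
    rw [show 2 * Real.log x = Real.log (x ^ 2) by rw [Real.log_pow]; norm_num]
    apply Real.log_le_log
    · positivity
    · nlinarith
  have hln : Real.log n ≤ Real.log x := Real.log_le_log (by positivity) hnx
  set q := x ^ ((1:ℝ)/4) with hq
  have hq4 : q ^ 4 = x := by
    rw [hq, ← Real.rpow_natCast, ← Real.rpow_mul (by linarith)]; norm_num
  have hq0 : 0 < q := by positivity
  have hsq : (Nat.sqrt (2 * n) : ℝ) ≤ 2 * q ^ 2 := by
    have h1 : ((Nat.sqrt (2 * n) : ℕ) : ℝ) ^ 2 ≤ 2 * n := by exact_mod_cast Nat.sqrt_le' (2 * n)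
    apply le_of_sq_le_sq _ (by positivity)
    nlinarith
  have hq1 : 100 ≤ q := by
    by_contra h
    push Not at h
    have : q ^ 4 ≤ 100 ^ 4 := by gcongr
    norm_num at this
    linarith
  rw [div_le_iff₀ (by positivity)]
  have h2n0 : 0 ≤ Real.log (2 * n) := Real.log_nonneg (by
    have : (4:ℝ) < n := by exact_mod_cast hn2
    linarith)
  have b1 : (Nat.sqrt (2 * n) : ℝ) * Real.log (2 * n) ≤ 2 * q ^ 2 * (2 * (1/100 * q)) := by
    gcongr; linarith
  have b2 : (R.card : ℝ) * Real.log (2 * n) ≤ R.card * (2 * Real.log x) := by gcongr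
  have b3 : (n : ℝ) / 3 * Real.log 4 ≤ Real.log n + (Nat.sqrt (2 * n)) * Real.log (2 * n) +
      R.card * Real.log (2 * n) := by nlinarith
  have b4 : (n : ℝ) / 3 ≤ (n : ℝ) / 3 * Real.log 4 := by
    have : (0:ℝ) ≤ n := by positivity
    nlinarith
  have b5 : q ^ 2 * q ≤ x / 100 := by rw [← hq4]; nlinarith [pow_pos hq0 3]
  have b6 : q ≤ x / 100 := by
    have : q ≤ q ^ 3 := le_self_pow₀ (by linarith) (by norm_num)
    nlinarith
  nlinarith


lemma mem_PP0 {n p : ℕ} : p ∈ PP 0 n ↔ p.Prime ∧ p ≤ n := by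
  simp only [PP, Finset.mem_filter, Finset.mem_Icc]
  constructor
  · rintro ⟨⟨_, h⟩, h2, _⟩; exact ⟨h2, h⟩
  · rintro ⟨h, h2⟩; exact ⟨⟨h.one_lt.le, h2⟩, h, h.pos⟩

lemma theta_PP0 (n : ℕ) : Chebyshev.theta n = ∑ p ∈ PP 0 n, Real.log p := by
  rw [Chebyshev.theta_eq_sum_Icc, Nat.floor_natCast]
  refine Finset.sum_congr ?_ fun _ _ => rfl
  ext p
  rw [mem_PP0, Finset.mem_filter, Finset.mem_Icc]
  constructor
  · rintro ⟨h, h2⟩; exact ⟨h2, h.2⟩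
  · rintro ⟨h, h2⟩; exact ⟨⟨by omega, h2⟩, h⟩

lemma mertens1 (n : ℕ) (hn : 1 ≤ n) :
    ∑ p ∈ PP 0 n, Real.log p / p ≤ Real.log n + 2 := by
  have hn0 : (0:ℝ) < n := by exact_mod_cast hn
  have h1 : ∀ m ∈ Ioc 0 n, ∑ p ∈ PP 0 n, (if p ∣ m then Real.log p else 0) ≤ Real.log n := by
    intro m hm
    rw [Finset.mem_Ioc] at hm
    rw [← Finset.sum_filter]
    have : (PP 0 n).filter (fun p => p ∣ m) ⊆ m.primeFactors := by
      intro p hp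
      rw [Finset.mem_filter, mem_PP0] at hp
      exact Nat.mem_primeFactors.2 ⟨hp.1.1, hp.2, by omega⟩
    calc _ ≤ ∑ p ∈ m.primeFactors, Real.log p :=
          Finset.sum_le_sum_of_subset_of_nonneg this (fun p _ _ => Real.log_natCast_nonneg p)
      _ = Real.log (∏ p ∈ m.primeFactors, p : ℕ) := by
          rw [Nat.cast_prod, Real.log_prod]
          intro p hp
          exact_mod_cast (Nat.prime_of_mem_primeFactors hp).ne_zero
      _ ≤ Real.log n := by
          apply Real.log_le_log
          · exact_mod_cast Finset.prod_pos fun p hp => (Nat.prime_of_mem_primeFactors hp).pos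
          · exact_mod_cast (Nat.le_of_dvd (by omega) (Nat.prod_primeFactors_dvd m)).trans hm.2
  have h2 : ∑ p ∈ PP 0 n, Real.log p * ((n / p : ℕ) : ℝ) ≤ n * Real.log n := by
    calc _ = ∑ p ∈ PP 0 n, ∑ m ∈ Ioc 0 n, (if p ∣ m then Real.log p else 0) := by
          refine Finset.sum_congr rfl fun p _ => ?_
          rw [← Finset.sum_filter, Finset.sum_const, Nat.Ioc_filter_dvd_card_eq_div, nsmul_eq_mul, mul_comm]
      _ = ∑ m ∈ Ioc 0 n, ∑ p ∈ PP 0 n, (if p ∣ m then Real.log p else 0) := Finset.sum_comm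
      _ ≤ ∑ m ∈ Ioc 0 n, Real.log n := Finset.sum_le_sum h1
      _ = _ := by simp
  have h3 : ∑ p ∈ PP 0 n, Real.log p ≤ Real.log 4 * n := by
    rw [← theta_PP0]; exact Chebyshev.theta_le_log4_mul_x hn0.le
  have l4 : Real.log 4 ≤ 2 := by
    rw [show (4:ℝ) = 2 ^ 2 by norm_num, Real.log_pow]
    have := Real.log_two_lt_d9
    push_cast; linarith
  have h4 : n * ∑ p ∈ PP 0 n, Real.log p / p ≤ ∑ p ∈ PP 0 n, Real.log p * ((n / p : ℕ) : ℝ) +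
      ∑ p ∈ PP 0 n, Real.log p := by
    rw [Finset.mul_sum, ← Finset.sum_add_distrib]
    refine Finset.sum_le_sum fun p hp => ?_
    have hp0 : (0:ℝ) < p := by exact_mod_cast (mem_PP0.1 hp).1.pos
    have hl : 0 ≤ Real.log p := Real.log_natCast_nonneg p
    have : (n:ℝ) / p ≤ ((n / p : ℕ) : ℝ) + 1 := by
      rw [div_le_iff₀ hp0]
      have := Nat.lt_div_mul_add (a := n) (mem_PP0.1 hp).1.pos
      have h5 : (n:ℝ) ≤ ((n / p : ℕ):ℝ) * p + p := by exact_mod_cast this.le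
      linarith
    calc (n:ℝ) * (Real.log p / p) = Real.log p * (n / p) := by ring
      _ ≤ Real.log p * (((n / p : ℕ) : ℝ) + 1) := by gcongr
      _ = _ := by ring
  have h5 : n * ∑ p ∈ PP 0 n, Real.log p / p ≤ n * (Real.log n + 2) := by nlinarith
  exact le_of_mul_le_mul_left h5 hn0

lemma mertens2 : ∃ C : ℝ, 0 < C ∧ ∀ n : ℕ, 2 ≤ n →
    ∑ p ∈ PP 0 n, (1 : ℝ) / p ≤ Real.log (Real.log n) + C := by
  have hind : ∀ n : ℕ, 2 ≤ n → ∑ p ∈ PP 0 n, (1 : ℝ) / p ≤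
      (∑ p ∈ PP 0 n, Real.log p / p) / Real.log n + Real.log (Real.log n) - Real.log (Real.log 2)
        + 2 * (1 / Real.log 2 - 1 / Real.log n) := by
    intro n hn
    induction n, hn using Nat.le_induction with
    | base =>
      have : PP 0 2 = {2} := by
        ext p; rw [mem_PP0, Finset.mem_singleton]
        constructor
        · rintro ⟨h1, h2⟩; have := h1.two_le; omega
        · rintro rfl; exact ⟨Nat.prime_two, le_rfl⟩
      rw [this]
      simp
      have := (Real.log_pos (one_lt_two (α := ℝ)))
      field_simp; norm_num
    | succ n hn ih =>
      set A : ℕ → ℝ := fun n => ∑ p ∈ PP 0 n, Real.log p / p with hA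
      have hn1 : (2:ℝ) ≤ n := by exact_mod_cast hn
      have hL : 0 < Real.log n := Real.log_pos (by linarith)
      have hL' : 0 < Real.log ((n + 1 : ℕ) : ℝ) := Real.log_pos (by push_cast; linarith)
      have hLL : Real.log n ≤ Real.log ((n + 1 : ℕ) : ℝ) :=
        Real.log_le_log (by linarith) (by push_cast; linarith)
      have hm := mertens1 n (by omega)
      have hstep : ∑ p ∈ PP 0 (n+1), (1 : ℝ) / p - ∑ p ∈ PP 0 n, (1 : ℝ) / p =
          (A (n+1) - A n) / Real.log ((n + 1 : ℕ) : ℝ) := by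
        by_cases hp : (n+1).Prime
        · have : PP 0 (n+1) = insert (n+1) (PP 0 n) := by
            ext p; rw [Finset.mem_insert, mem_PP0, mem_PP0]
            constructor
            · rintro ⟨h1, h2⟩
              by_cases h : p = n + 1
              · exact Or.inl h
              · exact Or.inr ⟨h1, by omega⟩
            · rintro (rfl | ⟨h1, h2⟩)
              · exact ⟨hp, le_rfl⟩
              · exact ⟨h1, by omega⟩
          have hnot : n + 1 ∉ PP 0 n := by rw [mem_PP0]; omega
          simp only [hA, this]
          rw [Finset.sum_insert hnot, Finset.sum_insert hnot]
          field_simp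
          ring
        · have : PP 0 (n+1) = PP 0 n := by
            ext p; rw [mem_PP0, mem_PP0]
            constructor
            · rintro ⟨h1, h2⟩
              refine ⟨h1, ?_⟩
              by_contra h
              have : p = n + 1 := by omega
              exact hp (this ▸ h1)
            · rintro ⟨h1, h2⟩
              exact ⟨h1, by omega⟩
          simp only [hA, this]
          simp
      have hratio : 1 - Real.log n / Real.log ((n + 1 : ℕ) : ℝ) ≤
          Real.log (Real.log ((n + 1 : ℕ) : ℝ)) - Real.log (Real.log n) := by
        rw [← Real.log_div hL'.ne' hL.ne']
        have := Real.one_sub_inv_le_log_of_pos (div_pos hL' hL)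
        rwa [inv_div] at this
      set a := Real.log n
      set b := Real.log ((n + 1 : ℕ) : ℝ)
      have h6 : A n * (1 / a - 1 / b) ≤ (a + 2) * (1 / a - 1 / b) := by
        apply mul_le_mul_of_nonneg_right hm
        rw [sub_nonneg]
        exact one_div_le_one_div_of_le hL hLL
      have h7 : (a + 2) * (1 / a - 1 / b) = (1 - a / b) + 2 * (1 / a - 1 / b) := by
        field_simp
      have h8 : (A (n+1) - A n) / b = A (n+1) / b - A n * (1 / b) := by ring
      have h9 : A n / a = A n * (1 / a) := by ring
      have h10 : A n * (1 / a - 1 / b) = A n * (1/a) - A n * (1/b) := by ring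
      rw [h8] at hstep
      change _ ≤ A (n+1) / b + _ - _ + _
      change _ ≤ A n / a + _ - _ + _ at ih
      linarith
  refine ⟨1 + 2 / Real.log 2 - Real.log (Real.log 2) + 2 / Real.log 2, ?_, fun n hn => ?_⟩
  · have h1 := (Real.log_pos (one_lt_two (α := ℝ)))
    have h2 : Real.log (Real.log 2) ≤ 0 := Real.log_nonpos h1.le (by have := Real.log_two_lt_d9; linarith)
    have : 0 < 2 / Real.log 2 := by positivity
    linarith
  · have h := hind n hn
    have hm := mertens1 n (by omega)
    have hn1 : (2:ℝ) ≤ n := by exact_mod_cast hn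
    have hl2 := (Real.log_pos (one_lt_two (α := ℝ)))
    have hL2 : Real.log 2 ≤ Real.log n := Real.log_le_log (by norm_num) hn1
    have hL : 0 < Real.log n := by linarith
    have h3 : (∑ p ∈ PP 0 n, Real.log p / p) / Real.log n ≤ 1 + 2 / Real.log 2 := by
      calc _ ≤ (Real.log n + 2) / Real.log n := by gcongr
        _ = 1 + 2 / Real.log n := by field_simp
        _ ≤ _ := by gcongr
    have h4 : 0 < 1 / Real.log n := by positivity
    have h5 : 2 * (1 / Real.log 2) = 2 / Real.log 2 := by ring
    linarith

/-- smooth numbers -/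
noncomputable def Sm (t z : ℕ) : Finset ℕ := (Icc 1 t).filter (fun n => ∀ p, p.Prime → p ∣ n → p ≤ z)

lemma psi_smooth_le : ∃ C : ℝ, 0 < C ∧ ∀ z v : ℕ, ∀ α : ℝ, 1 ≤ z → 1 ≤ v → 0 ≤ α → α ≤ 2/5 →
    ∑ d ∈ Sm v z, ArithmeticFunction.vonMangoldt d ≤ C * (v : ℝ) ^ (1 - α) * (z : ℝ) ^ α := by
  obtain ⟨C0, hC0⟩ := Chebyshev.psi_sub_theta_le_mul_sqrt
  refine ⟨2 + |C0|, by positivity, fun z v α hz hv h0 h1 => ?_⟩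
  have hv1 : (1:ℝ) ≤ v := by exact_mod_cast hv
  have hz1 : (1:ℝ) ≤ z := by exact_mod_cast hz
  rw [← Finset.sum_filter_add_sum_filter_not (Sm v z) Nat.Prime]
  have hzα : 1 ≤ (z:ℝ) ^ α := Real.one_le_rpow hz1 h0
  have a1 : ∑ d ∈ (Sm v z).filter Nat.Prime, ArithmeticFunction.vonMangoldt d ≤
      2 * ((v : ℝ) ^ (1 - α) * (z : ℝ) ^ α) := by
    calc _ ≤ ∑ d ∈ PP 0 (min v z), Real.log d := by
          rw [Finset.sum_congr rfl (g := fun d : ℕ => Real.log d)]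
          · refine Finset.sum_le_sum_of_subset_of_nonneg ?_ (fun p _ _ => Real.log_natCast_nonneg p)
            intro p hp
            simp only [Sm, Finset.mem_filter, Finset.mem_Icc] at hp
            rw [mem_PP0]
            exact ⟨hp.2, le_min hp.1.1.2 (hp.1.2 p hp.2 dvd_rfl)⟩
          · intro d hd
            exact ArithmeticFunction.vonMangoldt_apply_prime (Finset.mem_filter.1 hd).2
      _ ≤ Real.log 4 * (min v z : ℕ) := by
          rw [← theta_PP0]; exact Chebyshev.theta_le_log4_mul_x (by positivity)
      _ ≤ 2 * (min v z : ℕ) := by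
          gcongr
          rw [show (4:ℝ) = 2 ^ 2 by norm_num, Real.log_pow]
          have := Real.log_two_lt_d9
          push_cast; linarith
      _ ≤ _ := by
          gcongr
          have hm0 : (0:ℝ) < ((min v z : ℕ) : ℝ) := by
            have : 0 < min v z := by simp; omega
            exact_mod_cast this
          calc ((min v z : ℕ) : ℝ) = ((min v z : ℕ) : ℝ) ^ ((1 - α) + α) := by
                rw [show (1 - α) + α = 1 by ring, Real.rpow_one]
            _ = ((min v z : ℕ) : ℝ) ^ (1 - α) * ((min v z : ℕ) : ℝ) ^ α := Real.rpow_add hm0 _ _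
            _ ≤ _ := by
              gcongr
              · linarith
              · exact min_le_left _ _
              · exact min_le_right _ _
  have a2 : ∑ d ∈ (Sm v z).filter (fun d => ¬ Nat.Prime d), ArithmeticFunction.vonMangoldt d ≤
      |C0| * ((v : ℝ) ^ (1 - α) * (z : ℝ) ^ α) := by
    calc _ ≤ ∑ n ∈ (Ioc 0 v).filter (fun n => ¬ n.Prime), ArithmeticFunction.vonMangoldt n := by
          refine Finset.sum_le_sum_of_subset_of_nonneg ?_
            (fun p _ _ => ArithmeticFunction.vonMangoldt_nonneg)
          intro p hp
          simp only [Sm, Finset.mem_filter, Finset.mem_Icc, Finset.mem_Ioc] at hp ⊢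
          exact ⟨⟨by omega, hp.1.1.2⟩, hp.2⟩
      _ = Chebyshev.psi v - Chebyshev.theta v := by
          rw [Chebyshev.psi_sub_theta_eq_sum_not_prime, Nat.floor_natCast]
      _ ≤ C0 * Real.sqrt v := hC0 v
      _ ≤ |C0| * Real.sqrt v := by gcongr; exact le_abs_self _
      _ ≤ |C0| * ((v : ℝ) ^ (1 - α) * (z : ℝ) ^ α) := by
          gcongr
          calc Real.sqrt v = (v:ℝ) ^ ((1:ℝ)/2) := Real.sqrt_eq_rpow _
            _ ≤ (v:ℝ) ^ (1 - α) := Real.rpow_le_rpow_of_exponent_le hv1 (by linarith)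
            _ ≤ _ := le_mul_of_one_le_right (by positivity) hzα
  calc _ ≤ 2 * ((v : ℝ) ^ (1 - α) * (z : ℝ) ^ α) + |C0| * ((v : ℝ) ^ (1 - α) * (z : ℝ) ^ α) :=
        add_le_add a1 a2
    _ = _ := by ring


lemma mem_Sm {t z n : ℕ} : n ∈ Sm t z ↔ (1 ≤ n ∧ n ≤ t) ∧ ∀ p, p.Prime → p ∣ n → p ≤ z := by
  simp [Sm]

lemma Psi_eq (t z : ℕ) : Psi t z = (Sm t z).card := rfl

lemma sum_log_smooth (t z : ℕ) : ∑ n ∈ Sm t z, Real.log n ≤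
    ∑ m ∈ Sm t z, ∑ d ∈ Sm (t / m) z, ArithmeticFunction.vonMangoldt d := by
  have h1 : ∀ n ∈ Sm t z, Real.log n = ∑ d ∈ Sm t z, if d ∣ n then ArithmeticFunction.vonMangoldt d else 0 := by
    intro n hn
    rw [mem_Sm] at hn
    rw [← ArithmeticFunction.vonMangoldt_sum, ← Finset.sum_filter]
    refine Finset.sum_congr ?_ fun _ _ => rfl
    ext d
    rw [Nat.mem_divisors, Finset.mem_filter, mem_Sm]
    constructor
    · rintro ⟨h1, h2⟩
      have := Nat.le_of_dvd (by omega) h1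
      have := Nat.pos_of_dvd_of_pos h1 (by omega)
      exact ⟨⟨⟨by omega, by omega⟩, fun p hp hd => hn.2 p hp (hd.trans h1)⟩, h1⟩
    · rintro ⟨_, h⟩; exact ⟨h, by omega⟩
  rw [Finset.sum_congr rfl h1, Finset.sum_comm]
  have h2 : ∀ d ∈ Sm t z, (∑ n ∈ Sm t z, if d ∣ n then ArithmeticFunction.vonMangoldt d else 0) ≤
      ∑ m ∈ Sm t z, if m * d ≤ t then ArithmeticFunction.vonMangoldt d else 0 := by
    intro d hd
    rw [mem_Sm] at hd
    rw [← Finset.sum_filter, ← Finset.sum_filter, Finset.sum_const, Finset.sum_const, nsmul_eq_mul,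
      nsmul_eq_mul]
    refine mul_le_mul_of_nonneg_right ?_ ArithmeticFunction.vonMangoldt_nonneg
    norm_cast
    refine Finset.card_le_card_of_injOn (fun n => n / d) ?_ ?_
    · intro n hn
      simp only [Finset.coe_filter, Set.mem_ofPred_eq, mem_Sm] at hn ⊢
      obtain ⟨e, rfl⟩ := hn.2
      rw [Nat.mul_div_cancel_left _ (by omega)]
      have e0 : 0 < e := Nat.pos_of_ne_zero (by rintro rfl; omega)
      have : e ≤ d * e := Nat.le_mul_of_pos_left _ (by omega)
      refine ⟨⟨⟨e0, by omega⟩, fun p hp hpe => hn.1.2 p hp (hpe.mul_left d)⟩, by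
        rw [mul_comm]; exact hn.1.1.2⟩
    · intro n hn n' hn' h
      simp only [Finset.coe_filter, Set.mem_ofPred_eq] at hn hn'
      obtain ⟨e, rfl⟩ := hn.2
      obtain ⟨e', rfl⟩ := hn'.2
      simp only at h
      rw [Nat.mul_div_cancel_left _ (by omega), Nat.mul_div_cancel_left _ (by omega)] at h
      rw [h]
  refine (Finset.sum_le_sum h2).trans ?_
  rw [Finset.sum_comm]
  refine Finset.sum_le_sum fun m hm => ?_
  rw [mem_Sm] at hm
  rw [← Finset.sum_filter]
  refine Finset.sum_le_sum_of_subset_of_nonneg ?_ (fun _ _ _ => ArithmeticFunction.vonMangoldt_nonneg)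
  intro d hd
  rw [Finset.mem_filter, mem_Sm] at hd
  rw [mem_Sm]
  exact ⟨⟨hd.1.1.1, by rw [Nat.le_div_iff_mul_le (by omega), mul_comm]; exact hd.2⟩, hd.1.2⟩

lemma sum_smooth_rpow (t z : ℕ) (σ : ℝ) (hσ : 0 < σ) :
    ∑ m ∈ Sm t z, (m : ℝ) ^ (-σ) ≤ EF (PP 0 z) σ ∅ := by
  have h := hasSum_EF (PP 0 z) ∅ (fun p hp => PP_prime hp) σ hσ
  have hm : ∀ m ∈ Sm t z, m ∈ Nat.factoredNumbers (PP 0 z) := by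
    intro m hm
    rw [mem_Sm] at hm
    rw [Nat.mem_factoredNumbers']
    intro p hp hpm
    exact mem_PP0.2 ⟨hp, hm.2 p hp hpm⟩
  have h2 := sum_le_hasSum ((Sm t z).subtype (fun m => m ∈ Nat.factoredNumbers (PP 0 z)))
    (fun n _ => by simp only [rs, Finset.prod_empty, mul_one]; positivity) h
  refine le_trans (le_of_eq ?_) h2
  simp only [rs, Finset.prod_empty, mul_one]
  rw [Finset.sum_subtype_of_mem (fun m : ℕ => (m:ℝ) ^ (-σ)) hm]

lemma inv_one_sub_le (h : ℝ) (h0 : 0 ≤ h) (h1 : h ≤ 7/10) : (1 - h)⁻¹ ≤ Real.exp (h + 2 * h ^ 2) := by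
  have := Real.quadratic_le_exp_of_nonneg (show 0 ≤ h + 2 * h ^ 2 by positivity)
  refine le_trans ?_ this
  rw [inv_le_iff_one_le_mul₀ (by linarith)]
  nlinarith [pow_nonneg h0 2, pow_nonneg h0 3, pow_nonneg h0 4, pow_nonneg h0 5,
    mul_nonneg (pow_nonneg h0 2) (show 0 ≤ 7/10 - h by linarith)]

lemma rpow_neg_le_seven (q : ℕ) (hq : q.Prime) (σ : ℝ) (hσ : 3/5 ≤ σ) : (q : ℝ) ^ (-σ) ≤ 7/10 := by
  have h2 : (2 : ℝ) ≤ q := by exact_mod_cast hq.two_le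
  calc (q : ℝ) ^ (-σ) ≤ (2 : ℝ) ^ (-σ) := Real.rpow_le_rpow_of_nonpos (by norm_num) h2 (by linarith)
    _ ≤ (2 : ℝ) ^ (-(3/5) : ℝ) := Real.rpow_le_rpow_of_exponent_le (by norm_num) (by linarith)
    _ ≤ 7/10 := by
      have : (2 : ℝ) ^ (-(3/5) : ℝ) = ((1/2 : ℝ) ^ (3:ℕ)) ^ ((1:ℝ)/5) := by
        rw [← Real.rpow_natCast, ← Real.rpow_mul (by norm_num), one_div, Real.inv_rpow (by norm_num),
          ← Real.rpow_neg (by norm_num)]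
        norm_num
      rw [this]
      have : (7/10 : ℝ) = ((7/10 : ℝ)^(5:ℕ)) ^ ((1:ℝ)/5) := by
        rw [← Real.rpow_natCast, ← Real.rpow_mul (by norm_num)]; norm_num
      rw [this]
      apply Real.rpow_le_rpow <;> norm_num

lemma EF_bound : ∃ C : ℝ, 0 < C ∧ ∀ z : ℕ, ∀ α : ℝ, 3 ≤ z → 0 ≤ α → α ≤ 2/5 →
    EF (PP 0 z) (1 - α) ∅ ≤ C * Real.log z * Real.exp (3 * (z:ℝ) ^ α) := by
  obtain ⟨C2, hC2, hM⟩ := mertens2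
  have hS : Summable (fun n : ℕ => (n : ℝ) ^ (-(6/5) : ℝ)) := by
    rw [Real.summable_nat_rpow]; norm_num
  set S := ∑' n : ℕ, (n : ℝ) ^ (-(6/5) : ℝ) with hSdef
  refine ⟨Real.exp (C2 + 2 * S), Real.exp_pos _, fun z α hz h0 h1 => ?_⟩
  have hz3 : (3:ℝ) ≤ z := by exact_mod_cast hz
  have hlz : 1 ≤ Real.log z := by
    rw [Real.le_log_iff_exp_le (by linarith)]
    have := Real.exp_one_lt_d9; linarith
  have hzα : 1 ≤ (z:ℝ) ^ α := Real.one_le_rpow (by linarith) h0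
  have a1 : EF (PP 0 z) (1 - α) ∅ ≤ Real.exp (∑ q ∈ PP 0 z, ((q:ℝ) ^ (-(1 - α)) + 2 * ((q:ℝ) ^ (-(1-α))) ^ 2)) := by
    unfold EF
    rw [Real.exp_sum]
    refine Finset.prod_le_prod ?_ ?_
    · intro q hq
      have := rpow_neg_le_seven q (PP_prime hq) (1 - α) (by linarith)
      simp only [Finset.notMem_empty, if_false]
      exact inv_nonneg.2 (by linarith)
    · intro q hq
      have := rpow_neg_le_seven q (PP_prime hq) (1 - α) (by linarith)
      simp only [Finset.notMem_empty, if_false]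
      exact inv_one_sub_le _ (by positivity) this
  refine a1.trans ?_
  have a2 : ∑ q ∈ PP 0 z, ((q:ℝ) ^ (-(1-α))) ^ 2 ≤ S := by
    calc _ ≤ ∑ q ∈ PP 0 z, (q : ℝ) ^ (-(6/5) : ℝ) := by
          refine Finset.sum_le_sum fun q hq => ?_
          have hq1 : (1 : ℝ) ≤ q := by exact_mod_cast (PP_prime hq).one_lt.le
          rw [← Real.rpow_natCast, ← Real.rpow_mul (by positivity)]
          exact Real.rpow_le_rpow_of_exponent_le hq1 (by push_cast; linarith)
      _ ≤ S := hS.sum_le_tsum _ (fun n _ => by positivity)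
  have a3 : ∑ q ∈ PP 0 z, (q:ℝ) ^ (-(1 - α)) ≤ Real.log (Real.log z) + C2 + 3 * (z:ℝ) ^ α := by
    calc _ ≤ ∑ q ∈ PP 0 z, ((1:ℝ) / q + ((z:ℝ) ^ α / Real.log z) * (Real.log q / q)) := by
          refine Finset.sum_le_sum fun q hq => ?_
          have hq1 : (1 : ℝ) < q := by exact_mod_cast (PP_prime hq).one_lt
          have hqz : (q : ℝ) ≤ z := by exact_mod_cast (mem_PP0.1 hq).2
          have hlq : 0 < Real.log q := Real.log_pos hq1
          have hlqz : Real.log q ≤ Real.log z := Real.log_le_log (by linarith) hqz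
          -- convexity of exp
          set w := Real.log q / Real.log z with hw
          have w0 : 0 ≤ w := by positivity
          have w1 : w ≤ 1 := by rw [hw, div_le_one (by linarith)]; exact hlqz
          have hconv := convexOn_exp.2 (Set.mem_univ 0) (Set.mem_univ (α * Real.log z))
            (show 0 ≤ 1 - w by linarith) w0 (by ring)
          simp only [smul_eq_mul, mul_zero, zero_add, Real.exp_zero, mul_one] at hconv
          have e1 : w * (α * Real.log z) = α * Real.log q := by rw [hw]; field_simp
          have e2 : Real.exp (α * Real.log z) = (z:ℝ) ^ α := by
            rw [Real.rpow_def_of_pos (by linarith)]; ring_nf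
          have e3 : Real.exp (α * Real.log q) = (q:ℝ) ^ α := by
            rw [Real.rpow_def_of_pos (by linarith)]; ring_nf
          rw [e1, e2, e3] at hconv
          have e4 : (q:ℝ) ^ (-(1 - α)) = (q:ℝ) ^ α * (1 / q) := by
            rw [show -(1-α) = α - 1 by ring, Real.rpow_sub (by linarith), Real.rpow_one]; ring
          rw [e4]
          have : (z:ℝ) ^ α / Real.log z * (Real.log q / q) = (w * (z:ℝ) ^ α) * (1 / q) := by
            rw [hw]; ring
          rw [this]
          have h3 : (q:ℝ) ^ α ≤ 1 + w * (z:ℝ) ^ α := by linarith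
          calc _ ≤ (1 + w * (z:ℝ) ^ α) * (1 / q) := by gcongr
            _ = _ := by ring
      _ = ∑ q ∈ PP 0 z, (1:ℝ) / q + ((z:ℝ) ^ α / Real.log z) * ∑ q ∈ PP 0 z, (Real.log q / q) := by
          rw [Finset.sum_add_distrib, Finset.mul_sum]
      _ ≤ (Real.log (Real.log z) + C2) + ((z:ℝ) ^ α / Real.log z) * (3 * Real.log z) := by
          gcongr
          · exact hM z (by omega)
          · have := mertens1 z (by omega); linarith
      _ = _ := by field_simp
  have e5 : Real.log z = Real.exp (Real.log (Real.log z)) := (Real.exp_log (by linarith)).symm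
  calc _ ≤ Real.exp ((C2 + 2 * S) + Real.log (Real.log z) + 3 * (z:ℝ) ^ α) := by
        apply Real.exp_le_exp.2
        rw [Finset.sum_add_distrib, ← Finset.mul_sum]
        linarith
    _ = _ := by rw [Real.exp_add, Real.exp_add, ← e5]

lemma Psi_bound : ∃ C : ℝ, 0 < C ∧ ∀ t z : ℕ, ∀ α : ℝ, 1 ≤ t → 3 ≤ z → 0 ≤ α → α ≤ 2/5 →
    (Psi t z : ℝ) * Real.log t ≤
      C * (t:ℝ) ^ (1 - α) * (z:ℝ) ^ α * (Real.log z * Real.exp (3 * (z:ℝ) ^ α)) := by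
  obtain ⟨C1, hC1, hpsi⟩ := psi_smooth_le
  obtain ⟨C2, hC2, hEF⟩ := EF_bound
  refine ⟨(C1 + 2) * C2, by positivity, fun t z α ht hz h0 h1 => ?_⟩
  have ht1 : (1:ℝ) ≤ t := by exact_mod_cast ht
  have hz1 : (1:ℝ) ≤ z := by exact_mod_cast (by omega : 1 ≤ z)
  have hzα : 1 ≤ (z:ℝ) ^ α := Real.one_le_rpow hz1 h0
  have key : (Psi t z : ℝ) * Real.log t ≤ ∑ m ∈ Sm t z, (C1 + 2) * (t:ℝ) ^ (1 - α) * (z:ℝ) ^ α * (m:ℝ) ^ (-(1-α)) := by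
    calc (Psi t z : ℝ) * Real.log t = ∑ n ∈ Sm t z, Real.log n + ∑ n ∈ Sm t z, Real.log (t / n) := by
          rw [← Finset.sum_add_distrib, Psi_eq, ← nsmul_eq_mul, ← Finset.sum_const]
          refine Finset.sum_congr rfl fun n hn => ?_
          rw [mem_Sm] at hn
          have : (0:ℝ) < n := by exact_mod_cast (by omega : 0 < n)
          rw [Real.log_div (by linarith) (by linarith)]; ring
      _ ≤ ∑ m ∈ Sm t z, ∑ d ∈ Sm (t / m) z, ArithmeticFunction.vonMangoldt d + ∑ n ∈ Sm t z, Real.log (t / n) := by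
          exact add_le_add (sum_log_smooth t z) le_rfl
      _ ≤ _ := by
          rw [← Finset.sum_add_distrib]
          refine Finset.sum_le_sum fun m hm => ?_
          rw [mem_Sm] at hm
          have hm0 : (0:ℝ) < m := by exact_mod_cast (by omega : 0 < m)
          have e1 : (t:ℝ) ^ (1 - α) * (m:ℝ) ^ (-(1-α)) = ((t:ℝ) / m) ^ (1 - α) := by
            rw [Real.div_rpow (by positivity) (by positivity), Real.rpow_neg (by positivity), div_eq_mul_inv]
          have h2 := hpsi z (t / m) α (by omega) (Nat.div_pos hm.1.2 (by omega)) h0 h1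
          have h3 : (((t / m : ℕ) : ℝ)) ^ (1 - α) ≤ ((t:ℝ) / m) ^ (1 - α) := by
            gcongr
            · linarith
            · exact Nat.cast_div_le
          have h4 : Real.log (t / m) ≤ 2 * ((t:ℝ) / m) ^ (1 - α) := by
            have := Real.log_le_rpow_div (x := (t:ℝ)/m) (by positivity) (show 0 < 1 - α by linarith)
            refine this.trans ?_
            rw [div_le_iff₀ (by linarith)]
            have : 0 ≤ ((t:ℝ) / m) ^ (1 - α) := by positivity
            nlinarith
          set T := ((t:ℝ) / m) ^ (1 - α)
          have hT : 0 ≤ T := by positivity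
          calc _ ≤ C1 * T * (z:ℝ) ^ α + 2 * T := by
                refine add_le_add (h2.trans ?_) h4
                gcongr
            _ ≤ (C1 + 2) * T * (z:ℝ) ^ α := by nlinarith
            _ = _ := by rw [← e1]; ring
  refine key.trans ?_
  rw [← Finset.mul_sum]
  calc _ ≤ (C1 + 2) * (t:ℝ) ^ (1 - α) * (z:ℝ) ^ α * (C2 * Real.log z * Real.exp (3 * (z:ℝ) ^ α)) := by
        gcongr
        exact (sum_smooth_rpow t z (1-α) (by linarith)).trans (hEF z α hz h0 h1)
    _ = _ := by ring


/-- odd squarefree numbers up to `D` -/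
noncomputable def OS (D : ℕ) : Finset ℕ := (Icc 1 D).filter (fun n => Odd n ∧ Squarefree n)

lemma mem_OS {D n : ℕ} : n ∈ OS D ↔ (1 ≤ n ∧ n ≤ D) ∧ Odd n ∧ Squarefree n := by
  simp [OS]

lemma OS_dvd {D n d : ℕ} (h : n ∈ OS D) (hd : d ∣ n) : d ∈ OS D := by
  rw [mem_OS] at *
  have hn : 0 < n := by omega
  refine ⟨⟨Nat.pos_of_dvd_of_pos hd hn, (Nat.le_of_dvd hn hd).trans h.1.2⟩, ?_, h.2.2.squarefree_of_dvd hd⟩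
  exact Odd.of_dvd_nat h.2.1 hd

/-- The Selberg normalising sum. -/
noncomputable def VV (D : ℕ) : ℝ := ∑ l ∈ OS D, 1 / (l.totient : ℝ)

lemma VV_lower (D : ℕ) (hD : 1 ≤ D) : Real.log D ≤ 3 * VV D := by
  have h1 : Real.log D ≤ ∑ n ∈ Icc 1 D, 1 / (n:ℝ) := by
    have := log_add_one_le_harmonic D |>.trans' (Real.log_le_log (by positivity) (by push_cast; linarith : (D:ℝ) ≤ ((D+1:ℕ):ℝ)))
    refine this.trans (le_of_eq ?_)
    rw [harmonic_eq_sum_Icc]; push_cast; simp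
  have h2 : ∑ n ∈ Icc 1 D, 1 / (n:ℝ) ≤ ∑ q ∈ (OS D ×ˢ ({1, 2} : Finset ℕ)) ×ˢ (Icc 1 D),
      (1 / (q.1.1 : ℝ)) * (1 / (q.1.2:ℝ)) * (1 / (q.2:ℝ)^2) := by
    have hex : ∀ n ∈ Icc 1 D, ∃ q ∈ (OS D ×ˢ ({1, 2} : Finset ℕ)) ×ˢ (Icc 1 D), n = q.1.1 * q.1.2 * q.2 ^ 2 := by
      intro n hn
      rw [mem_Icc] at hn
      obtain ⟨a, b, hab, hsq⟩ := Nat.sq_mul_squarefree n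
      have hb0 : b ≠ 0 := by rintro rfl; simp at hab; omega
      have ha0 : a ≠ 0 := by rintro rfl; simp at hab; omega
      have hbn : b ≤ n := by rw [← hab]; exact Nat.le_of_dvd (by rw [hab]; omega) (Dvd.intro _ rfl) |>.trans' (Nat.le_self_pow (by norm_num) b)
      have han : a ≤ n := by rw [← hab]; exact Nat.le_of_dvd (by rw [hab]; omega) (Dvd.intro_left _ rfl)
      rcases Nat.even_or_odd a with he | ho
      · obtain ⟨c, hc⟩ := he.two_dvd
        refine ⟨((c, 2), b), ?_, ?_⟩
        · simp only [mem_product, mem_OS, mem_Icc]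
          refine ⟨⟨⟨⟨by omega, by omega⟩, ?_, hsq.squarefree_of_dvd ⟨2, by rw [hc]; ring⟩⟩, by simp⟩, by omega, by omega⟩
          by_contra hcon
          rw [Nat.not_odd_iff_even] at hcon
          obtain ⟨e, he⟩ := hcon.two_dvd
          have := hsq 2 ⟨e, by rw [hc, he]; ring⟩
          simp at this
        · simp only; rw [← hab, hc]; ring
      · refine ⟨((a, 1), b), ?_, ?_⟩
        · simp only [mem_product, mem_OS, mem_Icc]
          exact ⟨⟨⟨⟨by omega, by omega⟩, ho, hsq⟩, by simp⟩, by omega, by omega⟩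
        · simp only; rw [← hab]; ring
    choose! φ hφ1 hφ2 using hex
    have hinj : Set.InjOn φ (Icc 1 D : Finset ℕ) := by
      intro a ha b hb hab
      rw [hφ2 a ha, hφ2 b hb, hab]
    calc ∑ n ∈ Icc 1 D, 1 / (n:ℝ) = ∑ q ∈ (Icc 1 D).image φ, (1 / (q.1.1 : ℝ)) * (1 / (q.1.2:ℝ)) * (1 / (q.2:ℝ)^2) := by
          rw [Finset.sum_image hinj]
          refine Finset.sum_congr rfl fun n hn => ?_
          conv_lhs => rw [hφ2 n hn]
          push_cast
          simp only [one_div, mul_inv]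
      _ ≤ _ := by
          refine Finset.sum_le_sum_of_subset_of_nonneg ?_ (fun _ _ _ => by positivity)
          intro q hq
          obtain ⟨n, hn, rfl⟩ := Finset.mem_image.1 hq
          exact hφ1 n hn
  have h3 : ∑ q ∈ (OS D ×ˢ ({1, 2} : Finset ℕ)) ×ˢ (Icc 1 D),
      (1 / (q.1.1 : ℝ)) * (1 / (q.1.2:ℝ)) * (1 / (q.2:ℝ)^2) =
      (∑ l ∈ OS D, 1 / (l:ℝ)) * (3/2) * ∑ m ∈ Icc 1 D, 1 / (m:ℝ)^2 := by
    rw [Finset.sum_product, Finset.sum_product]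
    simp only [← Finset.mul_sum, ← Finset.sum_mul]
    norm_num
  have h4 : ∑ m ∈ Icc 1 D, 1 / (m:ℝ)^2 ≤ 2 := by
    have := sum_Ioc_inv_sq_le_sub (α := ℝ) (k := 1) (n := D) one_ne_zero hD
    have e : Icc 1 D = insert 1 (Ioc 1 D) := by ext; simp; omega
    rw [e, Finset.sum_insert (by simp)]
    simp only [one_div]
    have h0 : (0:ℝ) ≤ ((D:ℝ))⁻¹ := by positivity
    norm_num at this ⊢
    linarith
  have h5 : ∑ l ∈ OS D, 1 / (l:ℝ) ≤ VV D := by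
    refine Finset.sum_le_sum fun l hl => ?_
    rw [mem_OS] at hl
    have := Nat.totient_pos.2 (by omega : 0 < l)
    have h' := Nat.totient_le l
    exact one_div_le_one_div_of_le (by exact_mod_cast this) (by exact_mod_cast h')
  have h6 : 0 ≤ ∑ l ∈ OS D, 1 / (l:ℝ) := Finset.sum_nonneg fun _ _ => by positivity
  rw [h3] at h2
  nlinarith

/-- Selberg weights -/
noncomputable def lam (D d : ℕ) : ℝ :=
  (ArithmeticFunction.moebius d : ℝ) * d / VV D * ∑ l ∈ (OS D).filter (fun l => d ∣ l), 1 / (l.totient : ℝ)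

lemma VV_pos (D : ℕ) (hD : 1 ≤ D) : 0 < VV D := by
  refine Finset.sum_pos (fun l hl => ?_) ⟨1, by rw [mem_OS]; simp [hD]⟩
  rw [mem_OS] at hl
  have := Nat.totient_pos.2 (by omega : 0 < l)
  positivity

lemma lam_one (D : ℕ) (hD : 1 ≤ D) : lam D 1 = 1 := by
  have := VV_pos D hD
  simp only [lam, one_dvd, Finset.filter_true]
  rw [← VV]
  simp
  field_simp

lemma lam_abs (D : ℕ) (hD : 1 ≤ D) (d : ℕ) (hd : d ≤ D) : |lam D d| ≤ D := by
  have hV := VV_pos D hD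
  have h1 : ∑ l ∈ (OS D).filter (fun l => d ∣ l), 1 / (l.totient : ℝ) ≤ VV D :=
    Finset.sum_le_sum_of_subset_of_nonneg (Finset.filter_subset _ _) (fun _ _ _ => by positivity)
  have h0 : 0 ≤ ∑ l ∈ (OS D).filter (fun l => d ∣ l), 1 / (l.totient : ℝ) := Finset.sum_nonneg fun _ _ => by positivity
  have hmu : |(ArithmeticFunction.moebius d : ℝ)| ≤ 1 := by
    have := ArithmeticFunction.abs_moebius_le_one (n := d)
    exact_mod_cast this
  rw [lam, abs_mul, abs_div, abs_mul, abs_of_pos hV, abs_of_nonneg h0, Nat.abs_cast]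
  calc |(ArithmeticFunction.moebius d : ℝ)| * d / VV D * _ ≤ 1 * D / VV D * VV D := by gcongr
    _ = D := by field_simp

lemma lam_y (D : ℕ) (hD : 1 ≤ D) (g : ℕ) (hg : g ∈ OS D) :
    ∑ d ∈ (OS D).filter (fun d => g ∣ d), lam D d / d = (ArithmeticFunction.moebius g : ℝ) / (VV D * g.totient) := by
  have hV := VV_pos D hD
  have hg' := mem_OS.1 hg
  have e1 : ∀ d ∈ (OS D).filter (fun d => g ∣ d), lam D d / d =
      ∑ l ∈ OS D, if d ∣ l then (ArithmeticFunction.moebius d : ℝ) / VV D * (1 / (l.totient:ℝ)) else 0 := by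
    intro d hd
    rw [Finset.mem_filter, mem_OS] at hd
    have : (d:ℝ) ≠ 0 := by have : d ≠ 0 := by omega
                           exact_mod_cast this
    rw [lam, Finset.sum_filter, Finset.mul_sum, Finset.sum_div]
    refine Finset.sum_congr rfl fun l _ => ?_
    split_ifs
    · field_simp
    · simp
  rw [Finset.sum_congr rfl e1, Finset.sum_comm]
  have e2 : ∀ l ∈ OS D, (∑ d ∈ (OS D).filter (fun d => g ∣ d), if d ∣ l then (ArithmeticFunction.moebius d : ℝ) / VV D * (1 / (l.totient:ℝ)) else 0)
      = if l = g then (ArithmeticFunction.moebius g : ℝ) / (VV D * g.totient) else 0 := by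
    intro l hl
    have hl' := mem_OS.1 hl
    rw [← Finset.sum_filter, Finset.filter_filter]
    by_cases hgl : g ∣ l
    · obtain ⟨m, rfl⟩ := hgl
      have hg0 : 0 < g := by omega
      have hm0 : m ≠ 0 := by rintro rfl; simp at hl'
      have es : (OS D).filter (fun d => g ∣ d ∧ d ∣ g * m) = m.divisors.image (fun e => g * e) := by
        ext d
        simp only [Finset.mem_filter, Finset.mem_image, Nat.mem_divisors]
        constructor
        · rintro ⟨h1, ⟨e, rfl⟩, h3⟩
          exact ⟨e, ⟨Nat.dvd_of_mul_dvd_mul_left hg0 h3, hm0⟩, rfl⟩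
        · rintro ⟨e, ⟨he, _⟩, rfl⟩
          have := Nat.mul_dvd_mul_left g he
          exact ⟨OS_dvd hl this, Dvd.intro _ rfl, this⟩
      rw [es, Finset.sum_image (fun a _ b _ h => Nat.eq_of_mul_eq_mul_left hg0 h)]
      have hcop : ∀ e ∈ m.divisors, (ArithmeticFunction.moebius (g * e) : ℝ) = ArithmeticFunction.moebius g * ArithmeticFunction.moebius e := by
        intro e he
        have hc : Nat.Coprime g m := Nat.coprime_of_squarefree_mul hl'.2.2
        have hc' : Nat.Coprime g e := hc.coprime_dvd_right (Nat.dvd_of_mem_divisors he)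
        rw [ArithmeticFunction.isMultiplicative_moebius.map_mul_of_coprime hc']
        push_cast; rfl
      rw [Finset.sum_congr rfl fun e he => by rw [hcop e he]]
      rw [← Finset.sum_mul, ← Finset.sum_div, ← Finset.mul_sum]
      have hmob : (∑ e ∈ m.divisors, (ArithmeticFunction.moebius e : ℝ)) = if m = 1 then 1 else 0 := by
        have h := congrArg (fun f => f m) (ArithmeticFunction.coe_zeta_mul_moebius)
        simp only [ArithmeticFunction.coe_zeta_mul_apply, ArithmeticFunction.one_apply] at h
        exact_mod_cast h
      rw [hmob]
      by_cases hm1 : m = 1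
      · subst hm1; simp; field_simp
      · have : g * m ≠ g := by
          intro h; apply hm1; exact Nat.eq_of_mul_eq_mul_left hg0 (by omega)
        simp [hm1]; intro h; omega
    · rw [if_neg (by rintro rfl; exact hgl dvd_rfl)]
      apply Finset.sum_eq_zero
      intro d hd
      rw [Finset.mem_filter] at hd
      exact absurd (hd.2.1.trans hd.2.2) hgl
  rw [Finset.sum_congr rfl e2, Finset.sum_ite_eq' , if_pos hg]

lemma selberg_form (D : ℕ) (hD : 1 ≤ D) :
    ∑ d ∈ OS D, ∑ e ∈ OS D, lam D d * lam D e / (Nat.lcm d e : ℝ) = 1 / VV D := by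
  have hV := VV_pos D hD
  have e1 : ∀ d ∈ OS D, ∀ e ∈ OS D, lam D d * lam D e / (Nat.lcm d e : ℝ) =
      ∑ g ∈ OS D, (g.totient : ℝ) * ((if g ∣ d then lam D d / d else 0) * (if g ∣ e then lam D e / e else 0)) := by
    intro d hd e he
    have hd' := mem_OS.1 hd
    have he' := mem_OS.1 he
    have hd0 : (d:ℝ) ≠ 0 := by have : d ≠ 0 := by omega
                               exact_mod_cast this
    have he0 : (e:ℝ) ≠ 0 := by have : e ≠ 0 := by omega
                               exact_mod_cast this
    have hl0 : (Nat.lcm d e:ℝ) ≠ 0 := by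
      have : Nat.lcm d e ≠ 0 := Nat.lcm_ne_zero (by omega) (by omega)
      exact_mod_cast this
    have hgl : (Nat.gcd d e : ℝ) * Nat.lcm d e = d * e := by exact_mod_cast Nat.gcd_mul_lcm d e
    have hs : (Nat.gcd d e : ℝ) = ∑ g ∈ (OS D).filter (fun g => g ∣ d ∧ g ∣ e), (g.totient : ℝ) := by
      have h := Nat.sum_totient (Nat.gcd d e)
      have es : (Nat.gcd d e).divisors = (OS D).filter (fun g => g ∣ d ∧ g ∣ e) := by
        ext g
        simp only [Nat.mem_divisors, Finset.mem_filter, Nat.dvd_gcd_iff]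
        constructor
        · rintro ⟨h, _⟩; exact ⟨OS_dvd hd h.1, h⟩
        · rintro ⟨_, h⟩; exact ⟨h, Nat.gcd_ne_zero_left (by omega)⟩
      rw [← es]
      exact_mod_cast h.symm
    have : lam D d * lam D e / (Nat.lcm d e : ℝ) = (Nat.gcd d e : ℝ) * (lam D d / d * (lam D e / e)) := by
      field_simp
      linear_combination (-lam D d * lam D e) * hgl
    rw [this, hs, Finset.sum_mul, Finset.sum_filter]
    refine Finset.sum_congr rfl fun g _ => ?_
    by_cases h1 : g ∣ d <;> by_cases h2 : g ∣ e <;> simp [h1, h2]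
  rw [Finset.sum_congr rfl fun d hd => Finset.sum_congr rfl fun e he => e1 d hd e he]
  have e2 : ∑ d ∈ OS D, ∑ e ∈ OS D, ∑ g ∈ OS D, (g.totient : ℝ) * ((if g ∣ d then lam D d / d else 0) * (if g ∣ e then lam D e / e else 0))
      = ∑ g ∈ OS D, (g.totient : ℝ) * (∑ d ∈ (OS D).filter (fun d => g ∣ d), lam D d / d)^2 := by
    rw [Finset.sum_congr rfl fun d hd => Finset.sum_comm]
    rw [Finset.sum_comm]
    refine Finset.sum_congr rfl fun g _ => ?_
    rw [sq, Finset.sum_filter, Finset.sum_mul_sum, Finset.mul_sum]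
    refine Finset.sum_congr rfl fun d _ => ?_
    rw [Finset.mul_sum]
  rw [e2]
  have e3 : ∀ g ∈ OS D, (g.totient : ℝ) * (∑ d ∈ (OS D).filter (fun d => g ∣ d), lam D d / d)^2 = (1 / VV D ^ 2) * (1 / (g.totient:ℝ)) := by
    intro g hg
    rw [lam_y D hD g hg]
    have hg' := mem_OS.1 hg
    have h1 : (g.totient:ℝ) ≠ 0 := by
      have := Nat.totient_pos.2 (by omega : 0 < g)
      positivity
    have h2 : (ArithmeticFunction.moebius g : ℝ)^2 = 1 := by
      have := ArithmeticFunction.moebius_sq_eq_one_of_squarefree hg'.2.2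
      exact_mod_cast this
    rw [div_pow, h2]
    field_simp
  rw [Finset.sum_congr rfl e3, ← Finset.mul_sum, ← VV]
  field_simp


lemma nonsq_prime {n : ℕ} (hn : n ≠ 0) (h : ¬ IsSquare n) : ∃ q, q.Prime ∧ Odd (n.factorization q) := by
  by_contra hcon
  push Not at hcon
  apply h
  refine ⟨∏ q ∈ n.primeFactors, q ^ (n.factorization q / 2), ?_⟩
  rw [← Finset.prod_mul_distrib]
  conv_lhs => rw [← Nat.prod_factorization_pow_eq_self hn, Finsupp.prod, Nat.support_factorization]
  refine Finset.prod_congr rfl fun q hq => ?_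
  have := hcon q (Nat.prime_of_mem_primeFactors hq)
  rw [Nat.not_odd_iff_even] at this
  obtain ⟨c, hc⟩ := this
  rw [← pow_add]
  congr 1
  omega

lemma exists_jacobi_neg {n : ℕ} (hn : n ≠ 0) (h : ¬ IsSquare n) :
    ∃ b : ℕ, Odd b ∧ Nat.Coprime n b ∧ jacobiSym (n:ℤ) b = -1 := by
  obtain ⟨q, hq, hodd⟩ := nonsq_prime hn h
  have key : ∃ b : ℕ, Odd b ∧ jacobiSym (n:ℤ) b = -1 := by
    set e := n.factorization q with he
    obtain ⟨m, hm, hqm⟩ : ∃ m, n = q ^ e * m ∧ ¬ q ∣ m :=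
      ⟨n / q ^ e, (Nat.ordProj_mul_ordCompl_eq_self n q).symm, Nat.not_dvd_ordCompl hq hn⟩
    have hm0 : m ≠ 0 := by rintro rfl; simp at hqm
    obtain ⟨a, m', hm', hmm⟩ : ∃ a m', ¬ 2 ∣ m' ∧ m = 2 ^ a * m' := Nat.exists_eq_pow_mul_and_not_dvd hm0 2 (by norm_num)
    have hm'odd : Odd m' := by rw [← Nat.not_even_iff_odd, even_iff_two_dvd]; exact hm'
    have hc8 : Nat.Coprime 8 m' := by
      have : Nat.Coprime (2^3) m' := (Nat.Coprime.pow_left 3 (Nat.coprime_two_left.2 hm'odd))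
      simpa using this
    by_cases hq2 : q = 2
    · subst hq2
      have ha : a = 0 := by
        by_contra ha
        apply hqm; rw [hmm]; exact Dvd.dvd.mul_right (dvd_pow_self 2 ha) _
      subst ha
      simp only [pow_zero, one_mul] at hmm
      subst hmm
      obtain ⟨b, hb1, hb2⟩ := Nat.chineseRemainder hc8 5 1
      have hb8 : b % 8 = 5 := hb1
      have hbodd : Odd b := by rw [Nat.odd_iff]; omega
      refine ⟨b, hbodd, ?_⟩
      have j1 : jacobiSym 2 b = -1 := by
        rw [jacobiSym.at_two hbodd, ZMod.χ₈_nat_eq_if_mod_eight]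
        simp [hb8]; omega
      have j2 : jacobiSym (m:ℤ) b = 1 := by
        rw [← jacobiSym.quadratic_reciprocity_one_mod_four (by omega) hm'odd]
        rw [jacobiSym.mod_left]
        have : ((b:ℤ) % (m:ℤ)) = 1 % (m:ℤ) := by
          have h := hb2; unfold Nat.ModEq at h; exact_mod_cast h
        rw [this, ← jacobiSym.mod_left, jacobiSym.one_left]
      rw [hm]; push_cast
      rw [jacobiSym.mul_left, jacobiSym.pow_left, j1, j2, hodd.neg_one_pow]; norm_num
    · have : Fact q.Prime := ⟨hq⟩
      have hqodd : Odd q := hq.odd_of_ne_two hq2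
      obtain ⟨r, hr⟩ := FiniteField.exists_nonsquare (F := ZMod q) (by rw [ZMod.ringChar_zmod_n]; exact hq2)
      have hcq : Nat.Coprime (8 * m') q := by
        rw [Nat.coprime_comm, hq.coprime_iff_not_dvd, hq.dvd_mul]
        rintro (h | h)
        · have : q ∣ 2 := hq.dvd_of_dvd_pow (n := 3) (by simpa using h)
          exact hq2 ((Nat.prime_dvd_prime_iff_eq hq Nat.prime_two).1 this)
        · exact hqm (hmm ▸ Dvd.dvd.mul_left h _)
      obtain ⟨b, hb1, hb2⟩ := Nat.chineseRemainder hcq 1 r.val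
      have hb8 : b % 8 = 1 := by
        have : b ≡ 1 [MOD 8] := hb1.of_mul_right _
        exact this
      have hbm : b ≡ 1 [MOD m'] := hb1.of_mul_left _
      have hbodd : Odd b := by rw [Nat.odd_iff]; omega
      refine ⟨b, hbodd, ?_⟩
      have j1 : jacobiSym 2 b = 1 := by
        rw [jacobiSym.at_two hbodd, ZMod.χ₈_nat_eq_if_mod_eight]
        simp [hb8]; omega
      have j2 : jacobiSym (m':ℤ) b = 1 := by
        rw [← jacobiSym.quadratic_reciprocity_one_mod_four (by omega) hm'odd]
        rw [jacobiSym.mod_left]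
        have : ((b:ℤ) % (m':ℤ)) = 1 % (m':ℤ) := by
          have h := hbm; unfold Nat.ModEq at h; exact_mod_cast h
        rw [this, ← jacobiSym.mod_left, jacobiSym.one_left]
      have j3 : jacobiSym (q:ℤ) b = -1 := by
        rw [← jacobiSym.quadratic_reciprocity_one_mod_four (by omega) hqodd, ← jacobiSym.legendreSym.to_jacobiSym]
        rw [legendreSym.eq_neg_one_iff]
        have : ((b:ℤ) : ZMod q) = r := by
          have h := (ZMod.natCast_eq_natCast_iff _ _ _).2 hb2
          rw [ZMod.natCast_zmod_val] at h
          exact_mod_cast h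
        rw [this]; exact hr
      rw [hm, hmm]; push_cast
      rw [jacobiSym.mul_left, jacobiSym.mul_left, jacobiSym.pow_left, jacobiSym.pow_left, j1, j2, j3, hodd.neg_one_pow]; norm_num
  obtain ⟨b, hb, hj⟩ := key
  refine ⟨b, hb, ?_, hj⟩
  have h0 : b ≠ 0 := by rintro rfl; simp at hb
  have : NeZero b := ⟨h0⟩
  by_contra hc
  have := (jacobiSym.eq_zero_iff_not_coprime (a := n) (b := b)).2 (by simpa using hc)
  rw [hj] at this; norm_num at this

lemma periodic_zero_sum {c b : ℕ} (hc : 0 < c) (hb : Nat.Coprime b c) (g : ℕ → ℝ)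
    (hper : ∀ n, g (n % c) = g n) (hneg : ∀ n, g (b * n) = - g n) : ∑ n ∈ range c, g n = 0 := by
  have : NeZero c := ⟨hc.ne'⟩
  have e1 : ∑ n ∈ range c, g n = ∑ u : ZMod c, g u.val := by
    refine Finset.sum_bij' (fun n _ => (n : ZMod c)) (fun u _ => u.val) ?_ ?_ ?_ ?_ ?_
    · intros; simp
    · intro u _; simp [ZMod.val_lt]
    · intro n hn; simp at hn; simp [ZMod.val_natCast, Nat.mod_eq_of_lt hn]
    · intro u _; simp
    · intro n hn; simp at hn; simp [ZMod.val_natCast, Nat.mod_eq_of_lt hn]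
  have e2 : ∑ u : ZMod c, g u.val = ∑ u : ZMod c, g ((ZMod.unitOfCoprime b hb : ZMod c) * u).val :=
    (Equiv.sum_comp (Units.mulLeft (ZMod.unitOfCoprime b hb)) (fun u => g u.val)).symm
  have e3 : ∀ u : ZMod c, g ((ZMod.unitOfCoprime b hb : ZMod c) * u).val = - g u.val := by
    intro u
    rw [ZMod.coe_unitOfCoprime, ← hneg, ← hper (b * u.val)]
    congr 1
    conv_lhs => rw [← ZMod.natCast_zmod_val u, ← Nat.cast_mul, ZMod.val_natCast]
  rw [e1]
  have : ∑ u : ZMod c, g u.val = - ∑ u : ZMod c, g u.val := by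
    conv_lhs => rw [e2]
    rw [← Finset.sum_neg_distrib]
    exact Finset.sum_congr rfl fun u _ => e3 u
  linarith

lemma periodic_partial {c : ℕ} (hc : 0 < c) (g : ℕ → ℝ) (hper : ∀ n, g (n % c) = g n) (h1 : ∀ n, |g n| ≤ 1)
    (h0 : ∑ n ∈ range c, g n = 0) (m : ℕ) : |∑ n ∈ range m, g n| ≤ c := by
  induction m using Nat.strong_induction_on with
  | _ m ih =>
    by_cases hm : m < c
    · calc |∑ n ∈ range m, g n| ≤ ∑ n ∈ range m, |g n| := Finset.abs_sum_le_sum_abs _ _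
        _ ≤ ∑ n ∈ range m, 1 := Finset.sum_le_sum fun n _ => h1 n
        _ = m := by simp
        _ ≤ c := by exact_mod_cast hm.le
    · push Not at hm
      have e : m = c + (m - c) := by omega
      rw [e, Finset.sum_range_add, h0, zero_add]
      have : ∀ n, g (c + n) = g n := fun n => by rw [← hper (c+n), ← hper n]; simp
      simp only [this]
      exact ih _ (by omega)

lemma periodic_Ioc {c : ℕ} (hc : 0 < c) (g : ℕ → ℝ) (hper : ∀ n, g (n % c) = g n) (h1 : ∀ n, |g n| ≤ 1)
    (h0 : ∑ n ∈ range c, g n = 0) (a b : ℕ) : |∑ n ∈ Ioc a b, g n| ≤ 2 * c := by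
  rcases le_total b a with hab | hab
  · rw [Finset.Ioc_eq_empty (by omega)]; simp
  · have e : ∑ n ∈ Ioc a b, g n = ∑ n ∈ range (b+1), g n - ∑ n ∈ range (a+1), g n := by
      rw [← Finset.sum_Ico_eq_sub _ (by omega)]
      congr 1; ext x; simp only [mem_Ioc, mem_Ico]; omega
    rw [e]
    have h2 := periodic_partial hc g hper h1 h0 (b+1)
    have h3 := periodic_partial hc g hper h1 h0 (a+1)
    rw [abs_le] at *
    constructor <;> linarith [h2.1, h2.2, h3.1, h3.2]

lemma jac_abs (a : ℤ) (b : ℕ) : |((jacobiSym a b : ℤ) : ℝ)| ≤ 1 := by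
  rcases jacobiSym.trichotomy a b with h | h | h <;> simp [h]

lemma nonsq_cancel {n : ℕ} (hn : n ≠ 0) (h : ¬ IsSquare n) (a b : ℕ) :
    |∑ l ∈ (Ioc a b).filter Odd, ((jacobiSym (n:ℤ) l : ℤ) : ℝ)| ≤ 8 * n := by
  obtain ⟨q, hq, hcop, hj⟩ := exists_jacobi_neg hn h
  rw [Finset.sum_filter]
  have hper : ∀ l, (if Odd (l % (4*n)) then ((jacobiSym (n:ℤ) (l % (4*n)) : ℤ) : ℝ) else 0) = if Odd l then ((jacobiSym (n:ℤ) l : ℤ) : ℝ) else 0 := by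
    intro l
    have e : Odd (l % (4 * n)) ↔ Odd l := by
      rw [Nat.odd_iff, Nat.odd_iff, Nat.mod_mod_of_dvd _ ⟨2*n, by ring⟩]
    simp only [e]
    split_ifs with ho
    · have := jacobiSym.mod_right (n:ℤ) ho
      rw [this]; simp
    · rfl
  have h4 : Nat.Coprime q (4 * n) := by
    rw [Nat.coprime_mul_iff_right]
    refine ⟨?_, hcop.symm⟩
    have := Nat.Coprime.pow_right 2 (Nat.coprime_two_right.2 hq)
    simpa using this
  have hz := periodic_zero_sum (c := 4 * n) (b := q) (by omega) h4 (fun l => if Odd l then ((jacobiSym (n:ℤ) l : ℤ) : ℝ) else 0) hper (by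
    intro l
    beta_reduce
    simp only [Nat.odd_mul, hq, true_and]
    split_ifs with ho
    · have h0 : q ≠ 0 := by rintro rfl; simp at hq
      have h0' : l ≠ 0 := by rintro rfl; simp at ho
      have : NeZero q := ⟨h0⟩
      have : NeZero l := ⟨h0'⟩
      rw [jacobiSym.mul_right, hj]; push_cast; ring
    · norm_num)
  have := periodic_Ioc (c := 4 * n) (by omega) _ hper (by
    intro l; beta_reduce; split_ifs
    · exact jac_abs _ _
    · simp) hz a b
  refine this.trans ?_
  push_cast; linarith


/-- number of tuples with square product is at most the random moment -/
lemma sq_count_le (P : Finset ℕ) (t m : ℕ) :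
    (((Fintype.piFinset (fun _ : Fin m => Icc 1 t)).filter (fun v => IsSquare (∏ i, v i))).card : ℝ) ≤
      Ex P (fun A => (∑ n ∈ Icc 1 t, rs A n) ^ m) := by
  have h := Ex_expand P (Icc 1 t) (fun _ => 1) (by simp) m
  simp only [one_mul, Finset.prod_const_one] at h
  rw [h, Finset.card_eq_sum_ones, Nat.cast_sum, Finset.sum_filter]
  refine Finset.sum_le_sum fun v _ => ?_
  split_ifs with hs
  · have : Ex P (fun A => rs A (∏ i, v i)) = 1 := by
      simp only [rs_square _ hs]; exact Ex_const P 1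
    rw [this]; simp
  · exact Ex_rs_nonneg P _

lemma count_odd (a b : ℕ) (hab : a ≤ b) : ((Ioc a b).filter Odd).card = (b + 1) / 2 - (a + 1) / 2 := by
  induction b, hab using Nat.le_induction with
  | base => simp
  | succ n hn ih =>
    have : Ioc a (n+1) = insert (n+1) (Ioc a n) := by ext x; simp only [mem_Ioc, mem_insert]; omega
    rw [this, Finset.filter_insert]
    split_ifs with h
    · rw [Finset.card_insert_of_notMem (by simp), ih]
      rw [Nat.odd_iff] at h; omega
    · rw [ih]
      rw [Nat.odd_iff] at h; omega

lemma mult_sum (X Y q : ℕ) (hq : Odd q) (g : ℕ → ℝ) :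
    ∑ m ∈ ((Ioc X Y).filter Odd).filter (fun m => q ∣ m), g m = ∑ m ∈ (Ioc (X / q) (Y / q)).filter Odd, g (q * m) := by
  have hq0 : 0 < q := hq.pos
  symm
  refine Finset.sum_bij (fun m _ => q * m) ?_ ?_ ?_ ?_
  · intro m hm
    simp only [Finset.mem_filter, mem_Ioc] at *
    refine ⟨⟨⟨?_, ?_⟩, hq.mul hm.2⟩, Dvd.intro _ rfl⟩
    · have := (Nat.div_lt_iff_lt_mul hq0).1 hm.1.1; rw [mul_comm]; exact this
    · have := (Nat.le_div_iff_mul_le hq0).1 hm.1.2; rw [mul_comm]; exact this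
  · intro a _ b _ h; exact Nat.eq_of_mul_eq_mul_left hq0 h
  · intro m hm
    simp only [Finset.mem_filter, mem_Ioc] at *
    obtain ⟨⟨⟨h1, h2⟩, h3⟩, e, rfl⟩ := hm
    refine ⟨e, ⟨⟨?_, ?_⟩, (Nat.odd_mul.1 h3).2⟩, rfl⟩
    · rw [Nat.div_lt_iff_lt_mul hq0, mul_comm]; exact h1
    · rw [Nat.le_div_iff_mul_le hq0, mul_comm]; exact h2
  · intros; rfl

lemma count_mult (X Y q : ℕ) (hXY : X ≤ Y) (hq : Odd q) :
    |(((((Ioc X Y).filter Odd).filter (fun m => q ∣ m)).card : ℝ)) - ((Y:ℝ) - X) / (2 * q)| ≤ 1 := by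
  have hq0 : 0 < q := hq.pos
  have hq0' : (0:ℝ) < q := by exact_mod_cast hq0
  have h := mult_sum X Y q hq (fun _ => 1)
  simp only [Finset.sum_const, nsmul_eq_mul, mul_one] at h
  have hd := Nat.div_le_div_right (c := q) hXY
  rw [h, count_odd _ _ hd]
  have e1 : ((((Y/q + 1)/2 - (X/q+1)/2 : ℕ)) : ℝ) = (((Y/q+1)/2 : ℕ):ℝ) - (((X/q+1)/2 : ℕ):ℝ) := by
    rw [Nat.cast_sub (by omega)]
  rw [e1]
  have a1 : (2:ℝ) * (((Y/q+1)/2 : ℕ):ℝ) ≤ ((Y/q : ℕ):ℝ) + 1 := by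
    have : 2 * ((Y/q+1)/2) ≤ Y/q + 1 := by omega
    exact_mod_cast this
  have a2 : ((Y/q : ℕ):ℝ) ≤ (2:ℝ) * (((Y/q+1)/2 : ℕ):ℝ) := by
    have : Y/q ≤ 2 * ((Y/q+1)/2) := by omega
    exact_mod_cast this
  have b1 : (2:ℝ) * (((X/q+1)/2 : ℕ):ℝ) ≤ ((X/q : ℕ):ℝ) + 1 := by
    have : 2 * ((X/q+1)/2) ≤ X/q + 1 := by omega
    exact_mod_cast this
  have b2 : ((X/q : ℕ):ℝ) ≤ (2:ℝ) * (((X/q+1)/2 : ℕ):ℝ) := by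
    have : X/q ≤ 2 * ((X/q+1)/2) := by omega
    exact_mod_cast this
  have c1 : ((Y/q : ℕ):ℝ) ≤ Y / q := Nat.cast_div_le
  have c2 : (Y:ℝ) / q ≤ ((Y/q : ℕ):ℝ) + 1 := by
    rw [div_le_iff₀ hq0']
    have := Nat.lt_div_mul_add (a := Y) hq0
    have h2 : Y ≤ (Y / q + 1) * q := by rw [add_mul]; omega
    exact_mod_cast h2
  have d1 : ((X/q : ℕ):ℝ) ≤ X / q := Nat.cast_div_le
  have d2 : (X:ℝ) / q ≤ ((X/q : ℕ):ℝ) + 1 := by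
    rw [div_le_iff₀ hq0']
    have := Nat.lt_div_mul_add (a := X) hq0
    have h2 : X ≤ (X / q + 1) * q := by rw [add_mul]; omega
    exact_mod_cast h2
  have e2 : ((Y:ℝ) - X) / (2 * q) = (Y / q - X / q) / 2 := by field_simp
  rw [e2, abs_le]
  constructor <;> linarith

/-- Selberg majorant -/
noncomputable def ww (D m : ℕ) : ℝ := (∑ d ∈ (OS D).filter (fun d => d ∣ m), lam D d) ^ 2

lemma ww_prime (D p : ℕ) (hD : 1 ≤ D) (hp : p.Prime) (h : D < p) : ww D p = 1 := by
  have : (OS D).filter (fun d => d ∣ p) = {1} := by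
    ext d
    simp only [Finset.mem_filter, mem_OS, mem_singleton]
    constructor
    · rintro ⟨h1, h2⟩
      rcases (Nat.dvd_prime hp).1 h2 with h3 | h3
      · exact h3
      · omega
    · rintro rfl; simp [hD]
  rw [ww, this]; simp [lam_one D hD]

lemma ww_sum (D : ℕ) (O : Finset ℕ) (g : ℕ → ℝ) :
    ∑ m ∈ O, ww D m * g m = ∑ d ∈ OS D, ∑ e ∈ OS D, lam D d * lam D e * ∑ m ∈ O.filter (fun m => Nat.lcm d e ∣ m), g m := by
  have h1 : ∀ m ∈ O, ww D m * g m = ∑ d ∈ OS D, ∑ e ∈ OS D, lam D d * lam D e * (if Nat.lcm d e ∣ m then g m else 0) := by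
    intro m _
    rw [ww, sq, Finset.sum_filter, Finset.sum_mul_sum, Finset.sum_mul]
    refine Finset.sum_congr rfl fun d _ => ?_
    rw [Finset.sum_mul]
    refine Finset.sum_congr rfl fun e _ => ?_
    by_cases ha : d ∣ m <;> by_cases hb : e ∣ m <;> simp [ha, hb, Nat.lcm_dvd_iff]
  rw [Finset.sum_congr rfl h1, Finset.sum_comm]
  refine Finset.sum_congr rfl fun d _ => ?_
  rw [Finset.sum_comm]
  refine Finset.sum_congr rfl fun e _ => ?_
  rw [← Finset.mul_sum, Finset.sum_filter]

lemma lam_sum (D : ℕ) (hD : 1 ≤ D) : ∑ d ∈ OS D, ∑ e ∈ OS D, |lam D d * lam D e| ≤ (D:ℝ)^4 := by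
  have h1 : ∑ d ∈ OS D, |lam D d| ≤ (D:ℝ)^2 := by
    calc ∑ d ∈ OS D, |lam D d| ≤ ∑ d ∈ OS D, (D:ℝ) := Finset.sum_le_sum fun d hd => lam_abs D hD d (mem_OS.1 hd).1.2
      _ ≤ D * D := by
        rw [Finset.sum_const, nsmul_eq_mul]
        gcongr
        calc (OS D).card ≤ (Icc 1 D).card := Finset.card_le_card (Finset.filter_subset _ _)
          _ = D := by simp
      _ = _ := by ring
  have h2 : ∑ d ∈ OS D, ∑ e ∈ OS D, |lam D d * lam D e| = (∑ d ∈ OS D, |lam D d|)^2 := by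
    rw [sq, Finset.sum_mul_sum]; simp only [abs_mul]
  rw [h2]
  calc _ ≤ ((D:ℝ)^2)^2 := pow_le_pow_left₀ (Finset.sum_nonneg fun _ _ => abs_nonneg _) h1 2
    _ = _ := by ring

lemma ww_total (D X Y : ℕ) (hD : 1 ≤ D) (hXY : X ≤ Y) :
    ∑ m ∈ (Ioc X Y).filter Odd, ww D m ≤ ((Y:ℝ) - X) / (2 * VV D) + (D:ℝ)^4 := by
  have h := ww_sum D ((Ioc X Y).filter Odd) (fun _ => 1)
  simp only [mul_one, Finset.sum_const, nsmul_eq_mul] at h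
  rw [h]
  have h2 : ∀ d ∈ OS D, ∀ e ∈ OS D, lam D d * lam D e * ((((Ioc X Y).filter Odd).filter (fun m => Nat.lcm d e ∣ m)).card : ℝ) ≤
      ((Y:ℝ) - X) / 2 * (lam D d * lam D e / (Nat.lcm d e : ℝ)) + |lam D d * lam D e| := by
    intro d hd e he
    have ho : Odd (Nat.lcm d e) := Odd.of_dvd_nat ((mem_OS.1 hd).2.1.mul (mem_OS.1 he).2.1) (Nat.lcm_dvd_mul d e)
    have hc := count_mult X Y (Nat.lcm d e) hXY ho
    have hl : (Nat.lcm d e : ℝ) ≠ 0 := by have := ho.pos; positivity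
    have e1 : ((Y:ℝ) - X) / 2 * (lam D d * lam D e / (Nat.lcm d e : ℝ)) = (lam D d * lam D e) * (((Y:ℝ) - X) / (2 * (Nat.lcm d e : ℝ))) := by
      field_simp
    rw [e1]
    have : lam D d * lam D e * (((((Ioc X Y).filter Odd).filter (fun m => Nat.lcm d e ∣ m)).card : ℝ) - ((Y:ℝ) - X) / (2 * (Nat.lcm d e : ℝ))) ≤ |lam D d * lam D e| := by
      refine (le_abs_self _).trans ?_
      rw [abs_mul]
      exact mul_le_of_le_one_right (abs_nonneg _) hc
    linarith
  refine (Finset.sum_le_sum fun d hd => Finset.sum_le_sum fun e he => h2 d hd e he).trans ?_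
  simp only [Finset.sum_add_distrib, ← Finset.mul_sum]
  rw [selberg_form D hD]
  have := lam_sum D hD
  have e2 : ((Y:ℝ) - X) / 2 * (1 / VV D) = ((Y:ℝ) - X) / (2 * VV D) := by
    have := VV_pos D hD; field_simp
  rw [e2]; linarith

lemma ww_nonsq (D X Y n : ℕ) (hD : 1 ≤ D) (hn : n ≠ 0) (hs : ¬ IsSquare n) :
    |∑ m ∈ (Ioc X Y).filter Odd, ww D m * ((jacobiSym (n:ℤ) m : ℤ) : ℝ)| ≤ 8 * n * (D:ℝ)^4 := by
  rw [ww_sum]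
  have h2 : ∀ d ∈ OS D, ∀ e ∈ OS D, |lam D d * lam D e * ∑ m ∈ ((Ioc X Y).filter Odd).filter (fun m => Nat.lcm d e ∣ m), ((jacobiSym (n:ℤ) m : ℤ) : ℝ)| ≤
      |lam D d * lam D e| * (8 * n) := by
    intro d hd e he
    have ho : Odd (Nat.lcm d e) := Odd.of_dvd_nat ((mem_OS.1 hd).2.1.mul (mem_OS.1 he).2.1) (Nat.lcm_dvd_mul d e)
    rw [abs_mul]
    refine mul_le_mul_of_nonneg_left ?_ (abs_nonneg _)
    rw [mult_sum X Y _ ho]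
    have : ∀ m ∈ (Ioc (X / (Nat.lcm d e)) (Y / (Nat.lcm d e))).filter Odd, ((jacobiSym (n:ℤ) (Nat.lcm d e * m) : ℤ) : ℝ) =
        ((jacobiSym (n:ℤ) (Nat.lcm d e) : ℤ) : ℝ) * ((jacobiSym (n:ℤ) m : ℤ) : ℝ) := by
      intro m hm
      rw [Finset.mem_filter] at hm
      have : NeZero (Nat.lcm d e) := ⟨ho.pos.ne'⟩
      have : NeZero m := ⟨hm.2.pos.ne'⟩
      rw [jacobiSym.mul_right]; push_cast; rfl
    rw [Finset.sum_congr rfl this, ← Finset.mul_sum, abs_mul]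
    have h3 := nonsq_cancel hn hs (X / (Nat.lcm d e)) (Y / (Nat.lcm d e))
    have h4 := jac_abs (n:ℤ) (Nat.lcm d e)
    calc _ ≤ 1 * (8 * (n:ℝ)) := mul_le_mul h4 h3 (abs_nonneg _) (by norm_num)
      _ = _ := one_mul _
  refine (Finset.abs_sum_le_sum_abs _ _).trans ?_
  refine (Finset.sum_le_sum fun d hd => (Finset.abs_sum_le_sum_abs _ _).trans (Finset.sum_le_sum fun e he => h2 d hd e he)).trans ?_
  simp only [← Finset.sum_mul]
  have := lam_sum D hD
  rw [mul_comm]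
  exact mul_le_mul_of_nonneg_left this (by positivity)

lemma jac_expand (t m : ℕ) (a : ℕ → ℝ) (l : ℕ) :
    (∑ n ∈ Icc 1 t, a n * ((jacobiSym (n:ℤ) l : ℤ) : ℝ)) ^ m =
      ∑ v ∈ Fintype.piFinset (fun _ : Fin m => Icc 1 t), (∏ i, a (v i)) * ((jacobiSym ((∏ i, v i : ℕ):ℤ) l : ℤ) : ℝ) := by
  rw [Finset.sum_pow']
  refine Finset.sum_congr rfl fun v _ => ?_
  rw [Finset.prod_mul_distrib]
  congr 1
  have : ∀ s : Finset (Fin m), ((jacobiSym ((∏ i ∈ s, v i : ℕ):ℤ) l : ℤ) : ℝ) = ∏ i ∈ s, ((jacobiSym (v i:ℤ) l : ℤ) : ℝ) := by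
    intro s
    induction s using Finset.induction_on with
    | empty => simp [jacobiSym.one_left]
    | insert i s hi ih =>
      rw [Finset.prod_insert hi, Finset.prod_insert hi]; push_cast
      rw [jacobiSym.mul_left]; push_cast
      rw [← ih]; push_cast; rfl
  exact (this univ).symm

lemma sieve_moment (X Y D t k : ℕ) (hD : 1 ≤ D) (hDX : D ≤ X) (hX : 2 ≤ X) (hXY : X ≤ Y) (P : Finset ℕ)
    (a : ℕ → ℝ) (ha : ∀ n, |a n| ≤ 1) (B : Finset ℕ) (hB : ∀ p ∈ B, p.Prime ∧ X < p ∧ p ≤ Y) :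
    ∑ p ∈ B, (∑ n ∈ Icc 1 t, a n * ((jacobiSym (n:ℤ) p : ℤ) : ℝ)) ^ (2 * k) ≤
      (((Y:ℝ) - X) / (2 * VV D) + (D:ℝ)^4) * Ex P (fun A => (∑ n ∈ Icc 1 t, rs A n) ^ (2 * k)) + 8 * (D:ℝ)^4 * (t:ℝ)^(4 * k) := by
  set W := ((Y:ℝ) - X) / (2 * VV D) + (D:ℝ)^4 with hW
  have hw0 : ∀ m, 0 ≤ ww D m := fun m => sq_nonneg _
  have hW0 : 0 ≤ W := (Finset.sum_nonneg fun m _ => hw0 m).trans (ww_total D X Y hD hXY)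
  have s1 : ∑ p ∈ B, (∑ n ∈ Icc 1 t, a n * ((jacobiSym (n:ℤ) p : ℤ) : ℝ)) ^ (2 * k) ≤
      ∑ m ∈ (Ioc X Y).filter Odd, ww D m * (∑ n ∈ Icc 1 t, a n * ((jacobiSym (n:ℤ) m : ℤ) : ℝ)) ^ (2 * k) := by
    have hsub : B ⊆ (Ioc X Y).filter Odd := by
      intro p hp
      obtain ⟨h1, h2, h3⟩ := hB p hp
      simp only [Finset.mem_filter, mem_Ioc]
      exact ⟨⟨h2, h3⟩, h1.odd_of_ne_two (by omega)⟩
    calc _ = ∑ m ∈ B, ww D m * (∑ n ∈ Icc 1 t, a n * ((jacobiSym (n:ℤ) m : ℤ) : ℝ)) ^ (2 * k) := by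
          refine Finset.sum_congr rfl fun p hp => ?_
          obtain ⟨h1, h2, h3⟩ := hB p hp
          rw [ww_prime D p hD h1 (by omega), one_mul]
      _ ≤ _ := Finset.sum_le_sum_of_subset_of_nonneg hsub fun m _ _ => mul_nonneg (hw0 m) (by rw [pow_mul]; positivity)
  refine s1.trans ?_
  simp only [jac_expand, Finset.mul_sum]
  rw [Finset.sum_comm]
  have s2 : ∀ v ∈ Fintype.piFinset (fun _ : Fin (2 * k) => Icc 1 t),
      ∑ m ∈ (Ioc X Y).filter Odd, ww D m * ((∏ i, a (v i)) * ((jacobiSym ((∏ i, v i : ℕ):ℤ) m : ℤ) : ℝ)) ≤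
      W * (if IsSquare (∏ i, v i) then 1 else 0) + 8 * (D:ℝ)^4 * (t:ℝ)^(2*k) := by
    intro v hv
    rw [Fintype.mem_piFinset] at hv
    have hA : |∏ i, a (v i)| ≤ 1 := by
      rw [Finset.abs_prod]; exact Finset.prod_le_one (fun _ _ => abs_nonneg _) fun i _ => ha _
    have e1 : ∑ m ∈ (Ioc X Y).filter Odd, ww D m * ((∏ i, a (v i)) * ((jacobiSym ((∏ i, v i : ℕ):ℤ) m : ℤ) : ℝ)) =
        (∏ i, a (v i)) * ∑ m ∈ (Ioc X Y).filter Odd, ww D m * ((jacobiSym ((∏ i, v i : ℕ):ℤ) m : ℤ) : ℝ) := by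
      rw [Finset.mul_sum]; exact Finset.sum_congr rfl fun m _ => by ring
    rw [e1]
    have e2 : (∏ i, a (v i)) * ∑ m ∈ (Ioc X Y).filter Odd, ww D m * ((jacobiSym ((∏ i, v i : ℕ):ℤ) m : ℤ) : ℝ) ≤
       |∑ m ∈ (Ioc X Y).filter Odd, ww D m * ((jacobiSym ((∏ i, v i : ℕ):ℤ) m : ℤ) : ℝ)| := by
      refine (le_abs_self _).trans ?_
      rw [abs_mul]; exact mul_le_of_le_one_left (abs_nonneg _) hA
    refine e2.trans ?_
    split_ifs with hs
    · have : |∑ m ∈ (Ioc X Y).filter Odd, ww D m * ((jacobiSym ((∏ i, v i : ℕ):ℤ) m : ℤ) : ℝ)| ≤ W := by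
        refine (Finset.abs_sum_le_sum_abs _ _).trans (le_trans ?_ (ww_total D X Y hD hXY))
        refine Finset.sum_le_sum fun m _ => ?_
        rw [abs_mul, abs_of_nonneg (hw0 m)]
        exact mul_le_of_le_one_right (hw0 m) (jac_abs _ _)
      have h8 : 0 ≤ 8 * (D:ℝ)^4 * (t:ℝ)^(2*k) := by positivity
      linarith
    · have hn0 : (∏ i, v i) ≠ 0 := Finset.prod_ne_zero_iff.2 fun i _ => by
        have := hv i; rw [mem_Icc] at this; omega
      have hle : ((∏ i, v i : ℕ):ℝ) ≤ (t:ℝ)^(2*k) := by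
        have : ∏ i, v i ≤ ∏ i : Fin (2*k), t := Finset.prod_le_prod' fun i _ => (mem_Icc.1 (hv i)).2
        simp at this
        exact_mod_cast this
      have := ww_nonsq D X Y _ hD hn0 hs
      rw [mul_zero, zero_add]
      refine this.trans ?_
      calc 8 * ((∏ i, v i : ℕ):ℝ) * (D:ℝ)^4 ≤ 8 * (t:ℝ)^(2*k) * (D:ℝ)^4 := by gcongr
        _ = _ := by ring
  refine (Finset.sum_le_sum s2).trans ?_
  rw [Finset.sum_add_distrib, ← Finset.mul_sum, Finset.sum_const]
  refine add_le_add (mul_le_mul_of_nonneg_left ?_ hW0) (le_of_eq ?_)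
  · refine le_trans (le_of_eq ?_) (sq_count_le P t (2*k))
    rw [Finset.card_eq_sum_ones, Nat.cast_sum, Finset.sum_filter]
    simp
  · simp only [Fintype.card_piFinset, Nat.card_Icc, Finset.prod_const, Finset.card_univ, Fintype.card_fin, nsmul_eq_mul]
    push_cast

    ring


/-- real valued quadratic character `n ↦ (n/p)` -/
noncomputable def ch (p n : ℕ) : ℝ := ((jacobiSym (n:ℤ) p : ℤ) : ℝ)

lemma ch_abs (p n : ℕ) : |ch p n| ≤ 1 := jac_abs _ _

lemma ch_mul (p m n : ℕ) : ch p (m * n) = ch p m * ch p n := by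
  unfold ch; push_cast; rw [jacobiSym.mul_left]; push_cast; rfl

lemma ch_one (p : ℕ) : ch p 1 = 1 := by simp [ch, jacobiSym.one_left]

lemma ch_pow (p n i : ℕ) : ch p (n ^ i) = (ch p n) ^ i := by
  induction i with
  | zero => simp [ch_one]
  | succ i ih => rw [pow_succ, ch_mul, ih, pow_succ]

lemma ch_tri (p n : ℕ) : ch p n = 0 ∨ ch p n = 1 ∨ ch p n = -1 := by
  unfold ch
  rcases jacobiSym.trichotomy (n:ℤ) p with h | h | h <;> simp [h]

/-- the character as an arithmetic function -/
noncomputable def chA (p : ℕ) : ArithmeticFunction ℝ := ⟨fun n => if n = 0 then 0 else ch p n, by simp⟩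

lemma chA_apply (p : ℕ) {n : ℕ} (hn : n ≠ 0) : chA p n = ch p n := by simp [chA, hn]

lemma chA_mult (p : ℕ) : (chA p).IsMultiplicative := by
  rw [ArithmeticFunction.IsMultiplicative.iff_ne_zero]
  refine ⟨by simp [chA, ch_one], fun {m n} hm hn _ => ?_⟩
  rw [chA_apply p hm, chA_apply p hn, chA_apply p (mul_ne_zero hm hn), ch_mul]

lemma r_nonneg (p n : ℕ) : 0 ≤ (chA p * (ArithmeticFunction.zeta : ArithmeticFunction ℝ)) n := by
  rcases eq_or_ne n 0 with rfl | hn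
  · simp
  have hm : (chA p * (ArithmeticFunction.zeta : ArithmeticFunction ℝ)).IsMultiplicative :=
    (chA_mult p).mul (ArithmeticFunction.isMultiplicative_zeta.natCast)
  rw [hm.multiplicative_factorization _ hn]
  refine Finset.prod_nonneg fun q hq => ?_
  have hq' : q.Prime := Nat.prime_of_mem_primeFactors (by simpa using hq)
  beta_reduce
  rw [ArithmeticFunction.coe_mul_zeta_apply]
  rw [Nat.sum_divisors_prime_pow hq']
  have e : ∀ i ∈ range (n.factorization q + 1), chA p (q ^ i) = (ch p q) ^ i := by
    intro i _
    rw [chA_apply p (pow_ne_zero _ hq'.ne_zero)]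
    exact ch_pow p q i
  rw [Finset.sum_congr rfl e]
  rcases ch_tri p q with h | h | h
  · rw [h]; exact Finset.sum_nonneg fun _ _ => by positivity
  · rw [h]; exact Finset.sum_nonneg fun _ _ => by positivity
  · rw [h, neg_one_geom_sum]; split_ifs <;> norm_num

/-- coefficients -/
noncomputable def bco (t d : ℕ) : ℝ := ((if d.Prime then 1 else 0) + ((t:ℝ) / d - ((t / d : ℕ):ℝ))) / 2

lemma bco_abs (t d : ℕ) : |bco t d| ≤ 1 := by
  have h1 : (((t / d : ℕ)):ℝ) ≤ (t:ℝ) / d := Nat.cast_div_le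
  have h2 : (t:ℝ) / d - ((t / d : ℕ):ℝ) ≤ 1 := by
    rcases Nat.eq_zero_or_pos d with rfl | hd
    · simp
    · have hd' : (0:ℝ) < d := by exact_mod_cast hd
      rw [sub_le_iff_le_add, div_le_iff₀ hd']
      have := Nat.lt_div_mul_add (a := t) hd
      have h2 : t ≤ (1 + t / d) * d := by rw [add_mul]; omega
      exact_mod_cast h2
  unfold bco
  rw [abs_le]
  split_ifs <;> constructor <;> linarith

lemma structure_lower (p t : ℕ) :
    (((Icc 1 t).filter Nat.Prime).card : ℝ) + 2 * ∑ d ∈ Icc 1 t, bco t d * ch p d ≤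
      t * ∑ n ∈ Icc 1 t, ch p n / n := by
  have hI : Ioc 0 t = Icc 1 t := by ext; simp [Nat.succ_le_iff]
  have e1 := ArithmeticFunction.sum_Ioc_mul_zeta_eq_sum (chA p) t
  rw [hI] at e1
  have e2 : ∑ n ∈ Icc 1 t, chA p n * ((t / n : ℕ):ℝ) = ∑ n ∈ Icc 1 t, ch p n * ((t / n : ℕ):ℝ) :=
    Finset.sum_congr rfl fun n hn => by
      rw [mem_Icc] at hn
      rw [chA_apply p (by omega)]
  have e3 : ∑ n ∈ (Icc 1 t).filter Nat.Prime, (1 + ch p n) ≤ ∑ n ∈ Icc 1 t, (chA p * (ArithmeticFunction.zeta : ArithmeticFunction ℝ)) n := by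
    calc _ = ∑ n ∈ (Icc 1 t).filter Nat.Prime, (chA p * (ArithmeticFunction.zeta : ArithmeticFunction ℝ)) n := by
          refine Finset.sum_congr rfl fun n hn => ?_
          have hp := (Finset.mem_filter.1 hn).2
          rw [ArithmeticFunction.coe_mul_zeta_apply, hp.sum_divisors, chA_apply p hp.ne_zero, chA_apply p one_ne_zero, ch_one]; ring
      _ ≤ _ := Finset.sum_le_sum_of_subset_of_nonneg (Finset.filter_subset _ _) fun n _ _ => r_nonneg p n
  have e4 : (t:ℝ) * ∑ n ∈ Icc 1 t, ch p n / n = ∑ n ∈ Icc 1 t, ch p n * ((t / n : ℕ):ℝ) + ∑ n ∈ Icc 1 t, ch p n * ((t:ℝ) / n - ((t / n : ℕ):ℝ)) := by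
    rw [← Finset.sum_add_distrib, Finset.mul_sum]
    exact Finset.sum_congr rfl fun n _ => by ring
  have e5 : 2 * ∑ d ∈ Icc 1 t, bco t d * ch p d = ∑ n ∈ (Icc 1 t).filter Nat.Prime, ch p n + ∑ n ∈ Icc 1 t, ch p n * ((t:ℝ) / n - ((t / n : ℕ):ℝ)) := by
    rw [Finset.sum_filter, ← Finset.sum_add_distrib, Finset.mul_sum]
    refine Finset.sum_congr rfl fun n _ => ?_
    unfold bco
    split_ifs <;> ring
  rw [Finset.sum_add_distrib, Finset.sum_const, nsmul_eq_mul, mul_one] at e3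
  rw [e4, e5]
  linarith

lemma pi_lower (t : ℕ) (ht : 4 ≤ t) : (t:ℝ) / 4 ≤ (((Icc 1 t).filter Nat.Prime).card : ℝ) * Real.log t := by
  have h1 := Chebyshev.psi_ge t
  have h2 := Chebyshev.psi_le_primeCounting_mul_log t
  have h3 : Nat.primeCounting t = ((Icc 1 t).filter Nat.Prime).card := by
    rw [Nat.primeCounting, Nat.primeCounting', Nat.count_eq_card_filter_range]
    congr 1
    ext n; simp only [Finset.mem_filter, mem_range, mem_Icc]
    constructor
    · rintro ⟨a, b⟩; exact ⟨⟨b.one_le, by omega⟩, b⟩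
    · rintro ⟨a, b⟩; exact ⟨by omega, b⟩
  rw [h3] at h2
  have ht' : (4:ℝ) ≤ t := by exact_mod_cast ht
  have h4 : Real.log ((t:ℝ) + 1) ≤ ((t:ℝ)+1)/4 - 1 + 2 * Real.log 2 := by
    have e : (t:ℝ) + 1 = ((t:ℝ)+1)/4 * (2^2) := by ring
    have := Real.log_le_sub_one_of_pos (x := ((t:ℝ)+1)/4) (by positivity)
    conv_lhs => rw [e, Real.log_mul (by positivity) (by norm_num), Real.log_pow]
    push_cast
    linarith
  have := Real.log_two_gt_d9
  have := Real.log_two_lt_d9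
  nlinarith

/-- if the twisted sum is small then the logarithmic sum is bounded below -/
lemma S_lower (p t : ℕ) (ht : 4 ≤ t)
    (h : |∑ d ∈ Icc 1 t, bco t d * ch p d| ≤ (t:ℝ) / (16 * Real.log t)) :
    1 / (8 * Real.log t) ≤ ∑ n ∈ Icc 1 t, ch p n / n := by
  have ht' : (4:ℝ) ≤ t := by exact_mod_cast ht
  have hl : 0 < Real.log t := Real.log_pos (by linarith)
  have h1 := structure_lower p t
  have h2 := pi_lower t ht
  have h3 := (abs_le.1 h).1
  have h4 : (t:ℝ) / (4 * Real.log t) ≤ (((Icc 1 t).filter Nat.Prime).card : ℝ) := by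
    rw [div_le_iff₀ (by positivity)]; nlinarith
  have e1 : (t:ℝ) / (4 * Real.log t) = 2 * (t * (1 / (8 * Real.log t))) := by field_simp; norm_num
  have e2 : (t:ℝ) / (16 * Real.log t) = (t * (1 / (8 * Real.log t))) / 2 := by field_simp; norm_num
  have : (t:ℝ) * (1 / (8 * Real.log t)) ≤ t * ∑ n ∈ Icc 1 t, ch p n / n := by linarith
  exact le_of_mul_le_mul_left this (by linarith)


lemma ch_zero (p : ℕ) (hp : p.Prime) : ch p 0 = 0 := by
  simp [ch, jacobiSym.zero_left hp.one_lt]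

lemma ch_mod (p n : ℕ) : ch p (n % p) = ch p n := by
  unfold ch; rw [jacobiSym.mod_left (n:ℤ)]; push_cast; rfl

lemma ch_congr (p : ℕ) {m n : ℕ} (h : m ≡ n [MOD p]) : ch p m = ch p n := by
  rw [← ch_mod, h, ch_mod]

lemma exists_ch_neg (p : ℕ) (hp : p.Prime) (h2 : p ≠ 2) : ∃ r : ℕ, ch p r = -1 := by
  have : Fact p.Prime := ⟨hp⟩
  obtain ⟨r, hr⟩ := FiniteField.exists_nonsquare (F := ZMod p) (by rw [ZMod.ringChar_zmod_n]; exact h2)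
  refine ⟨r.val, ?_⟩
  unfold ch
  rw [← jacobiSym.legendreSym.to_jacobiSym]
  have : legendreSym p (r.val : ℤ) = -1 := by
    rw [legendreSym.eq_neg_one_iff]
    simpa using hr
  rw [this]; norm_num

lemma ch_coprime (p b : ℕ) (hp : p.Prime) (h : ch p b ≠ 0) : Nat.Coprime b p := by
  by_contra hc
  apply h
  unfold ch
  have : NeZero p := ⟨hp.ne_zero⟩
  have := (jacobiSym.eq_zero_iff_not_coprime (a := b) (b := p)).2 (by simpa using hc)
  rw [this]; norm_num

lemma range_Icc (g : ℕ → ℝ) (h : g 0 = 0) (M : ℕ) : ∑ n ∈ Icc 1 M, g n = ∑ n ∈ range (M+1), g n := by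
  have e : range (M+1) = insert 0 (Icc 1 M) := by
    ext x; simp only [mem_range, mem_insert, mem_Icc]; omega
  rw [e, Finset.sum_insert (by simp), h, zero_add]

lemma ch_sum (p M : ℕ) (hp : p.Prime) (h2 : p ≠ 2) : |∑ n ∈ Icc 1 M, ch p n| ≤ p := by
  obtain ⟨b, hb⟩ := exists_ch_neg p hp h2
  rw [range_Icc _ (ch_zero p hp)]
  refine periodic_partial hp.pos _ (ch_mod p) (ch_abs p) ?_ _
  refine periodic_zero_sum hp.pos (ch_coprime p b hp (by rw [hb]; norm_num)) _ (ch_mod p) fun n => ?_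
  rw [ch_mul, hb]; ring

lemma ch_sum2 (p q M : ℕ) (hp : p.Prime) (h2 : p ≠ 2) (hq : q.Prime) (hpq : p ≠ q) :
    |∑ n ∈ Icc 1 M, ch p n * ch q n| ≤ p * q := by
  obtain ⟨r, hr⟩ := exists_ch_neg p hp h2
  have hcop : Nat.Coprime p q := (Nat.coprime_primes hp hq).2 hpq
  obtain ⟨b, hb1, hb2⟩ := Nat.chineseRemainder hcop r 1
  have e1 : ch p b = -1 := by rw [ch_congr p hb1, hr]
  have e2 : ch q b = 1 := by rw [ch_congr q hb2, ch_one]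
  rw [range_Icc _ (by rw [ch_zero p hp, zero_mul])]
  have hper : ∀ n, ch p (n % (p * q)) * ch q (n % (p * q)) = ch p n * ch q n := by
    intro n
    rw [ch_congr p ((Nat.mod_modEq n (p*q)).of_mul_right _), ch_congr q ((Nat.mod_modEq n (p*q)).of_mul_left _)]
  have hpos : 0 < p * q := Nat.mul_pos hp.pos hq.pos
  have := periodic_partial hpos (fun n => ch p n * ch q n) hper (fun n => by
    rw [abs_mul]; exact mul_le_one₀ (ch_abs p n) (abs_nonneg _) (ch_abs q n))
    (periodic_zero_sum hpos (Nat.Coprime.mul_right (ch_coprime p b hp (by rw [e1]; norm_num)) (ch_coprime q b hq (by rw [e2]; norm_num)))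
      _ hper (fun n => by rw [ch_mul, ch_mul, e1, e2]; ring)) (M+1)
  refine this.trans (by push_cast; exact le_rfl)

/-- coefficients of the k-th power -/
noncomputable def cco (J : Finset ℕ) (a : ℕ → ℝ) (k m : ℕ) : ℝ :=
  ∑ v ∈ (Fintype.piFinset (fun _ : Fin k => J)).filter (fun v => ∏ i, v i = m), ∏ i, a (v i)

lemma cco_sum (J : Finset ℕ) (a : ℕ → ℝ) (k T : ℕ) (hJ : J ⊆ Icc 1 T) (g : ℕ → ℝ) :
    ∑ v ∈ Fintype.piFinset (fun _ : Fin k => J), (∏ i, a (v i)) * g (∏ i, v i) = ∑ m ∈ Icc 1 (T ^ k), cco J a k m * g m := by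
  have hmaps : ∀ v ∈ Fintype.piFinset (fun _ : Fin k => J), (∏ i, v i) ∈ Icc 1 (T ^ k) := by
    intro v hv
    rw [Fintype.mem_piFinset] at hv
    have h1 : ∀ i, 1 ≤ v i ∧ v i ≤ T := fun i => mem_Icc.1 (hJ (hv i))
    rw [mem_Icc]
    constructor
    · exact Nat.one_le_iff_ne_zero.2 (Finset.prod_ne_zero_iff.2 fun i _ => by have := (h1 i).1; omega)
    · have : ∏ i, v i ≤ ∏ i : Fin k, T := Finset.prod_le_prod' fun i _ => (h1 i).2
      simpa using this
  rw [← Finset.sum_fiberwise_of_maps_to hmaps]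
  refine Finset.sum_congr rfl fun m _ => ?_
  rw [cco, Finset.sum_mul]
  refine Finset.sum_congr rfl fun v hv => ?_
  rw [(Finset.mem_filter.1 hv).2]

lemma cco_sq (J : Finset ℕ) (a : ℕ → ℝ) (k T : ℕ) (hJ : J ⊆ Icc 1 T) (ha0 : ∀ n ∈ J, 0 ≤ a n) (ha1 : ∀ n ∈ J, a n ≤ 1)
    (P : Finset ℕ) :
    ∑ m ∈ Icc 1 (T ^ k), (cco J a k m)^2 ≤ Ex P (fun A => (∑ n ∈ Icc 1 T, rs A n) ^ (2 * k)) := by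
  have hc0 : ∀ m, 0 ≤ cco J a k m := fun m => Finset.sum_nonneg fun v hv => Finset.prod_nonneg fun i _ => by
    rw [Finset.mem_filter, Fintype.mem_piFinset] at hv
    exact ha0 _ (hv.1 i)
  have h0 : 0 ∉ J := fun h => by have := hJ h; simp at this
  have e1 : ∀ A : Finset ℕ, (∑ n ∈ J, a n * rs A n) ^ (2 * k) = ∑ m ∈ Icc 1 (T ^ k), ∑ m' ∈ Icc 1 (T ^ k), cco J a k m * cco J a k m' * rs A (m * m') := by
    intro A
    have e2 : (∑ n ∈ J, a n * rs A n) ^ k = ∑ m ∈ Icc 1 (T ^ k), cco J a k m * rs A m := by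
      rw [← cco_sum J a k T hJ, Finset.sum_pow']
      refine Finset.sum_congr rfl fun v hv => ?_
      rw [Finset.prod_mul_distrib, rs_prod]
      intro i _ hi
      have := Fintype.mem_piFinset.1 hv i
      rw [hi] at this
      exact h0 this
    rw [mul_comm 2 k, pow_mul, e2, sq, Finset.sum_mul_sum]
    refine Finset.sum_congr rfl fun m hm => Finset.sum_congr rfl fun m' hm' => ?_
    rw [mem_Icc] at hm hm'
    rw [rs_mul A (by omega) (by omega)]; ring
  have e3 : Ex P (fun A => (∑ n ∈ J, a n * rs A n) ^ (2 * k)) = ∑ m ∈ Icc 1 (T ^ k), ∑ m' ∈ Icc 1 (T ^ k), cco J a k m * cco J a k m' * Ex P (fun A => rs A (m * m')) := by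
    simp only [e1]
    rw [Ex_sum]
    refine Finset.sum_congr rfl fun m _ => ?_
    rw [Ex_sum]
    refine Finset.sum_congr rfl fun m' _ => ?_
    rw [Ex_const_mul]
  calc ∑ m ∈ Icc 1 (T ^ k), (cco J a k m)^2 ≤ ∑ m ∈ Icc 1 (T ^ k), ∑ m' ∈ Icc 1 (T ^ k), cco J a k m * cco J a k m' * Ex P (fun A => rs A (m * m')) := by
        refine Finset.sum_le_sum fun m hm => ?_
        have : (cco J a k m)^2 = cco J a k m * cco J a k m * Ex P (fun A => rs A (m * m)) := by
          have : Ex P (fun A => rs A (m * m)) = 1 := by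
            simp only [rs_square _ (⟨m, rfl⟩ : IsSquare (m * m))]; exact Ex_const P 1
          rw [this]; ring
        rw [this]
        exact Finset.single_le_sum (f := fun m' => cco J a k m * cco J a k m' * Ex P (fun A => rs A (m * m')))
          (fun m' _ => mul_nonneg (mul_nonneg (hc0 _) (hc0 _)) (Ex_rs_nonneg _ _)) hm
    _ = Ex P (fun A => (∑ n ∈ J, a n * rs A n) ^ (2 * k)) := e3.symm
    _ ≤ Ex P (fun A => (∑ n ∈ Icc 1 T, 1 * rs A n) ^ (2 * k)) :=
        Ex_pow_mono_subset P J (Icc 1 T) a (fun _ => 1) (by simp) (2 * k) hJ ha0 ha1 (fun _ _ => zero_le_one)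
    _ = _ := by simp only [one_mul]

lemma large_sieve (J : Finset ℕ) (a : ℕ → ℝ) (k T Z : ℕ) (hJ : J ⊆ Icc 1 T) (ha0 : ∀ n ∈ J, 0 ≤ a n) (ha1 : ∀ n ∈ J, a n ≤ 1)
    (P B : Finset ℕ) (hB : ∀ p ∈ B, p.Prime ∧ p ≠ 2 ∧ p ≤ Z) (V : ℝ) (hV : 0 ≤ V)
    (hBV : ∀ p ∈ B, V ≤ |∑ n ∈ J, a n * ch p n|) :
    (V ^ k * B.card) ^ 2 ≤ Ex P (fun A => (∑ n ∈ Icc 1 T, rs A n) ^ (2 * k)) * ((T:ℝ)^k * B.card + (Z:ℝ)^2 * (B.card:ℝ)^2) := by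
  have hexs : ∀ p : ℕ, ∃ s : ℝ, |s| ≤ 1 ∧ s * (∑ n ∈ J, a n * ch p n)^k = |∑ n ∈ J, a n * ch p n|^k := by
    intro p
    rcases le_total 0 ((∑ n ∈ J, a n * ch p n)^k) with h | h
    · exact ⟨1, by simp, by rw [one_mul, ← abs_pow, abs_of_nonneg h]⟩
    · exact ⟨-1, by simp, by rw [← abs_pow, abs_of_nonpos h]; ring⟩
  choose s hs1 hs2 using hexs
  have e1 : ∀ p, (∑ n ∈ J, a n * ch p n)^k = ∑ m ∈ Icc 1 (T ^ k), cco J a k m * ch p m := by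
    intro p
    rw [← cco_sum J a k T hJ, Finset.sum_pow']
    refine Finset.sum_congr rfl fun v hv => ?_
    rw [Finset.prod_mul_distrib]
    congr 1
    have : ∀ s : Finset (Fin k), ∏ i ∈ s, ch p (v i) = ch p (∏ i ∈ s, v i) := by
      intro s
      induction s using Finset.induction_on with
      | empty => simp [ch_one]
      | insert i s hi ih => rw [Finset.prod_insert hi, Finset.prod_insert hi, ch_mul, ih]
    exact this univ
  have h1 : V ^ k * B.card ≤ ∑ m ∈ Icc 1 (T ^ k), cco J a k m * ∑ p ∈ B, s p * ch p m := by
    calc V ^ k * B.card = ∑ p ∈ B, V ^ k := by rw [Finset.sum_const, nsmul_eq_mul, mul_comm]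
      _ ≤ ∑ p ∈ B, s p * (∑ n ∈ J, a n * ch p n)^k := Finset.sum_le_sum fun p hp => by
          rw [hs2]; exact pow_le_pow_left₀ hV (hBV p hp) k
      _ = ∑ p ∈ B, ∑ m ∈ Icc 1 (T ^ k), s p * (cco J a k m * ch p m) := by
          refine Finset.sum_congr rfl fun p _ => ?_
          rw [e1, Finset.mul_sum]
      _ = _ := by
          rw [Finset.sum_comm]
          refine Finset.sum_congr rfl fun m _ => ?_
          rw [Finset.mul_sum]
          exact Finset.sum_congr rfl fun p _ => by ring
  have h2 : (V ^ k * B.card)^2 ≤ (∑ m ∈ Icc 1 (T ^ k), (cco J a k m)^2) * ∑ m ∈ Icc 1 (T ^ k), (∑ p ∈ B, s p * ch p m)^2 :=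
    (pow_le_pow_left₀ (by positivity) h1 2).trans (Finset.sum_mul_sq_le_sq_mul_sq _ _ _)
  have h3 := cco_sq J a k T hJ ha0 ha1 P
  have h4 : ∑ m ∈ Icc 1 (T ^ k), (∑ p ∈ B, s p * ch p m)^2 ≤ (T:ℝ)^k * B.card + (Z:ℝ)^2 * (B.card:ℝ)^2 := by
    have e2 : ∑ m ∈ Icc 1 (T ^ k), (∑ p ∈ B, s p * ch p m)^2 = ∑ p ∈ B, ∑ q ∈ B, s p * s q * ∑ m ∈ Icc 1 (T ^ k), ch p m * ch q m := by
      have e3 : ∀ m ∈ Icc 1 (T ^ k), (∑ p ∈ B, s p * ch p m)^2 = ∑ p ∈ B, ∑ q ∈ B, (s p * ch p m) * (s q * ch q m) := by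
        intro m _; rw [sq, Finset.sum_mul_sum]
      rw [Finset.sum_congr rfl e3, Finset.sum_comm]
      refine Finset.sum_congr rfl fun p _ => ?_
      rw [Finset.sum_comm]
      simp only [Finset.mul_sum]
      refine Finset.sum_congr rfl fun q _ => Finset.sum_congr rfl fun m _ => by ring
    rw [e2]
    have h5 : ∀ p ∈ B, ∀ q ∈ B, s p * s q * ∑ m ∈ Icc 1 (T ^ k), ch p m * ch q m ≤ (if p = q then (T:ℝ)^k else 0) + (Z:ℝ)^2 := by
      intro p hp q hq
      obtain ⟨p1, p2, p3⟩ := hB p hp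
      obtain ⟨q1, q2, q3⟩ := hB q hq
      have hss : |s p * s q| ≤ 1 := by rw [abs_mul]; exact mul_le_one₀ (hs1 p) (abs_nonneg _) (hs1 q)
      have h6 : s p * s q * ∑ m ∈ Icc 1 (T ^ k), ch p m * ch q m ≤ |∑ m ∈ Icc 1 (T ^ k), ch p m * ch q m| := by
        refine (le_abs_self _).trans ?_
        rw [abs_mul]; exact mul_le_of_le_one_left (abs_nonneg _) hss
      refine h6.trans ?_
      split_ifs with hpq
      · have : |∑ m ∈ Icc 1 (T ^ k), ch p m * ch q m| ≤ (T:ℝ)^k := by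
          refine (Finset.abs_sum_le_sum_abs _ _).trans ?_
          calc _ ≤ ∑ m ∈ Icc 1 (T ^ k), (1:ℝ) := Finset.sum_le_sum fun m _ => by
                rw [abs_mul]; exact mul_le_one₀ (ch_abs p m) (abs_nonneg _) (ch_abs q m)
            _ = _ := by simp
        have : (0:ℝ) ≤ (Z:ℝ)^2 := by positivity
        linarith
      · rw [zero_add]
        refine (ch_sum2 p q _ p1 p2 q1 hpq).trans ?_
        have : p * q ≤ Z ^ 2 := by rw [sq]; exact Nat.mul_le_mul p3 q3
        exact_mod_cast this
    refine (Finset.sum_le_sum fun p hp => Finset.sum_le_sum fun q hq => h5 p hp q hq).trans ?_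
    simp only [Finset.sum_add_distrib, Finset.sum_const, nsmul_eq_mul, Finset.sum_ite_eq, Finset.sum_ite_mem, Finset.inter_self]
    apply le_of_eq; ring
  calc _ ≤ _ := h2
    _ ≤ _ := mul_le_mul h3 h4 (Finset.sum_nonneg fun _ _ => sq_nonneg _) ((Finset.sum_nonneg fun _ _ => sq_nonneg _).trans h3)


lemma pow78 (C : ℝ) : ∀ᶠ L : ℝ in Filter.atTop, C * L ^ ((7:ℝ)/8) ≤ 0.005 * L := by
  have h := tendsto_rpow_atTop (show (0:ℝ) < 1/8 by norm_num)
  filter_upwards [h.eventually_ge_atTop (C / 0.005), Filter.eventually_gt_atTop 0] with L hL h0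
  have e : L = L ^ ((1:ℝ)/8) * L ^ ((7:ℝ)/8) := by
    rw [← Real.rpow_add h0]; norm_num
  have hp : 0 < L ^ ((7:ℝ)/8) := by positivity
  rw [div_le_iff₀ (by norm_num)] at hL
  calc C * L ^ ((7:ℝ)/8) ≤ (L ^ ((1:ℝ)/8) * 0.005) * L ^ ((7:ℝ)/8) := by gcongr
    _ = 0.005 * (L ^ ((1:ℝ)/8) * L ^ ((7:ℝ)/8)) := by ring
    _ = 0.005 * L := by rw [← e]

lemma errII (C : ℝ) (hC : 0 < C) : ∀ᶠ L : ℝ in Filter.atTop, ∀ k : ℝ, 0 ≤ k → k ≤ 600 * Real.sqrt L →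
    C * k ^ ((7:ℝ)/4) + 10 * k * Real.log L ≤ 0.005 * L := by
  filter_upwards [pow78 (C * 600 ^ ((7:ℝ)/4) + 6000 * (1 / (3/8))), Filter.eventually_ge_atTop 1] with L hL h1 k hk0 hk
  have h0 : 0 < L := by linarith
  have hs : Real.sqrt L = L ^ ((1:ℝ)/2) := Real.sqrt_eq_rpow L
  have a1 : k ^ ((7:ℝ)/4) ≤ 600 ^ ((7:ℝ)/4) * L ^ ((7:ℝ)/8) := by
    calc k ^ ((7:ℝ)/4) ≤ (600 * Real.sqrt L) ^ ((7:ℝ)/4) := Real.rpow_le_rpow hk0 hk (by norm_num)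
      _ = _ := by
        rw [Real.mul_rpow (by norm_num) (Real.sqrt_nonneg _), hs, ← Real.rpow_mul h0.le]; norm_num
  have a2 : Real.log L ≤ L ^ ((3:ℝ)/8) / (3/8) := Real.log_le_rpow_div h0.le (by norm_num)
  have hl0 : 0 ≤ Real.log L := Real.log_nonneg h1
  have e : L ^ ((1:ℝ)/2) * L ^ ((3:ℝ)/8) = L ^ ((7:ℝ)/8) := by rw [← Real.rpow_add h0]; norm_num
  have a3 : 10 * k * Real.log L ≤ 6000 * (1 / (3/8)) * L ^ ((7:ℝ)/8) := by
    calc 10 * k * Real.log L ≤ 10 * (600 * Real.sqrt L) * (L ^ ((3:ℝ)/8) / (3/8)) := by gcongr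
      _ = 6000 * (1 / (3/8)) * (L ^ ((1:ℝ)/2) * L ^ ((3:ℝ)/8)) := by rw [hs]; ring
      _ = _ := by rw [e]
  have a4 : C * k ^ ((7:ℝ)/4) ≤ C * (600 ^ ((7:ℝ)/4) * L ^ ((7:ℝ)/8)) := by gcongr
  calc _ ≤ C * (600 ^ ((7:ℝ)/4) * L ^ ((7:ℝ)/8)) + 6000 * (1 / (3/8)) * L ^ ((7:ℝ)/8) := add_le_add a4 a3
    _ = (C * 600 ^ ((7:ℝ)/4) + 6000 * (1 / (3/8))) * L ^ ((7:ℝ)/8) := by ring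
    _ ≤ _ := hL

set_option maxHeartbeats 1000000 in
lemma blockII : ∀ᶠ x : ℝ in Filter.atTop, ∀ A T : ℕ, 1 ≤ A → T ≤ 2 * A → Real.sqrt (Real.log x) / 200 ≤ Real.log T →
    Real.log T ≤ 2.1 * Real.log x →
    (((primesIn x).filter fun p => (Real.log x)⁻¹ ^ 4 ≤ |∑ n ∈ Ioc A T, ch p n / n|).card : ℝ) ≤ Real.exp (0.97 * Real.log x) := by
  obtain ⟨C, hC, hnorm⟩ := normII
  filter_upwards [Real.tendsto_log_atTop.eventually (errII C hC), Real.tendsto_log_atTop.eventually_ge_atTop 1000000, Filter.eventually_ge_atTop 2]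
    with x herr hL hx A T hA hT hT1 hT2
  set L := Real.log x with hLdef
  set l := Real.log T with hl
  have hL0 : 0 < L := by linarith
  have hs : Real.sqrt L * Real.sqrt L = L := Real.mul_self_sqrt hL0.le
  have hs1 : 1000 ≤ Real.sqrt L := Real.le_sqrt_of_sq_le (by linarith)
  have hl0 : 0 < l := by linarith
  have hTpos : (0:ℝ) < T := by
    rcases Nat.eq_zero_or_pos T with h | h
    · rw [hl, h] at hl0; simp at hl0
    · exact_mod_cast h
  have hTexp : (T:ℝ) = Real.exp l := (Real.exp_log hTpos).symm
  set k := ⌈2.6 * L / l⌉₊ with hk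
  have hkl1 : 2.6 * L ≤ k * l := by
    have := Nat.le_ceil (2.6 * L / l); rwa [div_le_iff₀ hl0] at this
  have hk2 : (k:ℝ) < 2.6 * L / l + 1 := Nat.ceil_lt_add_one (by positivity)
  have hkl2 : k * l ≤ 4.7 * L := by
    have : k * l ≤ (2.6 * L / l + 1) * l := by gcongr
    rw [add_mul, div_mul_cancel₀ _ hl0.ne'] at this
    linarith
  have hk1 : 1 ≤ k := Nat.one_le_iff_ne_zero.2 (by
    intro h; rw [h] at hkl1; simp at hkl1; linarith)
  have hk600 : (k:ℝ) ≤ 600 * Real.sqrt L := by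
    have : 2.6 * L / l ≤ 520 * Real.sqrt L := by
      rw [div_le_iff₀ hl0]; nlinarith
    linarith
  have he := herr k (by positivity) hk600
  set lL := Real.log L with hlL
  have hlL0 : 0 ≤ lL := Real.log_nonneg (by linarith)
  set B := (primesIn x).filter fun p => L⁻¹ ^ 4 ≤ |∑ n ∈ Ioc A T, ch p n / n| with hB
  have hApos : (0:ℝ) < A := by exact_mod_cast hA
  set V := (A:ℝ) * L⁻¹ ^ 4 with hV
  have hV0 : 0 < V := by positivity
  have hZ : (⌊2 * x⌋₊ : ℝ) ≤ 2 * x := Nat.floor_le (by linarith)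
  have hLS := large_sieve (Ioc A T) (fun n => (A:ℝ) / n) k T ⌊2 * x⌋₊ (by
      intro n hn; rw [mem_Ioc] at hn; rw [mem_Icc]; omega)
    (fun n _ => by positivity)
    (fun n hn => by
      rw [mem_Ioc] at hn
      have : (A:ℝ) < n := by exact_mod_cast hn.1
      rw [div_le_one (by linarith)]; exact this.le)
    (PP 0 T) B (by
      intro p hp
      have h1 := (Finset.mem_filter.1 (Finset.mem_filter.1 hp).1).2
      refine ⟨h1.1, ?_, Nat.le_floor h1.2.2⟩
      rintro rfl
      have := h1.2.1; push_cast at this; linarith)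
    V hV0.le (by
      intro p hp
      have h1 := (Finset.mem_filter.1 hp).2
      have e : ∑ n ∈ Ioc A T, (A:ℝ) / n * ch p n = A * ∑ n ∈ Ioc A T, ch p n / n := by
        rw [Finset.mul_sum]; exact Finset.sum_congr rfl fun n _ => by ring
      rw [e, abs_mul, abs_of_pos hApos]
      exact mul_le_mul_of_nonneg_left h1 hApos.le)
  set E := Ex (PP 0 T) (fun A => (∑ n ∈ Icc 1 T, rs A n) ^ (2 * k)) with hE
  have hE0 : 0 ≤ E := Ex_nonneg fun A _ => by rw [pow_mul]; positivity
  have hE1 : E ≤ Real.exp (1.2 * (k * l) + C * (k:ℝ)^((7:ℝ)/4)) := by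
    refine (hnorm T k hk1).trans (le_of_eq ?_)
    rw [Real.exp_add]
    congr 1
    rw [hTexp, ← Real.exp_mul]
    congr 1; ring
  -- lower bound for V
  have hVl : Real.exp (l - 5 * lL) ≤ V := by
    rw [Real.exp_sub, ← hTexp]
    have e : Real.exp (5 * lL) = L ^ 5 := by
      rw [show (5:ℝ) * lL = ((5:ℕ):ℝ) * lL by norm_num, Real.exp_nat_mul, Real.exp_log hL0]
    rw [e, hV, div_le_iff₀ (by positivity)]
    have : (A:ℝ) * L⁻¹ ^ 4 * L ^ 5 = A * L := by field_simp
    rw [this]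
    have hT' : (T:ℝ) ≤ 2 * A := by exact_mod_cast hT
    nlinarith
  have hVk : Real.exp (2 * (k * l) - 10 * k * lL) ≤ (V ^ k)^2 := by
    have : Real.exp (2 * (k * l) - 10 * k * lL) = (Real.exp (l - 5 * lL) ^ k)^2 := by
      rw [← Real.exp_nat_mul, ← Real.exp_nat_mul]; congr 1; push_cast; ring
    rw [this]
    exact pow_le_pow_left₀ (by positivity) (pow_le_pow_left₀ (Real.exp_pos _).le hVl k) 2
  have hVpos : 0 < (V^k)^2 := by positivity
  have r1 : E * Real.exp (2.075 * L) ≤ (V^k)^2 := by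
    refine le_trans ?_ hVk
    calc E * Real.exp (2.075 * L) ≤ Real.exp (1.2 * (k * l) + C * (k:ℝ)^((7:ℝ)/4)) * Real.exp (2.075 * L) := by gcongr
      _ = Real.exp (1.2 * (k * l) + C * (k:ℝ)^((7:ℝ)/4) + 2.075 * L) := (Real.exp_add _ _).symm
      _ ≤ _ := Real.exp_le_exp.2 (by linarith)
  have r2 : E * (T:ℝ)^k ≤ Real.exp (0.945 * L) * (V^k)^2 := by
    calc E * (T:ℝ)^k ≤ Real.exp (1.2 * (k * l) + C * (k:ℝ)^((7:ℝ)/4)) * (T:ℝ)^k := by gcongr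
      _ = Real.exp (1.2 * (k * l) + C * (k:ℝ)^((7:ℝ)/4) + k * l) := by
          rw [Real.exp_add _ (k * l), hTexp, ← Real.exp_nat_mul]
      _ ≤ Real.exp (0.945 * L + (2 * (k * l) - 10 * k * lL)) := Real.exp_le_exp.2 (by linarith)
      _ = Real.exp (0.945 * L) * Real.exp (2 * (k * l) - 10 * k * lL) := Real.exp_add _ _
      _ ≤ _ := by gcongr
  have hx0 : 0 < x := by linarith
  have hxe : x = Real.exp L := (Real.exp_log hx0).symm
  have h8 : 8 * x^2 ≤ Real.exp (2.075 * L) := by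
    have e1 : x ^ 2 = Real.exp (2 * L) := by
      conv_lhs => rw [hxe]
      rw [← Real.exp_nat_mul]; norm_num
    have e2 : Real.exp (2.075 * L) = Real.exp (0.075 * L) * Real.exp (2 * L) := by rw [← Real.exp_add]; congr 1; ring
    rw [e1, e2]
    gcongr
    have := Real.add_one_le_exp (0.075 * L)
    linarith
  have r3 : 2 * (E * (⌊2 * x⌋₊ : ℝ)^2) ≤ (V^k)^2 := by
    have : (⌊2 * x⌋₊ : ℝ)^2 ≤ (2*x)^2 := pow_le_pow_left₀ (by positivity) hZ 2
    calc 2 * (E * (⌊2 * x⌋₊ : ℝ)^2) ≤ 2 * (E * (2*x)^2) := by gcongr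
      _ = E * (8 * x^2) := by ring
      _ ≤ E * Real.exp (2.075 * L) := by gcongr
      _ ≤ _ := r1
  have hexp2 : 2 * Real.exp (0.945 * L) ≤ Real.exp (0.97 * L) := by
    have e2 : Real.exp (0.97 * L) = Real.exp (0.025 * L) * Real.exp (0.945 * L) := by rw [← Real.exp_add]; congr 1; ring
    rw [e2]
    gcongr
    have := Real.add_one_le_exp (0.025 * L)
    linarith
  set b := (B.card : ℝ) with hb
  have hb0 : 0 ≤ b := Nat.cast_nonneg _
  set W := (V^k)^2 with hW
  set zz := (⌊2 * x⌋₊ : ℝ)^2 with hzz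
  have f1 : W * b^2 ≤ E * (T:ℝ)^k * b + E * zz * b^2 := by
    have : (V ^ k * b) ^ 2 = W * b^2 := by rw [hW]; ring
    rw [this] at hLS; linarith
  have f2 : W * b^2 ≤ 2 * (E * (T:ℝ)^k) * b := by
    have : 2 * (E * zz) * b^2 ≤ W * b^2 := mul_le_mul_of_nonneg_right r3 (sq_nonneg b)
    linarith
  have f3 : W * b^2 ≤ W * (2 * Real.exp (0.945 * L)) * b := by
    refine f2.trans ?_
    have := mul_le_mul_of_nonneg_right r2 hb0
    linarith
  rcases hb0.eq_or_lt with h | h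
  · rw [← h]; exact (Real.exp_pos _).le
  · have : b ≤ 2 * Real.exp (0.945 * L) := by
      have h' : (W * b) * b ≤ (W * b) * (2 * Real.exp (0.945 * L)) := by linarith [f3]
      exact le_of_mul_le_mul_left h' (mul_pos hVpos h)
    linarith


/-- logarithmic partial sum -/
noncomputable def SS (p t : ℕ) : ℝ := ∑ n ∈ Icc 1 t, ch p n / n

lemma SS_split (p A Y : ℕ) (h : A ≤ Y) : SS p Y = SS p A + ∑ n ∈ Ioc A Y, ch p n / n := by
  unfold SS
  have e : Icc 1 Y = Icc 1 A ∪ Ioc A Y := by ext x; simp only [mem_Icc, mem_union, mem_Ioc]; omega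
  rw [e, Finset.sum_union]
  rw [Finset.disjoint_left]; intro x; simp only [mem_Icc, mem_Ioc]; omega

lemma SS_piece (p A Y : ℕ) (hA : 1 ≤ A) (h : A ≤ Y) : |∑ n ∈ Ioc A Y, ch p n / n| ≤ ((Y:ℝ) - A) / A := by
  have hA' : (0:ℝ) < A := by exact_mod_cast hA
  refine (Finset.abs_sum_le_sum_abs _ _).trans ?_
  calc _ ≤ ∑ n ∈ Ioc A Y, 1 / (A:ℝ) := Finset.sum_le_sum fun n hn => by
        rw [mem_Ioc] at hn
        have : (A:ℝ) ≤ n := by exact_mod_cast hn.1.le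
        rw [abs_div, Nat.abs_cast]
        exact div_le_div₀ (by norm_num) (ch_abs p n) hA' this
    _ = _ := by
        rw [Finset.sum_const, nsmul_eq_mul, Nat.card_Ioc, Nat.cast_sub h]; ring

lemma SS_tail (p R Y : ℕ) (hp : p.Prime) (h2 : p ≠ 2) (h : R ≤ Y) :
    |∑ n ∈ Ioc R Y, ch p n / n| ≤ 2 * p / (R + 1) := by
  have hD : ∀ Y, R ≤ Y → |∑ n ∈ Ioc R Y, ch p n| ≤ 2 * p := by
    intro Y hY
    have e : ∑ n ∈ Ioc R Y, ch p n = ∑ n ∈ Icc 1 Y, ch p n - ∑ n ∈ Icc 1 R, ch p n := by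
      have e : Icc 1 Y = Icc 1 R ∪ Ioc R Y := by ext x; simp only [mem_Icc, mem_union, mem_Ioc]; omega
      rw [e, Finset.sum_union]
      · ring
      · rw [Finset.disjoint_left]; intro x; simp only [mem_Icc, mem_Ioc]; omega
    rw [e]
    have h1 := abs_le.1 (ch_sum p Y hp h2)
    have h3 := abs_le.1 (ch_sum p R hp h2)
    rw [abs_le]; constructor <;> linarith [h1.1, h1.2, h3.1, h3.2]
  have key : |∑ n ∈ Ioc R Y, ch p n / n - (∑ n ∈ Ioc R Y, ch p n) / (Y + 1)| ≤ 2 * p * (1 / ((R:ℝ)+1) - 1 / ((Y:ℝ)+1)) := by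
    induction Y, h using Nat.le_induction with
    | base => simp
    | succ Y hY ih =>
      have e : Ioc R (Y+1) = insert (Y+1) (Ioc R Y) := by ext x; simp only [mem_Ioc, mem_insert]; omega
      have hd := hD (Y+1) (by omega)
      have hS : ∑ n ∈ Ioc R (Y+1), ch p n / n = ch p (Y+1) / ((Y+1 : ℕ):ℝ) + ∑ n ∈ Ioc R Y, ch p n / n := by
        rw [e, Finset.sum_insert (by simp)]
      have hS' : ∑ n ∈ Ioc R (Y+1), ch p n = ch p (Y+1) + ∑ n ∈ Ioc R Y, ch p n := by
        rw [e, Finset.sum_insert (by simp)]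
      set a := ∑ n ∈ Ioc R (Y+1), ch p n / n
      set d := ∑ n ∈ Ioc R (Y+1), ch p n
      set a0 := ∑ n ∈ Ioc R Y, ch p n / n
      set d0 := ∑ n ∈ Ioc R Y, ch p n
      have hc : ch p (Y+1) = d - d0 := by linarith
      push_cast at hS ⊢
      rw [hS, hc]
      have hY0 : (0:ℝ) < (Y:ℝ) + 1 := by positivity
      have hY1 : (0:ℝ) < (Y:ℝ) + 1 + 1 := by positivity
      have e2 : (d - d0) / ((Y:ℝ)+1) + a0 - d / ((Y:ℝ) + 1 + 1) = (a0 - d0 / ((Y:ℝ)+1)) + d * (1 / ((Y:ℝ)+1) - 1 / ((Y:ℝ)+1+1)) := by ring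
      have hpos : 0 ≤ 1 / ((Y:ℝ)+1) - 1 / ((Y:ℝ)+1+1) := sub_nonneg.2 (one_div_le_one_div_of_le hY0 (by linarith))
      rw [e2]
      refine (abs_add_le _ _).trans ?_
      rw [abs_mul, abs_of_nonneg hpos]
      have := mul_le_mul_of_nonneg_right hd hpos
      linarith
  have hY0 : (0:ℝ) < (Y:ℝ) + 1 := by positivity
  have h3 : |(∑ n ∈ Ioc R Y, ch p n) / ((Y:ℝ) + 1)| ≤ 2 * p * (1 / ((Y:ℝ)+1)) := by
    rw [abs_div, abs_of_pos hY0, mul_one_div]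
    gcongr
    exact hD Y h
  have h4 := abs_le.1 key
  have h5 := abs_le.1 h3
  have e : 2 * (p:ℝ) / (R + 1) = 2 * p * (1 / ((R:ℝ)+1)) := by ring
  rw [e, abs_le]
  constructor <;> linarith [h4.1, h4.2, h5.1, h5.2]

/-- grid points -/
noncomputable def tg (L : ℝ) (j : ℕ) : ℕ := ⌊Real.exp (j / L)⌋₊

lemma grid_induct (p : ℕ) (L s0 : ℝ) (J0 J1 : ℕ) (hL : 0 < L) (hs : s0 ≤ SS p (tg L J0)) (h1 : 1 ≤ tg L J0)
    (hgood : ∀ j, J0 ≤ j → j < J1 → |∑ n ∈ Ioc (tg L j) (tg L (j+1)), ch p n / n| ≤ L⁻¹ ^ 4)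
    (hpiece : ∀ j, J0 ≤ j → j < J1 → ((tg L (j+1) : ℝ) - tg L j) / tg L j ≤ 4 / L) :
    ∀ j, J0 ≤ j → j ≤ J1 → s0 - ((j:ℝ) - J0) * L⁻¹^4 ≤ SS p (tg L j) ∧
      ∀ Y, tg L J0 ≤ Y → Y ≤ tg L j → s0 - ((j:ℝ) - J0) * L⁻¹^4 - 4 / L ≤ SS p Y := by
  have hmono : ∀ i j : ℕ, i ≤ j → tg L i ≤ tg L j := by
    intro i j hij
    apply Nat.floor_mono
    apply Real.exp_le_exp.2
    have : (i:ℝ) ≤ j := by exact_mod_cast hij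
    gcongr
  have h4L : 0 < 4 / L := by positivity
  have hq : 0 ≤ L⁻¹^4 := by positivity
  intro j hj
  induction j, hj using Nat.le_induction with
  | base =>
    intro _
    simp only [sub_self, zero_mul, sub_zero]
    refine ⟨hs, fun Y h2 h3 => ?_⟩
    have : Y = tg L J0 := le_antisymm h3 h2
    rw [this]; linarith
  | succ j hj ih =>
    intro hj1
    obtain ⟨ih1, ih2⟩ := ih (by omega)
    have hm := hmono j (j+1) (by omega)
    have hg := abs_le.1 (hgood j hj (by omega))
    have e1 : (((j+1:ℕ):ℝ) - J0) * L⁻¹^4 = ((j:ℝ) - J0) * L⁻¹^4 + L⁻¹^4 := by push_cast; ring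
    rw [e1]
    constructor
    · rw [SS_split p _ _ hm]; linarith [hg.1]
    · intro Y hY1 hY2
      rcases le_total Y (tg L j) with h | h
      · have := ih2 Y hY1 h; linarith
      · rw [SS_split p _ _ h]
        have h5 : 1 ≤ tg L j := h1.trans (hmono _ _ hj)
        have h6 := SS_piece p (tg L j) Y h5 h
        have h7 : ((Y:ℝ) - tg L j) / tg L j ≤ 4 / L := by
          refine le_trans ?_ (hpiece j hj (by omega))
          have : (Y:ℝ) ≤ tg L (j+1) := by exact_mod_cast hY2
          gcongr
        have h8 := abs_le.1 (h6.trans h7)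
        linarith [h8.1]

set_option maxHeartbeats 1000000 in
lemma regimeII : ∀ᶠ x : ℝ in Filter.atTop, ∃ t0 : ℕ, 4 ≤ t0 ∧ Real.sqrt (Real.log x) / 200 ≤ Real.log t0 ∧ Real.log t0 ≤ Real.sqrt (Real.log x) / 50 ∧
    (((primesIn x).filter fun p => 1 / (8 * Real.log t0) ≤ SS p t0 ∧ ∃ Y : ℕ, t0 ≤ Y ∧ SS p Y ≤ 0).card : ℝ) ≤ Real.exp (0.98 * Real.log x) := by
  have hev : ∀ᶠ L : ℝ in Filter.atTop, L + 4 ≤ Real.exp (Real.sqrt L / 100) := by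
    have h1 : Filter.Tendsto (fun L : ℝ => Real.sqrt L / 100) Filter.atTop Filter.atTop :=
      Filter.Tendsto.atTop_div_const (by norm_num) Real.tendsto_sqrt_atTop
    have h2 := (Real.tendsto_exp_div_pow_atTop 3).comp h1
    filter_upwards [h2.eventually_ge_atTop 10000, h1.eventually_ge_atTop 2, Filter.eventually_ge_atTop 0] with L a b c
    simp only [Function.comp] at a
    set u := Real.sqrt L / 100 with hu
    have : L = 10000 * u^2 := by rw [hu, div_pow, Real.sq_sqrt c]; ring
    rw [le_div_iff₀ (by positivity)] at a
    rw [this]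
    nlinarith [sq_nonneg u]
  have hev2 : ∀ᶠ L : ℝ in Filter.atTop, 3 * L^2 ≤ Real.exp (0.01 * L) := by
    have h1 : Filter.Tendsto (fun L : ℝ => 0.01 * L) Filter.atTop Filter.atTop :=
      Filter.Tendsto.const_mul_atTop (by norm_num) Filter.tendsto_id
    have h2 := (Real.tendsto_exp_div_pow_atTop 2).comp h1
    filter_upwards [h2.eventually_ge_atTop 30000, Filter.eventually_gt_atTop 0] with L a b
    simp only [Function.comp] at a
    rw [le_div_iff₀ (by positivity)] at a
    nlinarith
  filter_upwards [blockII, Real.tendsto_log_atTop.eventually hev, Real.tendsto_log_atTop.eventually hev2, Real.tendsto_log_atTop.eventually_ge_atTop 1000000, Filter.eventually_ge_atTop 2]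
    with x hblock hexp hcard hL hx
  set L := Real.log x with hLdef
  have hL0 : 0 < L := by linarith
  have hs : Real.sqrt L * Real.sqrt L = L := Real.mul_self_sqrt hL0.le
  have hs1 : 1000 ≤ Real.sqrt L := Real.le_sqrt_of_sq_le (by linarith)
  set J0 := ⌈L * Real.sqrt L / 100⌉₊ with hJ0
  set J1 := ⌈2.05 * L^2⌉₊ with hJ1
  have hJ0a : L * Real.sqrt L / 100 ≤ J0 := Nat.le_ceil _
  have hJ0b : (J0:ℝ) < L * Real.sqrt L / 100 + 1 := Nat.ceil_lt_add_one (by positivity)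
  have hJ1a : 2.05 * L^2 ≤ J1 := Nat.le_ceil _
  have hJ1b : (J1:ℝ) < 2.05 * L^2 + 1 := Nat.ceil_lt_add_one (by positivity)
  have hJ01 : J0 ≤ J1 := by
    have : (J0:ℝ) ≤ J1 := by nlinarith
    exact_mod_cast this
  -- facts about exp (j/L)
  have hej : ∀ j : ℕ, J0 ≤ j → L + 4 ≤ Real.exp ((j:ℝ) / L) := by
    intro j hj
    refine hexp.trans (Real.exp_le_exp.2 ?_)
    rw [le_div_iff₀ hL0]
    have : (J0:ℝ) ≤ j := by exact_mod_cast hj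
    linarith
  have htg1 : ∀ j : ℕ, (tg L j : ℝ) ≤ Real.exp ((j:ℝ)/L) := fun j => Nat.floor_le (Real.exp_pos _).le
  have htg2 : ∀ j : ℕ, Real.exp ((j:ℝ)/L) < (tg L j : ℝ) + 1 := fun j => Nat.lt_floor_add_one _
  have hstep : ∀ j : ℕ, Real.exp (((j+1:ℕ):ℝ)/L) ≤ Real.exp ((j:ℝ)/L) * (1 + 2 / L) := by
    intro j
    have e : ((j+1:ℕ):ℝ)/L = (j:ℝ)/L + 1/L := by push_cast; ring
    rw [e, Real.exp_add]
    refine mul_le_mul_of_nonneg_left ?_ (Real.exp_pos _).le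
    have h1 : |1 / L| ≤ 1 := by rw [abs_of_pos (by positivity), div_le_one hL0]; linarith
    have := Real.abs_exp_sub_one_le h1
    rw [abs_of_pos (a := 1/L) (by positivity)] at this
    have := (abs_le.1 this).2
    have e2 : 2 / L = 2 * (1 / L) := by ring
    linarith
  have h2L : 2 / L ≤ 0.1 := by rw [div_le_iff₀ hL0]; linarith
  refine ⟨tg L J0, ?_, ?_, ?_, ?_⟩
  · have h1 := hej J0 le_rfl
    have h2 := htg2 J0
    have : (3:ℝ) < tg L J0 := by linarith
    have : 3 < tg L J0 := by exact_mod_cast this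
    omega
  · have h1 := hej J0 le_rfl
    have h2 := htg2 J0
    have h3 : Real.exp ((J0:ℝ)/L) / 2 ≤ tg L J0 := by linarith
    have h4 := Real.log_le_log (by positivity) h3
    rw [Real.log_div (Real.exp_pos _).ne' (by norm_num), Real.log_exp] at h4
    have h5 : Real.sqrt L / 100 ≤ (J0:ℝ) / L := by rw [le_div_iff₀ hL0]; linarith
    have := Real.log_two_lt_d9
    linarith
  · have h1 := hej J0 le_rfl
    have h2 := htg2 J0
    have h4 := Real.log_le_log (by linarith) (htg1 J0)
    rw [Real.log_exp] at h4
    refine h4.trans ?_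
    rw [div_le_iff₀ hL0]
    nlinarith
  · have ht0log : 0 < Real.log (tg L J0) ∧ Real.log (tg L J0) ≤ Real.sqrt L / 50 := by
      have h1 := hej J0 le_rfl
      have h2 := htg2 J0
      have h4 := Real.log_le_log (by linarith) (htg1 J0)
      rw [Real.log_exp] at h4
      refine ⟨Real.log_pos (by linarith), h4.trans ?_⟩
      rw [div_le_iff₀ hL0]
      nlinarith
    have hsub : ((primesIn x).filter fun p => 1 / (8 * Real.log (tg L J0)) ≤ SS p (tg L J0) ∧ ∃ Y : ℕ, tg L J0 ≤ Y ∧ SS p Y ≤ 0) ⊆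
        (Ico J0 J1).biUnion (fun j => (primesIn x).filter fun p => L⁻¹ ^ 4 ≤ |∑ n ∈ Ioc (tg L j) (tg L (j+1)), ch p n / n|) := by
      intro p hp
      rw [Finset.mem_filter] at hp
      obtain ⟨hp1, hp2, Y, hY1, hY2⟩ := hp
      by_contra hcon
      simp only [Finset.mem_biUnion, Finset.mem_filter, mem_Ico, not_exists, not_and, not_le] at hcon
      have hP := (Finset.mem_filter.1 hp1).2
      have hp2' : p ≠ 2 := by
        rintro rfl
        have := hP.2.1; push_cast at this; linarith
      have hgood : ∀ j, J0 ≤ j → j < J1 → |∑ n ∈ Ioc (tg L j) (tg L (j+1)), ch p n / n| ≤ L⁻¹ ^ 4 :=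
        fun j h1 h2 => (hcon j ⟨h1, h2⟩ hp1).le
      have hpiece : ∀ j, J0 ≤ j → j < J1 → ((tg L (j+1) : ℝ) - tg L j) / tg L j ≤ 4 / L := by
        intro j h1 h2
        have a1 := hej j h1
        have a2 := htg2 j
        have a3 := htg1 (j+1)
        have a4 := hstep j
        set e := Real.exp ((j:ℝ)/L)
        have hpos : (0:ℝ) < tg L j := by linarith
        rw [div_le_div_iff₀ hpos hL0]
        have a5 : e * (1 + 2 / L) * L = e * L + 2 * e := by field_simp
        have a6 : (tg L (j+1) : ℝ) * L ≤ e * L + 2 * e := by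
          rw [← a5]; exact mul_le_mul_of_nonneg_right (a3.trans a4) hL0.le
        have a7 : e * L ≤ (tg L j + 1) * L := mul_le_mul_of_nonneg_right a2.le hL0.le
        linarith
      have ht1 : 1 ≤ tg L J0 := by
        have h1 := hej J0 le_rfl
        have h2 := htg2 J0
        have : (1:ℝ) < tg L J0 := by linarith
        have : 1 < tg L J0 := by exact_mod_cast this
        omega
      have hind := grid_induct p L (1 / (8 * Real.log (tg L J0))) J0 J1 hL0 hp2 ht1 hgood hpiece J1 hJ01 le_rfl
      obtain ⟨i1, i2⟩ := hind
      have hs0 : 6 / Real.sqrt L ≤ 1 / (8 * Real.log (tg L J0)) := by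
        rw [div_le_div_iff₀ (by positivity) (by linarith [ht0log.1])]
        linarith [ht0log.2]
      have hJL : ((J1:ℝ) - J0) * L⁻¹^4 ≤ 3 / L := by
        have : ((J1:ℝ) - J0) ≤ 3 * L^3 := by
          have : (0:ℝ) ≤ J0 := by positivity
          nlinarith [sq_nonneg L]
        calc ((J1:ℝ) - J0) * L⁻¹^4 ≤ 3 * L^3 * L⁻¹^4 := by gcongr
          _ = 3 / L := by field_simp
      have hfin : 11 / L < 6 / Real.sqrt L := by
        rw [div_lt_div_iff₀ hL0 (by positivity)]; nlinarith
      have e11 : 11 / L = 3 / L + 4 / L + 4 / L := by ring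
      have h4L : 0 < 4 / L := by positivity
      rcases le_total Y (tg L J1) with h | h
      · have := i2 Y hY1 h
        linarith
      · rw [SS_split p _ _ h] at hY2
        have htail := SS_tail p (tg L J1) Y hP.1 hp2' h
        have hx0 : 0 < x := by linarith
        have hR : x^2 ≤ (tg L J1 : ℝ) + 1 := by
          refine le_trans ?_ (htg2 J1).le
          have e1 : x ^ 2 = Real.exp (2 * L) := by
            conv_lhs => rw [← Real.exp_log hx0]
            rw [← Real.exp_nat_mul]; norm_num; rfl
          rw [e1]
          apply Real.exp_le_exp.2
          rw [le_div_iff₀ hL0]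
          nlinarith
        have : 2 * (p:ℝ) / ((tg L J1 : ℝ) + 1) ≤ 4 / L := by
          calc 2 * (p:ℝ) / ((tg L J1 : ℝ) + 1) ≤ 2 * (2 * x) / x^2 := by
                gcongr; exact hP.2.2
            _ = 4 / x := by field_simp; norm_num
            _ ≤ 4 / L := by
                have := Real.log_le_self hx0.le
                gcongr
        have := (abs_le.1 (htail.trans this)).1
        linarith
    have hcb := Finset.card_le_card hsub
    have hcb2 := hcb.trans Finset.card_biUnion_le
    have hcb3 : (((primesIn x).filter fun p => 1 / (8 * Real.log (tg L J0)) ≤ SS p (tg L J0) ∧ ∃ Y : ℕ, tg L J0 ≤ Y ∧ SS p Y ≤ 0).card : ℝ) ≤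
        ∑ j ∈ Ico J0 J1, (((primesIn x).filter fun p => L⁻¹ ^ 4 ≤ |∑ n ∈ Ioc (tg L j) (tg L (j+1)), ch p n / n|).card : ℝ) := by
      exact_mod_cast hcb2
    refine hcb3.trans ?_
    calc _ ≤ ∑ j ∈ Ico J0 J1, Real.exp (0.97 * L) := by
          refine Finset.sum_le_sum fun j hj => ?_
          rw [mem_Ico] at hj
          have a1 := hej j hj.1
          have a1' := hej (j+1) (by omega)
          have a2 := htg2 j
          have a3 := htg1 (j+1)
          have a4 := hstep j
          have a8 := htg2 (j+1)
          have hjj : (J0:ℝ) ≤ j := by exact_mod_cast hj.1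
          have hjj1 : (j:ℝ) + 1 ≤ J1 := by exact_mod_cast hj.2
          apply hblock
          · have : (1:ℝ) ≤ tg L j := by linarith
            exact_mod_cast this
          · have : (tg L (j+1) : ℝ) ≤ 2 * tg L j := by
              have : Real.exp ((j:ℝ)/L) * (1 + 2/L) ≤ Real.exp ((j:ℝ)/L) * 1.1 := by gcongr; linarith
              linarith
            exact_mod_cast this
          · have h3 : Real.exp (((j+1:ℕ):ℝ)/L) / 2 ≤ tg L (j+1) := by linarith
            have h4 := Real.log_le_log (by positivity) h3
            rw [Real.log_div (Real.exp_pos _).ne' (by norm_num), Real.log_exp] at h4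
            have h5 : Real.sqrt L / 100 ≤ ((j+1:ℕ):ℝ) / L := by
              rw [le_div_iff₀ hL0]; push_cast; linarith
            have := Real.log_two_lt_d9
            linarith
          · have h4 := Real.log_le_log (by linarith) a3
            rw [Real.log_exp] at h4
            refine h4.trans ?_
            rw [div_le_iff₀ hL0]; push_cast
            nlinarith
      _ = ((J1 - J0 : ℕ):ℝ) * Real.exp (0.97 * L) := by rw [Finset.sum_const, Nat.card_Ico, nsmul_eq_mul]
      _ ≤ (3 * L^2) * Real.exp (0.97 * L) := by
          gcongr
          rw [Nat.cast_sub hJ01]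
          have : (0:ℝ) ≤ J0 := by positivity
          nlinarith
      _ ≤ Real.exp (0.01 * L) * Real.exp (0.97 * L) := by gcongr
      _ = _ := by rw [← Real.exp_add]; congr 1; ring


noncomputable def gg (l : ℝ) : ℝ := l * Real.log (Real.log l) / Real.log l

lemma ev_log_le (c : ℝ) (hc : 0 < c) : ∀ᶠ v : ℝ in Filter.atTop, Real.log v ≤ c * v := by
  have h := Real.isLittleO_log_id_atTop.bound hc
  filter_upwards [h, Filter.eventually_ge_atTop 1] with v hv h1
  have := Real.log_nonneg h1
  simp only [Real.norm_eq_abs, id] at hv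
  rw [abs_of_nonneg this, abs_of_nonneg (by linarith)] at hv
  exact hv

lemma ev_rpow_le (η c : ℝ) (hη : 0 < η) (hc : 0 < c) : ∀ᶠ v : ℝ in Filter.atTop,
    Real.exp (Real.log v / (1+η)) ≤ c * v := by
  have h1 := tendsto_rpow_neg_atTop (y := η/(1+η)) (by positivity)
  have h2 := h1.eventually (eventually_le_nhds hc)
  filter_upwards [h2, Filter.eventually_ge_atTop 1] with v hv h1
  have hv0 : 0 < v := by linarith
  rw [Real.rpow_def_of_pos hv0] at hv
  calc Real.exp (Real.log v / (1+η)) = Real.exp (Real.log v * -(η/(1+η))) * v := by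
        nth_rewrite 3 [← Real.exp_log hv0]
        rw [← Real.exp_add]; congr 1; field_simp; ring
    _ ≤ c * v := mul_le_mul_of_nonneg_right hv hv0.le

lemma ana_v (η M : ℝ) (hη : 0 < η) : ∀ᶠ v : ℝ in Filter.atTop,
    -(1+η/2) * v + Real.log v/(1+η) + v + 3 * Real.exp (Real.log v/(1+η)) ≤ -M := by
  filter_upwards [ev_log_le (η/16) (by positivity), ev_rpow_le η (η/16) hη (by positivity),
    Filter.eventually_ge_atTop 1, Filter.eventually_ge_atTop (4*M/η)] with v h1 h2 h3 h4
  have h5 : Real.log v / (1+η) ≤ Real.log v := div_le_self (Real.log_nonneg h3) (by linarith)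
  have h6 : M ≤ η/4 * v := by
    rw [div_le_iff₀ hη] at h4; linarith
  nlinarith

lemma tl : Filter.Tendsto Real.log Filter.atTop Filter.atTop := Real.tendsto_log_atTop

lemma ana_tau (η M : ℝ) (hη : 0 < η) (hη1 : η ≤ 1) : ∀ᶠ τ : ℝ in Filter.atTop, ∀ Z : ℝ, 1 ≤ Z →
    Z ≤ gg τ / (1+η)^2 →
    -(Real.log (Real.log τ)/(1+η)) * ((τ - 1)/Z) + Real.log (Real.log τ)/(1+η) + Real.log Z
      + 3 * Real.exp (Real.log (Real.log τ)/(1+η)) ≤ -M := by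
  filter_upwards [tl.eventually (ana_v η M hη), (tl.comp tl).eventually_ge_atTop 1,
    tl.eventually_ge_atTop 1, Filter.eventually_ge_atTop (4/η), Filter.eventually_ge_atTop 2]
    with τ h1 h2 h3 h4 h5 Z hZ1 hZ
  simp only [Function.comp] at h2
  set v := Real.log τ with hv
  have hlv : Real.log v ≤ v := (Real.log_le_sub_one_of_pos (by linarith)).trans (by linarith)
  have hg : gg τ = τ * Real.log v / v := rfl
  have hgt : gg τ ≤ τ := by
    rw [hg, div_le_iff₀ (by linarith)]
    exact mul_le_mul_of_nonneg_left hlv (by linarith)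
  have hZτ : Z ≤ τ := by
    refine hZ.trans ((div_le_self ?_ ?_).trans hgt)
    · rw [hg]; positivity
    · nlinarith
  have hlZ : Real.log Z ≤ v := Real.log_le_log (by linarith) hZτ
  have hmain : (1+η/2) * v ≤ (Real.log v/(1+η)) * ((τ - 1)/Z) := by
    have hZ0 : 0 < Z := by linarith
    have : (1+η/2) * v * ((1+η) * Z) ≤ Real.log v * (τ - 1) := by
      have e1 : (1+η) * Z ≤ τ * Real.log v / v / (1+η) := by
        rw [le_div_iff₀ (by positivity)]
        rw [le_div_iff₀ (by positivity), hg] at hZ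
        linarith
      calc (1+η/2) * v * ((1+η) * Z) ≤ (1+η/2) * v * (τ * Real.log v / v / (1+η)) :=
            mul_le_mul_of_nonneg_left e1 (by positivity)
        _ = Real.log v * (((1+η/2)/(1+η)) * τ) := by field_simp
        _ ≤ Real.log v * (τ - 1) := by
            refine mul_le_mul_of_nonneg_left ?_ (by linarith)
            rw [div_mul_eq_mul_div, div_le_iff₀ (by positivity)]
            rw [div_le_iff₀ hη] at h4
            nlinarith
    rw [div_mul_div_comm, le_div_iff₀ (by positivity)]
    exact this
  linarith

lemma gg_big (c : ℝ) (hc : 0 < c) : ∀ᶠ τ : ℝ in Filter.atTop, c * Real.log τ ≤ gg τ := by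
  have h := isLittleO_log_rpow_atTop (r := (1/2:ℝ)) (by norm_num)
  have h' := h.bound (c := 1/(c+1)) (by positivity)
  filter_upwards [h', (tl.comp tl).eventually_ge_atTop 1,
    tl.eventually_ge_atTop 1, Filter.eventually_ge_atTop 2] with τ h1 h2 h3 h4
  simp only [Function.comp] at h2
  rw [Real.norm_of_nonneg (by linarith), Real.norm_of_nonneg (by positivity), ← Real.sqrt_eq_rpow] at h1
  unfold gg
  set v := Real.log τ with hv
  rw [le_div_iff₀ (by linarith)]
  have hs := Real.sq_sqrt (show (0:ℝ) ≤ τ by linarith)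
  have h5 : (c+1) * v ≤ √τ := by
    rw [div_mul_eq_mul_div, one_mul, le_div_iff₀ (by positivity)] at h1; linarith
  have h6 : c * v * v ≤ ((c+1) * v)^2 := by nlinarith [sq_nonneg v, mul_pos hc hc, mul_nonneg hc.le (sq_nonneg v), mul_nonneg (mul_pos hc hc).le (sq_nonneg v)]
  have h7 : ((c+1) * v)^2 ≤ √τ^2 := pow_le_pow_left₀ (by positivity) h5 2
  nlinarith

lemma gg_mono (a b : ℝ) (ha : Real.exp (Real.exp 1) ≤ a) (hab : a ≤ b) : gg a ≤ gg b := by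
  have he : Real.exp 1 ≤ Real.exp (Real.exp 1) := by
    apply Real.exp_le_exp.mpr; linarith [Real.add_one_le_exp (1:ℝ)]
  have ha0 : 0 < a := lt_of_lt_of_le (Real.exp_pos _) ha
  have hla : Real.exp 1 ≤ Real.log a := by rwa [Real.le_log_iff_exp_le ha0]
  have hla0 : 0 < Real.log a := lt_of_lt_of_le (Real.exp_pos _) hla
  have hlab : Real.log a ≤ Real.log b := Real.log_le_log ha0 hab
  have hll : Real.log (Real.log a) ≤ Real.log (Real.log b) := Real.log_le_log hla0 hlab
  have hl1 : 1 ≤ Real.log (Real.log a) := by rwa [Real.le_log_iff_exp_le hla0]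
  have := Real.log_div_self_antitoneOn (show a ∈ {x | Real.exp 1 ≤ x} from he.trans ha)
    (show b ∈ {x | Real.exp 1 ≤ x} from (he.trans ha).trans hab) hab
  have h2 : a / Real.log a ≤ b / Real.log b := by
    rw [div_le_div_iff₀ (by linarith) ha0] at this
    rw [div_le_div_iff₀ hla0 (by linarith)]; linarith
  unfold gg
  calc a * Real.log (Real.log a) / Real.log a = a / Real.log a * Real.log (Real.log a) := by ring
    _ ≤ b / Real.log b * Real.log (Real.log b) :=
        mul_le_mul h2 hll (by linarith) (div_nonneg (by linarith) (by linarith))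
    _ = _ := by ring


lemma exists_eta (ε : ℝ) (hε : 0 < ε) : ∃ η : ℝ, 0 < η ∧ η ≤ 1 ∧ (1+η)^4 ≤ 1+ε := by
  refine ⟨min 1 (ε/15), by positivity, min_le_left _ _, ?_⟩
  set η := min 1 (ε/15)
  have h1 : η ≤ 1 := min_le_left _ _
  have h2 : η ≤ ε/15 := min_le_right _ _
  have h0 : 0 < η := by positivity
  have a2 : η^2 ≤ η := by nlinarith
  have a3 : η^3 ≤ η := by nlinarith
  have a4 : η^4 ≤ η := by nlinarith
  nlinarith

set_option maxHeartbeats 1000000 in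
lemma params_tau (ε : ℝ) (hε : 0 < ε) (M : ℝ) : ∀ᶠ τ : ℝ in Filter.atTop, ∃ K s : ℕ,
    1 ≤ K ∧ 1 ≤ s ∧ Real.exp (gg τ / (1+ε)) ≤ K ∧ τ ≤ K ∧ 1600 * Real.exp 5 * τ ≤ s ∧ 3 ≤ s^2*K ∧
    ∃ X : ℝ, 0 ≤ X ∧ X / Real.log ((s^2*K : ℕ):ℝ) ≤ 2/5 ∧ 0 < Real.log ((s^2*K : ℕ):ℝ) ∧ 
      -X * ((τ-1)/Real.log ((s^2*K : ℕ):ℝ)) + X + Real.log (Real.log ((s^2*K : ℕ):ℝ))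
       + 3 * Real.exp X ≤ -M := by
  obtain ⟨η, hη, hη1, hη4⟩ := exists_eta ε hε
  filter_upwards [ana_tau η M hη hη1, gg_big (4*(1+ε)/η) (by positivity),
    (tl.comp tl).eventually_ge_atTop 1, tl.eventually_ge_atTop 1,
    Filter.eventually_ge_atTop (1600 * Real.exp 5 + 3),
    gg_big ((1+ε)/η) (by positivity)] with τ h1 h2 h3 h4 h5 h6
  simp only [Function.comp] at h3
  have he5 : 0 < Real.exp 5 := Real.exp_pos _
  have hτ0 : 0 < τ := by linarith
  set v := Real.log τ with hv
  set E := Real.exp (gg τ / (1+ε)) with hE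
  have hlv : Real.log v ≤ v := (Real.log_le_sub_one_of_pos (by linarith)).trans (by linarith)
  -- E large
  have hg0 : 4/η * v ≤ gg τ / (1+ε) := by
    rw [le_div_iff₀ (by positivity)]
    calc 4/η * v * (1+ε) = 4*(1+ε)/η * v := by ring
      _ ≤ _ := h2
  have h4η : 4 ≤ 4/η := by rw [le_div_iff₀ hη]; linarith
  have hgv : 4 * v ≤ gg τ / (1+ε) := le_trans (by nlinarith) hg0
  have hEτ : τ ≤ E := by
    rw [← Real.exp_log hτ0]
    apply Real.exp_le_exp.mpr; linarith
  have hE1 : 1 ≤ E := by linarith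
  have hKE : E ≤ (⌈E⌉₊:ℝ) := Nat.le_ceil _
  have hKE2 : (⌈E⌉₊:ℝ) ≤ 2 * E := by
    have := (Nat.ceil_lt_add_one (show 0 ≤ E by linarith)).le
    linarith
  set K := ⌈E⌉₊ with hK
  have hK0 : (0:ℝ) < K := by linarith
  have hK1 : (1:ℝ) ≤ K := by linarith
  set R := (K:ℝ)^(η/2) with hR
  have hRτ : τ^2 ≤ R := by
    calc τ^2 = Real.exp (2 * v) := by rw [two_mul, Real.exp_add, hv, Real.exp_log hτ0]; ring
      _ ≤ Real.exp (gg τ / (1+ε) * (η/2)) := by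
          apply Real.exp_le_exp.mpr
          calc 2 * v = 4/η * v * (η/2) := by field_simp; ring
            _ ≤ _ := mul_le_mul_of_nonneg_right hg0 (by positivity)
      _ = E^(η/2) := by rw [hE, ← Real.exp_mul]
      _ ≤ R := Real.rpow_le_rpow (by linarith) hKE (by positivity)
  have hR0 : 0 ≤ R := by positivity
  set s := ⌊R⌋₊ with hs
  have hsR : (s:ℝ) ≤ R := Nat.floor_le hR0
  have hsR2 : R < s + 1 := Nat.lt_floor_add_one R
  have hsτ : 1600 * Real.exp 5 * τ ≤ s := by nlinarith
  have hs1 : (1:ℝ) ≤ s := by nlinarith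
  have hcast : ((s^2*K : ℕ):ℝ) = (s:ℝ)^2 * K := by push_cast; ring
  have hlogz : Real.log ((s^2*K : ℕ):ℝ) = 2 * Real.log s + Real.log K := by
    rw [hcast, Real.log_mul (by positivity) (by positivity), Real.log_pow]; push_cast; ring
  set Z := Real.log ((s^2*K : ℕ):ℝ) with hZ
  have hlogK1 : gg τ / (1+ε) ≤ Real.log K := by
    rw [Real.le_log_iff_exp_le hK0]; exact hKE
  have hlogK2 : Real.log K ≤ gg τ / (1+ε) + 1 := by
    calc Real.log K ≤ Real.log (2 * E) := Real.log_le_log hK0 hKE2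
      _ = Real.log 2 + gg τ / (1+ε) := by
          rw [Real.log_mul (by norm_num) (by linarith), hE, Real.log_exp]
      _ ≤ _ := by linarith [Real.log_two_lt_d9]
  have hlogs0 : 0 ≤ Real.log s := Real.log_nonneg hs1
  have hlogs : Real.log s ≤ η/2 * Real.log K := by
    calc Real.log s ≤ Real.log R := Real.log_le_log (by linarith) hsR
      _ = _ := by rw [hR, Real.log_rpow hK0]
  have hZlow : gg τ / (1+ε) ≤ Z := by rw [hlogz]; linarith
  have hZup : Z ≤ (1+η) * (gg τ / (1+ε) + 1) := by
    rw [hlogz]; nlinarith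
  have hη2 : 1 ≤ η * (gg τ / (1+ε)) := by
    have : (1+ε)/η * v ≤ gg τ := h6
    have h7 : 1/η ≤ gg τ / (1+ε) := by
      rw [le_div_iff₀ (by positivity)]
      calc 1/η * (1+ε) = (1+ε)/η * 1 := by ring
        _ ≤ (1+ε)/η * v := mul_le_mul_of_nonneg_left h4 (by positivity)
        _ ≤ _ := this
    rw [div_le_iff₀ hη] at h7; linarith
  have hZ3 : Z ≤ gg τ / (1+η)^2 := by
    have hG : 0 ≤ gg τ / (1+ε) := by linarith
    calc Z ≤ (1+η) * (gg τ / (1+ε) + η * (gg τ / (1+ε))) :=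
          hZup.trans (mul_le_mul_of_nonneg_left (by linarith) (by linarith))
      _ = (1+η)^2 * (gg τ / (1+ε)) := by ring
      _ ≤ gg τ / (1+η)^2 := by
          have hgg : 0 ≤ gg τ := by
            have := mul_nonneg hG (show 0 ≤ 1+ε by linarith)
            rwa [div_mul_cancel₀ _ (by positivity)] at this
          rw [le_div_iff₀ (by positivity)]
          calc (1+η)^2 * (gg τ / (1+ε)) * (1+η)^2 = (1+η)^4 * (gg τ / (1+ε)) := by ring
            _ ≤ (1+ε) * (gg τ / (1+ε)) := mul_le_mul_of_nonneg_right hη4 hG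
            _ = gg τ := by field_simp
  have hZ4 : 4 * v ≤ Z := by linarith
  have hX0 : 0 ≤ Real.log v / (1+η) := div_nonneg (by linarith) (by linarith)
  refine ⟨K, s, by exact_mod_cast hK1, by exact_mod_cast hs1, hKE, by linarith, hsτ, ?_,
    Real.log v / (1+η), hX0, ?_, by linarith, ?_⟩
  · have : (3:ℝ) ≤ ((s^2*K : ℕ):ℝ) := by
      rw [hcast]
      have : (1:ℝ) ≤ (s:ℝ)^2 := by nlinarith
      nlinarith
    exact_mod_cast this
  · have : Real.log v / (1+η) ≤ Real.log v := div_le_self (by linarith) (by linarith)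
    rw [div_le_iff₀ (by linarith)]; linarith
  · exact h1 Z (by linarith) hZ3

set_option maxHeartbeats 1000000 in
lemma params (ε : ℝ) (hε : 0 < ε) : ∀ᶠ t : ℕ in Filter.atTop, ∃ K s : ℕ,
    1 ≤ K ∧ 1 ≤ s ∧ Real.exp (gg (Real.log ((t:ℝ)+1)) / (1+ε)) ≤ K ∧ Real.log t ≤ K ∧
    2 * (Psi t (s^2*K) : ℝ) ≤ Real.exp (-5) * ((t:ℝ)/(16*Real.log t)) ∧
    100 * (t:ℝ)/s ≤ Real.exp (-5) * ((t:ℝ)/(16*Real.log t)) := by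
  obtain ⟨C, hC, hPsi⟩ := Psi_bound
  set M := Real.log (32 * C * Real.exp 5) with hM
  have htend : Filter.Tendsto (fun t : ℕ => Real.log ((t:ℝ)+1)) Filter.atTop Filter.atTop :=
    tl.comp (Filter.tendsto_atTop_add_const_right _ _ tendsto_natCast_atTop_atTop)
  filter_upwards [htend.eventually (params_tau ε hε M), Filter.eventually_ge_atTop 4]
    with t ht h4
  obtain ⟨K, s, hK, hs, hKE, hKτ, hsτ, hz3, X, hX0, hX, hZ0, hmain⟩ := ht
  have h4' : (4:ℝ) ≤ t := by exact_mod_cast h4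
  have ht0 : (0:ℝ) < t := by linarith
  have hlt : 0 < Real.log t := Real.log_pos (by linarith)
  have hlt1 : Real.log t ≤ Real.log ((t:ℝ)+1) := Real.log_le_log ht0 (by linarith)
  have hlt2 : Real.log ((t:ℝ)+1) - 1 ≤ Real.log t := by
    have : Real.log ((t:ℝ)+1) ≤ Real.log (2*t) := Real.log_le_log (by linarith) (by linarith)
    rw [Real.log_mul (by norm_num) (by linarith)] at this
    linarith [Real.log_two_lt_d9]
  refine ⟨K, s, hK, hs, hKE, hlt1.trans hKτ, ?_, ?_⟩
  · set z := s^2*K with hz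
    set Z := Real.log ((z:ℕ):ℝ) with hZ
    have hb := hPsi t z (X/Z) (by omega) hz3 (div_nonneg hX0 hZ0.le) hX
    have hz0 : (0:ℝ) < z := by exact_mod_cast (by omega : 0 < z)
    have hzα : (z:ℝ)^(X/Z) = Real.exp X := by
      rw [Real.rpow_def_of_pos hz0]; congr 1; rw [← hZ]; field_simp
    have htα : (t:ℝ)^(1-X/Z) = t * Real.exp (-X * (Real.log t/Z)) := by
      rw [Real.rpow_def_of_pos ht0]
      nth_rewrite 2 [← Real.exp_log ht0]
      rw [← Real.exp_add]; congr 1; field_simp; ring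
    rw [hzα, htα] at hb
    have hexp : Real.exp (-X * (Real.log t/Z)) * Real.exp X * (Z * Real.exp (3 * Real.exp X))
        ≤ Real.exp (-M) := by
      have : Real.exp (-X * (Real.log t/Z)) * Real.exp X * (Z * Real.exp (3 * Real.exp X))
          = Real.exp (-X * (Real.log t/Z) + X + Real.log Z + 3 * Real.exp X) := by
        rw [Real.exp_add, Real.exp_add, Real.exp_add, Real.exp_log hZ0]; ring
      rw [this]
      apply Real.exp_le_exp.mpr
      have h1 : (Real.log ((t:ℝ)+1) - 1)/Z ≤ Real.log t / Z := div_le_div_of_nonneg_right hlt2 hZ0.le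
      have h2 := mul_le_mul_of_nonneg_left h1 hX0
      linarith
    have hMe : Real.exp (-M) = 1/(32 * C * Real.exp 5) := by
      rw [Real.exp_neg, hM, Real.exp_log (by positivity)]; ring
    have hfin : (Psi t z : ℝ) * Real.log t ≤ t * Real.exp (-5) / 32 := by
      calc (Psi t z : ℝ) * Real.log t ≤ _ := hb
        _ = C * t * (Real.exp (-X * (Real.log t/Z)) * Real.exp X * (Z * Real.exp (3 * Real.exp X))) := by ring
        _ ≤ C * t * Real.exp (-M) := mul_le_mul_of_nonneg_left hexp (by positivity)
        _ = t * Real.exp (-5) / 32 := by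
          rw [hMe, Real.exp_neg]; field_simp
    rw [← mul_div_assoc, le_div_iff₀ (by positivity)]
    linarith
  · have hs0 : (0:ℝ) < s := by exact_mod_cast hs
    rw [Real.exp_neg, ← mul_div_assoc, div_le_div_iff₀ hs0 (by positivity)]
    have h1 : 1600 * Real.exp 5 * Real.log t ≤ s := le_trans (mul_le_mul_of_nonneg_left hlt1 (by positivity)) hsτ
    have he : 0 < Real.exp 5 := Real.exp_pos _
    calc 100 * (t:ℝ) * (16 * Real.log t) = (Real.exp 5)⁻¹ * t * (1600 * Real.exp 5 * Real.log t) := by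
          field_simp; ring
      _ ≤ _ := mul_le_mul_of_nonneg_left h1 (by positivity)


set_option maxHeartbeats 1000000 in
lemma sieve_x : ∀ᶠ x : ℝ in Filter.atTop, ∀ t k : ℕ, ∀ P B : Finset ℕ, B ⊆ primesIn x →
    ∑ p ∈ B, (∑ n ∈ Icc 1 t, bco t n * ch p n) ^ (2 * k) ≤
      100 * (x / Real.log x) * Ex P (fun A => (∑ n ∈ Icc 1 t, rs A n) ^ (2 * k))
        + 8 * Real.exp (0.4 * Real.log x) * (t:ℝ)^(4 * k) := by
  filter_upwards [tl.eventually (ev_log_le 0.1 (by norm_num)), tl.eventually_ge_atTop 20,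
    Filter.eventually_ge_atTop 20] with x h1 h2 h3 t k P B hB
  have hx0 : 0 < x := by linarith
  set L := Real.log x with hL
  have hL0 : 0 < L := by linarith
  have hxL : Real.exp L = x := Real.exp_log hx0
  set E := Real.exp (L/10) with hE
  have hr : Real.exp (L/20) * Real.exp (L/20) = E := by rw [← Real.exp_add]; congr 1; ring
  have hr2 : 2 ≤ Real.exp (L/20) := by linarith [Real.add_one_le_exp (L/20)]
  have hD1 : (⌊E⌋₊:ℝ) ≤ E := Nat.floor_le (Real.exp_pos _).le
  have hD2 : E < (⌊E⌋₊:ℝ) + 1 := Nat.lt_floor_add_one _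
  set D := ⌊E⌋₊ with hD
  have hD3 : Real.exp (L/20) ≤ D := by nlinarith
  have hDR : (1:ℝ) ≤ D := by linarith
  have hD1' : 1 ≤ D := by exact_mod_cast hDR
  have hEx : E ≤ x := by rw [← hxL]; apply Real.exp_le_exp.mpr; linarith
  have hDX : D ≤ ⌊x⌋₊ := Nat.floor_le_floor hEx
  have hX2 : 2 ≤ ⌊x⌋₊ := Nat.le_floor (by push_cast; linarith)
  have hXY : ⌊x⌋₊ ≤ ⌊2*x⌋₊ := Nat.floor_le_floor (by linarith)
  have hm := sieve_moment ⌊x⌋₊ ⌊2*x⌋₊ D t k hD1' hDX hX2 hXY P (bco t) (bco_abs t) B (by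
    intro p hp
    obtain ⟨a, b, c⟩ := (Finset.mem_filter.1 (hB hp)).2
    exact ⟨a, (Nat.floor_lt hx0.le).2 b, Nat.le_floor c⟩)
  have hEx0 : 0 ≤ Ex P (fun A => (∑ n ∈ Icc 1 t, rs A n) ^ (2 * k)) :=
    Ex_nonneg fun A _ => Even.pow_nonneg ⟨k, by ring⟩ _
  have hD4 : (D:ℝ)^4 ≤ Real.exp (0.4 * L) := by
    calc (D:ℝ)^4 ≤ E^4 := pow_le_pow_left₀ (by linarith) hD1 4
      _ = _ := by rw [hE, ← Real.exp_nat_mul]; congr 1; push_cast; ring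
  have hVV : L/60 ≤ VV D := by
    have a1 := VV_lower D hD1'
    have a2 : L/20 ≤ Real.log D := by rwa [Real.le_log_iff_exp_le (by linarith)]
    linarith
  have h04 : Real.exp (0.4*L) ≤ x / L := by
    rw [le_div_iff₀ hL0]
    calc Real.exp (0.4*L) * L = Real.exp (0.4*L + Real.log L) := by
          rw [Real.exp_add, Real.exp_log hL0]
      _ ≤ Real.exp L := Real.exp_le_exp.mpr (by linarith)
      _ = x := hxL
  have hfac : ((⌊2*x⌋₊:ℝ) - ⌊x⌋₊) / (2 * VV D) + (D:ℝ)^4 ≤ 100 * (x / L) := by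
    have b1 : (⌊2*x⌋₊:ℝ) ≤ 2*x := Nat.floor_le (by linarith)
    have b2 : x < (⌊x⌋₊:ℝ) + 1 := Nat.lt_floor_add_one _
    have : ((⌊2*x⌋₊:ℝ) - ⌊x⌋₊) / (2 * VV D) ≤ (2*x) / (2 * (L/60)) := by
      apply div_le_div₀ (by linarith) (by linarith) (by linarith) (by linarith)
    have e : (2*x) / (2 * (L/60)) = 60 * (x/L) := by field_simp
    have : 0 < x / L := by positivity
    linarith
  have hm' : ∑ p ∈ B, (∑ n ∈ Icc 1 t, bco t n * ch p n) ^ (2 * k) ≤ _ := hm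
  refine hm'.trans (add_le_add (mul_le_mul_of_nonneg_right hfac hEx0) ?_)
  refine mul_le_mul_of_nonneg_right (mul_le_mul_of_nonneg_left hD4 (by norm_num)) (by positivity)

/-- the set of bad primes at `t` -/
noncomputable def badI (x : ℝ) (t : ℕ) : Finset ℕ :=
  (primesIn x).filter fun p => (t:ℝ)/(16*Real.log t) < |∑ d ∈ Icc 1 t, bco t d * ch p d|

set_option maxHeartbeats 1000000 in
lemma oneT : ∀ᶠ x : ℝ in Filter.atTop, ∀ t K s k : ℕ, 4 ≤ t → 16 * Real.log t ≤ t →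
    Real.log t ≤ √(Real.log x) / 50 → 1 ≤ s → 1 ≤ k → k ≤ K → (k:ℝ) ≤ √(Real.log x) →
    2 * (Psi t (s^2*K) : ℝ) ≤ Real.exp (-5) * ((t:ℝ)/(16*Real.log t)) →
    100 * (t:ℝ)/s ≤ Real.exp (-5) * ((t:ℝ)/(16*Real.log t)) →
    ((badI x t).card : ℝ) ≤ 200 * (x / Real.log x) * Real.exp (-10 * k) + 8 * Real.exp (0.48 * Real.log x) := by
  filter_upwards [sieve_x, tl.eventually_ge_atTop 20, Filter.eventually_ge_atTop 20] with x hS hL20 hx20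
    t K s k ht4 ht16 htL hs hk hkK hkL hP1 hP2
  set L := Real.log x with hL
  have h4' : (4:ℝ) ≤ t := by exact_mod_cast ht4
  have ht0 : (0:ℝ) < t := by linarith
  have hlt : 0 < Real.log t := Real.log_pos (by linarith)
  set q := (t:ℝ)/(16*Real.log t) with hq
  have hq1 : 1 ≤ q := by rw [hq, le_div_iff₀ (by positivity)]; linarith
  have hm := hS t k (PP (s^2*K) t) (badI x t) (Finset.filter_subset _ _)
  have hn := normI t (s^2*K) k s hk hs (Nat.mul_le_mul_left _ hkK)
  have hxL : 0 < x / L := div_pos (by linarith) (by linarith)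
  have hlow : ((badI x t).card : ℝ) * q^(2*k) ≤
      ∑ p ∈ badI x t, (∑ n ∈ Icc 1 t, bco t n * ch p n) ^ (2 * k) := by
    rw [← nsmul_eq_mul]
    refine Finset.card_nsmul_le_sum _ _ _ fun p hp => ?_
    have := (Finset.mem_filter.1 hp).2
    rw [← Even.pow_abs (⟨k, by ring⟩ : Even (2*k)) (∑ n ∈ Icc 1 t, bco t n * ch p n)]
    exact pow_le_pow_left₀ (by linarith) this.le _
  have he : (Real.exp (-5) * q)^(2*k) = Real.exp (-10 * k) * q^(2*k) := by
    rw [mul_pow, ← Real.exp_nat_mul]; congr 2; push_cast; ring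
  have a1 : (2 * (Psi t (s^2*K) : ℝ))^(2*k) ≤ Real.exp (-10 * k) * q^(2*k) := by
    rw [← he]; exact pow_le_pow_left₀ (by positivity) hP1 _
  have a2 : (100 * (t:ℝ)/s)^(2*k) ≤ Real.exp (-10 * k) * q^(2*k) := by
    rw [← he]; exact pow_le_pow_left₀ (by positivity) hP2 _
  have hqk : 1 ≤ q^(2*k) := one_le_pow₀ hq1
  have htk : (t:ℝ)^(4*k) ≤ Real.exp (0.08 * L) := by
    nth_rewrite 1 [← Real.exp_log ht0]
    rw [← Real.exp_nat_mul]
    apply Real.exp_le_exp.mpr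
    push_cast
    have e : √L * √L = L := Real.mul_self_sqrt (by linarith)
    have : (k:ℝ) * Real.log t ≤ √L * (√L/50) := mul_le_mul hkL htL hlt.le (Real.sqrt_nonneg _)
    nlinarith
  have herr : 8 * Real.exp (0.4 * L) * (t:ℝ)^(4*k) ≤ 8 * Real.exp (0.48 * L) * q^(2*k) := by
    have e0 : Real.exp (0.48*L) = Real.exp (0.4*L) * Real.exp (0.08*L) := by
      rw [← Real.exp_add]; congr 1; ring
    calc 8 * Real.exp (0.4 * L) * (t:ℝ)^(4*k) ≤ 8 * Real.exp (0.4 * L) * Real.exp (0.08*L) :=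
          mul_le_mul_of_nonneg_left htk (by positivity)
      _ = 8 * Real.exp (0.48 * L) * 1 := by rw [e0]; ring
      _ ≤ _ := mul_le_mul_of_nonneg_left hqk (by positivity)
  have hmain : ((badI x t).card : ℝ) * q^(2*k) ≤
      (200 * (x / L) * Real.exp (-10 * k) + 8 * Real.exp (0.48 * L)) * q^(2*k) := by
    have b1 := mul_le_mul_of_nonneg_left (hn.trans (add_le_add a1 a2)) (show 0 ≤ 100 * (x/L) by linarith)
    calc _ ≤ _ := hlow
      _ ≤ _ := hm
      _ ≤ 100 * (x / L) * (Real.exp (-10 * k) * q^(2*k) + Real.exp (-10 * k) * q^(2*k))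
          + 8 * Real.exp (0.48 * L) * q^(2*k) := add_le_add b1 herr
      _ = _ := by ring
  exact le_of_mul_le_mul_right hmain (by linarith)

set_option maxHeartbeats 1000000 in
lemma regimeI (ε : ℝ) (hε : 0 < ε) : ∃ C : ℝ, 0 < C ∧ ∃ n0 : ℝ, ∀ᶠ x : ℝ in Filter.atTop, ∀ N : ℝ, n0 ≤ N →
    Real.exp (gg (Real.log N) / (1+ε)) ≤ √(Real.log x) - 1 →
    ∀ t0 : ℕ, Real.log t0 ≤ √(Real.log x) / 50 →
    ((((Icc ⌊N⌋₊ t0).biUnion (badI x)).card : ℕ) : ℝ) ≤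
      C * (x / Real.log x) * Real.exp (-Real.exp (gg (Real.log N) / (1+ε)))
        + 8 * Real.exp (0.5 * Real.log x) := by
  have h16 : ∀ᶠ t : ℕ in Filter.atTop, Real.log (t:ℝ) ≤ 1/16 * t :=
    tendsto_natCast_atTop_atTop.eventually (ev_log_le (1/16) (by norm_num))
  obtain ⟨t1, ht1⟩ := Filter.eventually_atTop.1 ((params ε hε).and (h16.and (Filter.eventually_ge_atTop 4)))
  have hsum : Summable (fun n : ℕ => 1 / (n:ℝ)^2) := Real.summable_one_div_nat_pow.mpr (by norm_num)
  set T := ∑' n : ℕ, 1 / (n:ℝ)^2 with hT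
  have hT0 : 0 ≤ T := tsum_nonneg fun n => by positivity
  refine ⟨200 * (T + 1), by positivity, t1 + 1 + Real.exp (Real.exp (Real.exp 1)), ?_⟩
  filter_upwards [oneT, tl.eventually_ge_atTop 10000, Filter.eventually_ge_atTop 20] with x hone hL1 hx20
    N hN hw t0 ht0
  set L := Real.log x with hL
  set w := Real.exp (gg (Real.log N) / (1+ε)) with hwdef
  have hw0 : 0 < w := Real.exp_pos _
  have hsq : √L * √L = L := Real.mul_self_sqrt (by linarith)
  have hs100 : 100 ≤ √L := Real.le_sqrt_of_sq_le (by linarith)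
  have hN1 : t1 ≤ ⌊N⌋₊ := Nat.le_floor (by linarith [Real.exp_pos (Real.exp (Real.exp 1))])
  have hNe : Real.exp (Real.exp (Real.exp 1)) ≤ N := by
    have : (0:ℝ) ≤ t1 := Nat.cast_nonneg _
    linarith
  have hN0 : 0 < N := (Real.exp_pos _).trans_le hNe
  have hxL : 0 < x / L := div_pos (by linarith) (by linarith)
  have hterm : ∀ t ∈ Icc ⌊N⌋₊ t0, ((badI x t).card : ℝ) ≤
      200 * (x / L) * Real.exp (-w) * (1 / (t:ℝ)^2) + 8 * Real.exp (0.48 * L) := by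
    intro t ht
    rw [Finset.mem_Icc] at ht
    obtain ⟨⟨K, s, hK, hs, hKw, hKt, hP1, hP2⟩, h16t, h4⟩ := ht1 t (hN1.trans ht.1)
    have h4' : (4:ℝ) ≤ t := by exact_mod_cast h4
    have htp : (0:ℝ) < t := by linarith
    have htt0 : Real.log t ≤ √L / 50 := by
      refine (Real.log_le_log htp ?_).trans ht0
      exact_mod_cast ht.2
    have hflo : √L - 1 ≤ (⌊√L⌋₊:ℝ) := by linarith [Nat.lt_floor_add_one (√L)]
    have hb := hone t K s (min K ⌊√L⌋₊) h4 (by linarith) htt0 hs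
      (le_min hK (Nat.le_floor (by push_cast; linarith))) (min_le_left _ _)
      (le_trans (by exact_mod_cast min_le_right _ _) (Nat.floor_le (Real.sqrt_nonneg _))) hP1 hP2
    have hNt : Real.log N ≤ Real.log ((t:ℝ)+1) := by
      apply Real.log_le_log hN0
      have : (⌊N⌋₊:ℝ) ≤ t := by exact_mod_cast ht.1
      linarith [Nat.lt_floor_add_one N]
    have hgm : gg (Real.log N) ≤ gg (Real.log ((t:ℝ)+1)) := by
      refine gg_mono _ _ ?_ hNt
      rwa [Real.le_log_iff_exp_le hN0]
    have hwK : w ≤ K := by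
      refine le_trans ?_ hKw
      apply Real.exp_le_exp.mpr
      exact div_le_div_of_nonneg_right hgm (by linarith)
    have hk1 : w ≤ ((min K ⌊√L⌋₊ : ℕ):ℝ) := by
      rw [Nat.cast_min]; exact le_min hwK (hw.trans hflo)
    have hk2 : Real.log t ≤ ((min K ⌊√L⌋₊ : ℕ):ℝ) := by
      rw [Nat.cast_min]; exact le_min hKt (by linarith)
    have hlt : 0 < Real.log t := Real.log_pos (by linarith)
    have hexp : Real.exp (-10 * ((min K ⌊√L⌋₊ : ℕ):ℝ)) ≤ Real.exp (-w) * (1/(t:ℝ)^2) := by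
      have e : 1/(t:ℝ)^2 = Real.exp (-(2 * Real.log t)) := by
        rw [Real.exp_neg, two_mul, Real.exp_add, Real.exp_log htp, one_div, sq]
      rw [e, ← Real.exp_add]
      apply Real.exp_le_exp.mpr
      linarith
    have := mul_le_mul_of_nonneg_left hexp (show 0 ≤ 200 * (x/L) by linarith)
    linarith
  have hcard : ((((Icc ⌊N⌋₊ t0).biUnion (badI x)).card : ℕ) : ℝ) ≤ ∑ t ∈ Icc ⌊N⌋₊ t0, ((badI x t).card : ℝ) := by
    exact_mod_cast Finset.card_biUnion_le
  have hcnt : ((Icc ⌊N⌋₊ t0).card : ℝ) ≤ Real.exp (0.02 * L) := by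
    have c1 : (Icc ⌊N⌋₊ t0).card ≤ t0 + 1 := by rw [Nat.card_Icc]; omega
    have c2 : (t0:ℝ) ≤ Real.exp (√L/50) := by
      rcases Nat.eq_zero_or_pos t0 with h | h
      · rw [h]; push_cast; positivity
      · have : (0:ℝ) < t0 := by exact_mod_cast h
        rwa [← Real.log_le_iff_le_exp this]
    have c3 : ((Icc ⌊N⌋₊ t0).card : ℝ) ≤ t0 + 1 := by exact_mod_cast c1
    have c4 : (1:ℝ) ≤ Real.exp (√L/50) := Real.one_le_exp (by positivity)
    have c5 : (2:ℝ) ≤ Real.exp 1 := by linarith [Real.add_one_le_exp (1:ℝ)]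
    calc ((Icc ⌊N⌋₊ t0).card : ℝ) ≤ 2 * Real.exp (√L/50) := by linarith
      _ ≤ Real.exp 1 * Real.exp (√L/50) := mul_le_mul_of_nonneg_right c5 (by positivity)
      _ = Real.exp (1 + √L/50) := by rw [Real.exp_add]
      _ ≤ _ := Real.exp_le_exp.mpr (by nlinarith)
  have hsumT : ∑ t ∈ Icc ⌊N⌋₊ t0, 1/(t:ℝ)^2 ≤ T + 1 := by
    have := hsum.sum_le_tsum (Icc ⌊N⌋₊ t0) (fun i _ => by positivity)
    linarith
  refine hcard.trans ((Finset.sum_le_sum hterm).trans ?_)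
  rw [Finset.sum_add_distrib, ← Finset.mul_sum, Finset.sum_const, nsmul_eq_mul]
  have d1 := mul_le_mul_of_nonneg_left hsumT (show 0 ≤ 200 * (x / L) * Real.exp (-w) by positivity)
  have d2 : ((Icc ⌊N⌋₊ t0).card : ℝ) * (8 * Real.exp (0.48 * L)) ≤ 8 * Real.exp (0.5*L) := by
    calc _ ≤ Real.exp (0.02 * L) * (8 * Real.exp (0.48 * L)) := mul_le_mul_of_nonneg_right hcnt (by positivity)
      _ = 8 * (Real.exp (0.02 * L) * Real.exp (0.48 * L)) := by ring
      _ = _ := by rw [← Real.exp_add]; congr 2; ring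
  calc _ ≤ 200 * (x / L) * Real.exp (-w) * (T+1) + 8 * Real.exp (0.5*L) := add_le_add d1 d2
    _ = _ := by ring


set_option maxHeartbeats 1000000 in
lemma rangeN (ε δ n0 : ℝ) (hε : 0 < ε) (hδ : 0 < δ) : ∀ᶠ x : ℝ in Filter.atTop, ∀ N : ℝ,
      Real.exp (Real.log (Real.log (Real.log x)) * Real.log (Real.log (Real.log (Real.log x))) /
          (δ * Real.log (Real.log (Real.log (Real.log (Real.log x)))))) ≤ N →
      N ≤ Real.exp (Real.log (Real.log x) * Real.log (Real.log (Real.log x)) /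
          (3 * Real.log (Real.log (Real.log (Real.log x))))) →
      n0 ≤ N ∧ Real.exp (Real.exp (Real.exp 1)) ≤ N ∧
      Real.exp (gg (Real.log N) / (1+ε)) ≤ √(Real.log x) - 1 ∧ Real.log N ≤ √(Real.log x) / 200 := by
  have t2 := tl.comp tl
  have t3 := tl.comp t2
  have t4 := tl.comp t3
  have t5 := tl.comp t4
  filter_upwards [tl.eventually_ge_atTop 1, t2.eventually_ge_atTop 1000,
    t3.eventually_ge_atTop (δ * (|n0| + Real.exp (Real.exp (Real.exp 1))) + 10),
    t4.eventually_ge_atTop 20, t5.eventually_ge_atTop 1, t4.eventually (ev_log_le (1/2) (by norm_num))]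
    with x h1 h2 h3 h4 h5 h6 N hN1 hN2
  simp only [Function.comp] at h2 h3 h4 h5 h6
  set L := Real.log x with hL
  set u := Real.log L with hu
  set m := Real.log u with hm
  set r := Real.log m with hr
  set q := Real.log r with hq
  have hm0 : 0 < m := by
    have : 0 ≤ δ * (|n0| + Real.exp (Real.exp (Real.exp 1))) := by positivity
    linarith
  have hmu : m ≤ u := (Real.log_le_sub_one_of_pos (by linarith)).trans (by linarith)
  have hrm : r ≤ m := (Real.log_le_sub_one_of_pos (by linarith)).trans (by linarith)
  have hbig : |n0| + Real.exp (Real.exp (Real.exp 1)) ≤ N := by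
    refine le_trans ?_ hN1
    refine le_trans ?_ (Real.add_one_le_exp _)
    have : m / δ ≤ m * r / (δ * q) := by
      rw [div_le_div_iff₀ hδ (by positivity)]
      have : q ≤ r := by linarith
      calc m * (δ * q) = m * δ * q := by ring
        _ ≤ m * δ * r := mul_le_mul_of_nonneg_left this (by positivity)
        _ = _ := by ring
    have h7 : |n0| + Real.exp (Real.exp (Real.exp 1)) ≤ m / δ := by
      rw [le_div_iff₀ hδ]; linarith
    linarith
  have hee : Real.exp (Real.exp (Real.exp 1)) ≤ N := by linarith [abs_nonneg n0]
  have hN0 : 0 < N := (Real.exp_pos _).trans_le hee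
  have hlNe : Real.exp (Real.exp 1) ≤ Real.log N := by rwa [Real.le_log_iff_exp_le hN0]
  set Λ := u * m / (3 * r) with hΛ
  have hlN : Real.log N ≤ Λ := by rwa [Real.log_le_iff_le_exp hN0]
  have hsqL : √L = Real.exp (u/2) := by
    rw [Real.sqrt_eq_rpow, Real.rpow_def_of_pos (by linarith), ← hu]; congr 1; ring
  have hlogΛ : Real.log Λ = m + r - (Real.log 3 + q) := by
    rw [hΛ, Real.log_div (by positivity) (by positivity), Real.log_mul (by positivity) (by positivity),
      Real.log_mul (by positivity) (by positivity)]
  have hl3 : Real.log 3 ≤ 2 := (Real.log_le_sub_one_of_pos (by norm_num)).trans (by norm_num)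
  have hl30 : 0 ≤ Real.log 3 := Real.log_nonneg (by norm_num)
  have hΛ1 : m ≤ Real.log Λ := by linarith
  have hΛ2 : Real.log Λ ≤ 2 * m := by linarith
  have hΛ3 : Real.log (Real.log Λ) ≤ 1.1 * r := by
    have := Real.log_le_log (by linarith) hΛ2
    rw [Real.log_mul (by norm_num) (by linarith)] at this
    linarith [Real.log_two_lt_d9]
  have hΛ0 : 0 < Λ := by positivity
  have hggΛ : gg Λ ≤ 0.4 * u := by
    unfold gg
    calc Λ * Real.log (Real.log Λ) / Real.log Λ ≤ Λ * (1.1 * r) / m := by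
          apply div_le_div₀ (by positivity) (mul_le_mul_of_nonneg_left hΛ3 hΛ0.le) hm0 hΛ1
      _ = 1.1/3 * u := by rw [hΛ]; field_simp
      _ ≤ 0.4 * u := by nlinarith
  have hgg : gg (Real.log N) ≤ 0.4 * u := (gg_mono _ _ hlNe hlN).trans hggΛ
  refine ⟨by linarith [le_abs_self n0, Real.exp_pos (Real.exp (Real.exp 1))], hee, ?_, ?_⟩
  · have a1 : gg (Real.log N) / (1+ε) ≤ 0.4 * u := by
      rw [div_le_iff₀ (by linarith)]; nlinarith
    have a2 := Real.exp_le_exp.mpr a1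
    have a3 : Real.exp (u/2) = Real.exp (0.4*u) * Real.exp (0.1*u) := by
      rw [← Real.exp_add]; congr 1; ring
    have a4 := Real.add_one_le_exp (0.1*u)
    have a5 : 1 ≤ Real.exp (0.4*u) := Real.one_le_exp (by linarith)
    rw [hsqL, a3]
    nlinarith
  · have b1 : Λ ≤ u^2 := by
      rw [hΛ, div_le_iff₀ (by positivity)]
      have : u * m ≤ u * u := mul_le_mul_of_nonneg_left hmu (by linarith)
      nlinarith [sq_nonneg u]
    have b2 : (u/8)^4 ≤ Real.exp (u/2) := by
      have e : Real.exp (u/2) = Real.exp (u/8)^4 := by rw [← Real.exp_nat_mul]; congr 1; push_cast; ring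
      rw [e]
      exact pow_le_pow_left₀ (by linarith) (by linarith [Real.add_one_le_exp (u/8)]) 4
    have b3 : 1000000 ≤ u^2 := by nlinarith
    rw [hsqL, le_div_iff₀ (by norm_num)]
    have b4 : (u/8)^4 = u^2 * u^2 / 4096 := by ring
    nlinarith

lemma endgame : ∀ᶠ L : ℝ in Filter.atTop,
    180 * L * Real.exp (-(0.02 * L)) ≤ Real.exp (-√L) := by
  filter_upwards [ev_log_le 0.001 (by norm_num), Filter.eventually_ge_atTop 1000000] with L h1 h2
  have hs : √L * √L = L := Real.mul_self_sqrt (by linarith)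
  have hs2 : 1000 ≤ √L := Real.le_sqrt_of_sq_le (by linarith)
  have h180 : (180:ℝ) ≤ Real.exp 180 := by linarith [Real.add_one_le_exp (180:ℝ)]
  have hL0 : 0 < L := by linarith
  calc 180 * L * Real.exp (-(0.02 * L)) ≤ Real.exp 180 * L * Real.exp (-(0.02 * L)) := by
        refine mul_le_mul_of_nonneg_right (mul_le_mul_of_nonneg_right h180 hL0.le) (Real.exp_pos _).le
    _ = Real.exp (180 + Real.log L + -(0.02*L)) := by
        rw [Real.exp_add, Real.exp_add, Real.exp_log hL0]
    _ ≤ _ := Real.exp_le_exp.mpr (by nlinarith)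

set_option maxHeartbeats 1000000 in
theorem stmt15 :
    ∀ ε > (0 : ℝ), ∀ δ > (0 : ℝ), ∃ C > (0 : ℝ), ∃ x₀ : ℝ, ∀ x : ℝ, x₀ < x → ∀ N : ℝ,
      Real.exp (Real.log (Real.log (Real.log x)) * Real.log (Real.log (Real.log (Real.log x))) /
          (δ * Real.log (Real.log (Real.log (Real.log (Real.log x)))))) ≤ N →
      N ≤ Real.exp (Real.log (Real.log x) * Real.log (Real.log (Real.log x)) /
          (3 * Real.log (Real.log (Real.log (Real.log x))))) →
      (((primesIn x).filter fun p => ∃ y : ℝ, N ≤ y ∧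
          (∑ n ∈ Finset.Icc 1 ⌊y⌋₊, ((jacobiSym (n : ℤ) p : ℤ) : ℝ) / (n : ℝ)) ≤ 0).card : ℝ) /
          ((primesIn x).card : ℝ) ≤
        C * Real.exp (-(Real.exp (Real.log N * Real.log (Real.log (Real.log N)) /
          ((1 + ε) * Real.log (Real.log N))))) := by
  intro ε hε δ hδ
  obtain ⟨C, hC, n0, hI⟩ := regimeI ε hε
  obtain ⟨x1, hx1⟩ := primesIn_card_lower
  have hev := hI.and (regimeII.and ((rangeN ε δ n0 hε hδ).and ((tl.eventually endgame).and
    ((Filter.eventually_ge_atTop x1).and ((tl.eventually_ge_atTop 1).and (Filter.eventually_ge_atTop 20))))))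
  obtain ⟨x0, hx0⟩ := Filter.eventually_atTop.1 hev
  refine ⟨20 * C + 1, by positivity, x0, ?_⟩
  intro x hx N hN1 hN2
  obtain ⟨hRI, ⟨t0, ht04, ht0a, ht0b, hRII⟩, hR, hend, hxx1, hL1, hx20⟩ := hx0 x hx.le
  obtain ⟨hn0, hNe, hw, hlN⟩ := hR N hN1 hN2
  have hRI' := hRI N hn0 hw t0 ht0b
  have hcard := hx1 x hxx1
  have hwe : Real.log N * Real.log (Real.log (Real.log N)) / ((1 + ε) * Real.log (Real.log N))
      = gg (Real.log N) / (1+ε) := by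
    unfold gg
    rw [div_div]; congr 1; ring
  rw [hwe]
  set w := Real.exp (gg (Real.log N) / (1+ε)) with hwdef
  set L := Real.log x with hL
  have hN0 : 0 < N := (Real.exp_pos _).trans_le hNe
  have hN4 : 4 ≤ ⌊N⌋₊ := by
    apply Nat.le_floor
    push_cast
    have a1 := Real.add_one_le_exp (1:ℝ)
    have a2 := Real.add_one_le_exp (Real.exp 1)
    have a3 := Real.add_one_le_exp (Real.exp (Real.exp 1))
    linarith
  have hNt0 : ⌊N⌋₊ ≤ t0 := by
    have h4 : (0:ℝ) < t0 := by exact_mod_cast (by omega : 0 < t0)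
    have : N ≤ t0 := by
      rw [← Real.log_le_log_iff hN0 h4]; linarith
    exact_mod_cast (Nat.floor_le hN0.le).trans this
  have hsub : ((primesIn x).filter fun p => ∃ y : ℝ, N ≤ y ∧
          (∑ n ∈ Finset.Icc 1 ⌊y⌋₊, ((jacobiSym (n : ℤ) p : ℤ) : ℝ) / (n : ℝ)) ≤ 0) ⊆
      ((Icc ⌊N⌋₊ t0).biUnion (badI x)) ∪
      ((primesIn x).filter fun p => 1 / (8 * Real.log t0) ≤ SS p t0 ∧ ∃ Y : ℕ, t0 ≤ Y ∧ SS p Y ≤ 0) := by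
    intro p hp
    rw [Finset.mem_filter] at hp
    obtain ⟨hp1, y, hy1, hy2⟩ := hp
    rw [Finset.mem_union]
    by_contra hcon
    rw [not_or] at hcon
    obtain ⟨hc1, hc2⟩ := hcon
    have hSS : ∀ t : ℕ, ⌊N⌋₊ ≤ t → t ≤ t0 → 1 / (8 * Real.log t) ≤ SS p t := by
      intro t h1 h2
      refine S_lower p t (by omega) ?_
      by_contra hlt
      rw [not_le] at hlt
      apply hc1
      rw [Finset.mem_biUnion]
      exact ⟨t, Finset.mem_Icc.2 ⟨h1, h2⟩, Finset.mem_filter.2 ⟨hp1, hlt⟩⟩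
    have hy2' : SS p ⌊y⌋₊ ≤ 0 := hy2
    have hNY : ⌊N⌋₊ ≤ ⌊y⌋₊ := Nat.floor_le_floor hy1
    rcases le_total ⌊y⌋₊ t0 with h | h
    · have h1 := hSS _ hNY h
      have h2 : (1:ℝ) < (⌊y⌋₊:ℝ) := by exact_mod_cast (by omega : 1 < ⌊y⌋₊)
      have h3 : 0 < 1 / (8 * Real.log (⌊y⌋₊:ℝ)) := by
        have := Real.log_pos h2
        positivity
      linarith
    · apply hc2
      exact Finset.mem_filter.2 ⟨hp1, hSS t0 hNt0 le_rfl, ⌊y⌋₊, h, hy2'⟩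
  have hc := (Finset.card_le_card hsub).trans (Finset.card_union_le _ _)
  have hc' : (((primesIn x).filter fun p => ∃ y : ℝ, N ≤ y ∧
          (∑ n ∈ Finset.Icc 1 ⌊y⌋₊, ((jacobiSym (n : ℤ) p : ℤ) : ℝ) / (n : ℝ)) ≤ 0).card : ℝ) ≤
      (C * (x / L) * Real.exp (-w) + 8 * Real.exp (0.5 * L)) + Real.exp (0.98 * L) := by
    refine le_trans ?_ (add_le_add hRI' hRII)
    exact_mod_cast hc
  have hL0 : 0 < L := by linarith
  have hx0' : 0 < x := by linarith
  have hxL : Real.exp L = x := Real.exp_log hx0'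
  have hpos : 0 < x / (20 * L) := by positivity
  have h98 : 8 * Real.exp (0.5 * L) ≤ 8 * Real.exp (0.98 * L) :=
    mul_le_mul_of_nonneg_left (Real.exp_le_exp.mpr (by linarith)) (by norm_num)
  have hwle : Real.exp (-√L) ≤ Real.exp (-w) := Real.exp_le_exp.mpr (by linarith)
  have hlast : 9 * Real.exp (0.98 * L) ≤ Real.exp (-w) * (x / (20 * L)) := by
    have e1 : Real.exp (0.98 * L) = x * Real.exp (-(0.02*L)) := by
      rw [← hxL, ← Real.exp_add]; congr 1; ring
    have e2 : 180 * L * Real.exp (-(0.02*L)) ≤ Real.exp (-w) := hend.trans hwle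
    rw [e1, ← mul_div_assoc, le_div_iff₀ (by positivity)]
    calc 9 * (x * Real.exp (-(0.02*L))) * (20 * L) = 180 * L * Real.exp (-(0.02*L)) * x := by ring
      _ ≤ _ := mul_le_mul_of_nonneg_right e2 hx0'.le
  have hcpos : (0:ℝ) < ((primesIn x).card : ℝ) := hpos.trans_le hcard
  rw [div_le_iff₀ hcpos]
  have hE : 0 < Real.exp (-w) := Real.exp_pos _
  refine hc'.trans ?_
  have hid : C * (x / L) * Real.exp (-w) = 20 * C * Real.exp (-w) * (x / (20 * L)) := by
    field_simp
  calc (C * (x / L) * Real.exp (-w) + 8 * Real.exp (0.5 * L)) + Real.exp (0.98 * L)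
      ≤ 20 * C * Real.exp (-w) * (x / (20 * L)) + Real.exp (-w) * (x / (20 * L)) := by
        rw [hid]; linarith
    _ = (20 * C + 1) * Real.exp (-w) * (x / (20 * L)) := by ring
    _ ≤ (20 * C + 1) * Real.exp (-w) * ((primesIn x).card : ℝ) :=
        mul_le_mul_of_nonneg_left hcard (by positivity)
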